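/- For any countable collection 𝔛 ⊆ 𝒫(ω) and any complete consistent theory T ⊇ PA, the following are equivalent: (i) 𝔛 is a Scott set (equivalently (ℕ,𝔛) ⊨ WKL₀) and rep(T) ⊆ 𝔛; (ii) there is a countable nonstandard model M ⊨ T with SSy(M) = 𝔛. -/

import Mathlib

/-! Scott's theorem on the countable standard systems of models of a completion `T` of `PA`.

*From a model to a Scott set.* A model `M` of `PA` is a discretely ordered semiring with induction
(`exists_PAM`). Relations definable in `M` with parameters (`Df True`) obey induction, the least
element principle and overspill, and a definable set is coded, by means of Gödel's `β`-function,
below any bound (`exists_code`). Below a nonstandard bound this says that the trace on `ℕ` of every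
definable set belongs to `SSy(M)` (`mem_ssy_of_def`). This gives the Boolean operations at once, and
`rep(T)` by definability of the satisfaction relation of one formula (`repSet_subset_ssy`). For
Turing reducibility (`ssy_turing`), the graph of a function recursive in a coded set is exhausted by
stages that are traces of one definable relation (`approx_of_recursiveIn`); `n ∈ B` is then defined
by comparing, with the least element principle of `M` at hand, the first stages at which the values
`1` and `0` appear. For trees (`ssy_tree`), there are strings on the tree of every standard length,
so by overspill a code of a string of nonstandard length whose standard initial segments all lie on
the tree.

*From a Scott set to a model.* Let `𝔛` be a countable Scott set containing `rep(T)` and let `M` be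
any model of `T`. The elements of the new model are given by sequences `n ↦ v n s` in `M`, for
`s : ℕ`. In stages (`exists_stages`) one fixes sets `Z s ∈ 𝔛` such that, for each `s`, it is
finitely satisfiable in `M` that the entries `v 0, …, v (s - 1)` fulfil the Henkin tasks given so far
and have the traces `Z 0, …, Z (s - 1)` on `ℕ`. At even stages `Z s` is a prescribed member of `𝔛`,
and finitely much of it is coded by a standard number. At odd stages the entry has to be a Henkin
witness, and `Z s` is found as a branch of the tree of finite approximations to the traces which are
satisfiable in `M`; by completeness of `T` the set of satisfiable approximations is represented in
`T` (`mem_repSet`), so this tree belongs to `𝔛`. Choosing for each `n` a valuation `v n` which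
realizes the first `n` requirements, the classes of the sequences `n ↦ v n s` modulo a nonprincipal
ultrafilter satisfy Łoś's theorem by the Henkin tasks (`exists_limit`), and thus form a countable
model of `T` whose standard system is `{Z s | s} = 𝔛`.
-/

namespace Paper

/-! ### Syntax of (second-order) arithmetic.

Terms of the language `L_A = {0, 1, +, ·, <}`, with number variables indexed by `ℕ`.
Formulas also allow atomic formulas `t ∈ X_k` (membership in a set variable) and
set quantifiers `allS`; first-order formulas are those avoiding both. -/

inductive PTerm where
  | var : ℕ → PTerm
  | zero : PTerm
  | one : PTerm
  | add : PTerm → PTerm → PTerm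
  | mul : PTerm → PTerm → PTerm

inductive Fml where
  | eq : PTerm → PTerm → Fml
  | lt : PTerm → PTerm → Fml
  | mem : PTerm → ℕ → Fml
  | not : Fml → Fml
  | imp : Fml → Fml → Fml
  | all : ℕ → Fml → Fml
  | allS : ℕ → Fml → Fml

def Fml.and (φ ψ : Fml) : Fml := .not (.imp φ (.not ψ))
def Fml.or (φ ψ : Fml) : Fml := .imp (.not φ) ψ
def Fml.iff (φ ψ : Fml) : Fml := (Fml.imp φ ψ).and (Fml.imp ψ φ)
def Fml.ex (x : ℕ) (φ : Fml) : Fml := .not (.all x (.not φ))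
def Fml.exS (k : ℕ) (φ : Fml) : Fml := .not (.allS k (.not φ))

/-- A structure for the language `{0, 1, +, ·, <}` on a carrier `M`
(bundled, so that several structures can live on the same carrier). -/
structure AStr (M : Type) where
  zero : M
  one : M
  add : M → M → M
  mul : M → M → M
  lt : M → M → Prop

/-- The standard model of arithmetic. -/
def natStr : AStr ℕ := ⟨0, 1, (· + ·), (· * ·), (· < ·)⟩

namespace PTerm

def vars : PTerm → Finset ℕ
  | var n => {n}
  | zero => ∅
  | one => ∅
  | add t u => t.vars ∪ u.vars
  | mul t u => t.vars ∪ u.vars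

/-- Substitution of a term `r` for the variable `x` (used only with `r` closed or
with `vars r ⊆ {x}`, in which case it is capture-free). -/
def subst (x : ℕ) (r : PTerm) : PTerm → PTerm
  | var n => if n = x then r else var n
  | zero => zero
  | one => one
  | add t u => add (subst x r t) (subst x r u)
  | mul t u => mul (subst x r t) (subst x r u)

def val {M : Type} (S : AStr M) (v : ℕ → M) : PTerm → M
  | var n => v n
  | zero => S.zero
  | one => S.one
  | add t u => S.add (t.val S v) (u.val S v)
  | mul t u => S.mul (t.val S v) (u.val S v)

end PTerm

namespace Fml

/-- Free number variables. -/
def freeN : Fml → Finset ℕ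
  | eq t u => t.vars ∪ u.vars
  | lt t u => t.vars ∪ u.vars
  | mem t _ => t.vars
  | not φ => φ.freeN
  | imp φ ψ => φ.freeN ∪ ψ.freeN
  | all x φ => φ.freeN.erase x
  | allS _ φ => φ.freeN

/-- Substitution of a term `r` for the (free) variable `x`. -/
def substN (x : ℕ) (r : PTerm) : Fml → Fml
  | eq t u => eq (PTerm.subst x r t) (PTerm.subst x r u)
  | lt t u => lt (PTerm.subst x r t) (PTerm.subst x r u)
  | mem t k => mem (PTerm.subst x r t) k
  | not φ => not (substN x r φ)
  | imp φ ψ => imp (substN x r φ) (substN x r ψ)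
  | all y φ => if y = x then all y φ else all y (substN x r φ)
  | allS k φ => allS k (substN x r φ)

/-- First-order formulas: no set variables, no set quantifiers. -/
def IsFO : Fml → Prop
  | eq _ _ => True
  | lt _ _ => True
  | mem _ _ => False
  | not φ => φ.IsFO
  | imp φ ψ => φ.IsFO ∧ ψ.IsFO
  | all _ φ => φ.IsFO
  | allS _ _ => False

/-- Arithmetical formulas: set variables allowed as parameters, but no set quantifiers. -/
def IsArith : Fml → Prop
  | eq _ _ => True
  | lt _ _ => True
  | mem _ _ => True
  | not φ => φ.IsArith
  | imp φ ψ => φ.IsArith ∧ ψ.IsArith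
  | all _ φ => φ.IsArith
  | allS _ _ => False

end Fml

/-! ### Satisfaction -/

/-- Satisfaction for a second-order structure `(M, 𝔛)`: number quantifiers range over `M`,
set quantifiers range over `𝔛`. -/
def Sat {M : Type} (S : AStr M) (𝔛 : Set (Set M)) : (ℕ → M) → (ℕ → Set M) → Fml → Prop
  | v, _, .eq t u => t.val S v = u.val S v
  | v, _, .lt t u => S.lt (t.val S v) (u.val S v)
  | v, w, .mem t k => t.val S v ∈ w k
  | v, w, .not φ => ¬ Sat S 𝔛 v w φ
  | v, w, .imp φ ψ => Sat S 𝔛 v w φ → Sat S 𝔛 v w ψ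
  | v, w, .all x φ => ∀ a : M, Sat S 𝔛 (Function.update v x a) w φ
  | v, w, .allS k φ => ∀ X ∈ 𝔛, Sat S 𝔛 v (Function.update w k X) φ

/-- First-order satisfaction. -/
def SatFO {M : Type} (S : AStr M) (v : ℕ → M) (φ : Fml) : Prop :=
  Sat S Set.univ v (fun _ => ∅) φ

/-- `M ⊨ T` for a first-order theory `T`. -/
def ModelsT {M : Type} (S : AStr M) (T : Set Fml) : Prop :=
  ∀ φ ∈ T, ∀ v, SatFO S v φ

/-- Semantic consequence (equivalently, by the completeness theorem, provability). -/
def Proves (T : Set Fml) (φ : Fml) : Prop :=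
  ∀ (M : Type) (S : AStr M), ModelsT S T → ∀ v, SatFO S v φ

/-- Consistency (equivalently, by the completeness theorem, having a model). -/
def ConsistentT (T : Set Fml) : Prop :=
  ∃ (M : Type) (S : AStr M), ModelsT S T

def IsFOSentence (φ : Fml) : Prop := φ.IsFO ∧ φ.freeN = ∅

/-- Completeness of a theory. -/
def CompleteT (T : Set Fml) : Prop :=
  ∀ φ, IsFOSentence φ → (Proves T φ ∨ Proves T φ.not)

/-! ### Peano arithmetic -/

def numeral : ℕ → PTerm
  | 0 => .zero
  | n + 1 => .add (numeral n) .one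

def univClosure (φ : Fml) : Fml := (φ.freeN.sort (· ≤ ·)).foldr Fml.all φ

/-- The induction axiom for `φ` in the variable `x` (before taking universal closure). -/
def indFml (φ : Fml) (x : ℕ) : Fml :=
  .imp ((φ.substN x .zero).and (.all x (.imp φ (φ.substN x (.add (.var x) .one)))))
    (.all x φ)

/-- The axioms of first-order Peano arithmetic `PA`. -/
def PAax : Set Fml :=
  {Fml.all 0 (.not (.eq (.add (.var 0) .one) .zero)),
   Fml.all 0 (.all 1 (.imp (.eq (.add (.var 0) .one) (.add (.var 1) .one))
     (.eq (.var 0) (.var 1)))),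
   Fml.all 0 (.eq (.add (.var 0) .zero) (.var 0)),
   Fml.all 0 (.all 1 (.eq (.add (.var 0) (.add (.var 1) .one))
     (.add (.add (.var 0) (.var 1)) .one))),
   Fml.all 0 (.eq (.mul (.var 0) .zero) .zero),
   Fml.all 0 (.all 1 (.eq (.mul (.var 0) (.add (.var 1) .one))
     (.add (.mul (.var 0) (.var 1)) (.var 0)))),
   Fml.all 0 (.all 1 (Fml.iff (.lt (.var 0) (.var 1))
     (Fml.ex 2 (.eq (.add (.var 0) (.add (.var 2) .one)) (.var 1)))))} ∪
  {ψ | ∃ φ x, Fml.IsFO φ ∧ ψ = univClosure (indFml φ x)}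

/-! ### Gödel coding -/

/-- The Cantor pairing function (the canonical pairing `⟨·,·⟩`). -/
def cpair (a b : ℕ) : ℕ := (a + b) * (a + b + 1) / 2 + a

def PTerm.code : PTerm → ℕ
  | .var n => cpair 0 n
  | .zero => cpair 1 0
  | .one => cpair 2 0
  | .add t u => cpair 3 (cpair t.code u.code)
  | .mul t u => cpair 4 (cpair t.code u.code)

def Fml.code : Fml → ℕ
  | .eq t u => cpair 5 (cpair t.code u.code)
  | .lt t u => cpair 6 (cpair t.code u.code)
  | .not φ => cpair 7 φ.code
  | .imp φ ψ => cpair 8 (cpair φ.code ψ.code)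
  | .all x φ => cpair 9 (cpair x φ.code)
  | .mem t k => cpair 10 (cpair t.code k)
  | .allS k φ => cpair 11 (cpair k φ.code)

/-- A theory identified with its set of Gödel codes. -/
def theoryCode (T : Set Fml) : Set ℕ := Fml.code '' T

/-! ### The arithmetical hierarchy (syntactic classes) -/

inductive IsDelta0 : Fml → Prop
  | eq (t u) : IsDelta0 (.eq t u)
  | lt (t u) : IsDelta0 (.lt t u)
  | mem (t k) : IsDelta0 (.mem t k)
  | not {φ} : IsDelta0 φ → IsDelta0 φ.not
  | imp {φ ψ} : IsDelta0 φ → IsDelta0 ψ → IsDelta0 (φ.imp ψ)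
  | ball {φ} (x t) : x ∉ PTerm.vars t → IsDelta0 φ →
      IsDelta0 (.all x (.imp (.lt (.var x) t) φ))

def IsSigma01 (φ : Fml) : Prop := ∃ x ψ, IsDelta0 ψ ∧ φ = Fml.ex x ψ

def IsPi01 (φ : Fml) : Prop := ∃ x ψ, IsDelta0 ψ ∧ φ = Fml.all x ψ

/-! ### Subsystems of second-order arithmetic, semantically -/

/-- The basic axioms (`PA⁻`, a discretely ordered commutative semiring). -/
def PAminusSem {M : Type} (S : AStr M) : Prop :=
  (∀ a b c : M, S.add a (S.add b c) = S.add (S.add a b) c) ∧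
  (∀ a b : M, S.add a b = S.add b a) ∧
  (∀ a b c : M, S.mul a (S.mul b c) = S.mul (S.mul a b) c) ∧
  (∀ a b : M, S.mul a b = S.mul b a) ∧
  (∀ a b c : M, S.mul a (S.add b c) = S.add (S.mul a b) (S.mul a c)) ∧
  (∀ a : M, S.add a S.zero = a) ∧
  (∀ a : M, S.mul a S.zero = S.zero) ∧
  (∀ a : M, S.mul a S.one = a) ∧
  (∀ a b c : M, S.lt a b → S.lt b c → S.lt a c) ∧
  (∀ a : M, ¬ S.lt a a) ∧
  (∀ a b : M, S.lt a b ∨ a = b ∨ S.lt b a) ∧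
  (∀ a b c : M, S.lt a b → S.lt (S.add a c) (S.add b c)) ∧
  (∀ a b c : M, S.lt S.zero c → S.lt a b → S.lt (S.mul a c) (S.mul b c)) ∧
  (∀ a b : M, S.lt a b → ∃ c : M, S.add a c = b) ∧
  S.lt S.zero S.one ∧
  (∀ a : M, S.lt S.zero a → a = S.one ∨ S.lt S.one a) ∧
  (∀ a : M, a = S.zero ∨ S.lt S.zero a)

/-- `(M,𝔛)` satisfies the induction axiom for `φ` in the variable `x`
(with arbitrary number and set parameters). -/
def SatInd {M : Type} (S : AStr M) (𝔛 : Set (Set M)) (φ : Fml) (x : ℕ) : Prop :=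
  ∀ (v : ℕ → M) (w : ℕ → Set M), (∀ k, w k ∈ 𝔛) →
    (Sat S 𝔛 (Function.update v x S.zero) w φ ∧
      ∀ a, Sat S 𝔛 (Function.update v x a) w φ →
        Sat S 𝔛 (Function.update v x (S.add a S.one)) w φ) →
    ∀ a, Sat S 𝔛 (Function.update v x a) w φ

/-- `(M,𝔛) ⊨ RCA₀`: basic axioms, `Σ⁰₁` induction and `Δ⁰₁` comprehension. -/
def SatRCA0 {M : Type} (S : AStr M) (𝔛 : Set (Set M)) : Prop :=
  PAminusSem S ∧
  (∀ φ x, IsSigma01 φ → SatInd S 𝔛 φ x) ∧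
  (∀ φ ψ x, IsSigma01 φ → IsPi01 ψ →
    ∀ (v : ℕ → M) (w : ℕ → Set M), (∀ k, w k ∈ 𝔛) →
      (∀ a, Sat S 𝔛 (Function.update v x a) w φ ↔ Sat S 𝔛 (Function.update v x a) w ψ) →
      {a : M | Sat S 𝔛 (Function.update v x a) w φ} ∈ 𝔛)

/-- `(M,𝔛) ⊨ ACA₀`: basic axioms, the induction axiom and arithmetical comprehension. -/
def SatACA0 {M : Type} (S : AStr M) (𝔛 : Set (Set M)) : Prop :=
  PAminusSem S ∧
  (∀ X ∈ 𝔛, S.zero ∈ X → (∀ a, a ∈ X → S.add a S.one ∈ X) → ∀ a, a ∈ X) ∧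
  (∀ φ x, Fml.IsArith φ → ∀ (v : ℕ → M) (w : ℕ → Set M), (∀ k, w k ∈ 𝔛) →
    {a : M | Sat S 𝔛 (Function.update v x a) w φ} ∈ 𝔛)

/-! ### Arithmetization inside a model

All notions below unfold the standard (`Δ₀`/`Σ₁`) arithmetized definitions at the
meta-level, using the operations of a structure `S : AStr M`.  On models of `IΣ₁`
they agree with satisfaction of the corresponding arithmetic formulas. -/

namespace AStr

variable {M : Type} (S : AStr M)

/-- Interpretation of numerals. -/
def num : ℕ → M
  | 0 => S.zero
  | n + 1 => S.add (num n) S.one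

def le (a b : M) : Prop := S.lt a b ∨ a = b

def two : M := S.add S.one S.one

/-- `p = ⟨a,b⟩` for the Cantor pairing function: `2p = (a+b)(a+b+1) + 2a`. -/
def PairRel (p a b : M) : Prop :=
  S.mul S.two p = S.add (S.mul (S.add a b) (S.add (S.add a b) S.one)) (S.mul S.two a)

/-- `r = a mod m`. -/
def ModRel (a m r : M) : Prop := S.lt r m ∧ ∃ q, a = S.add (S.mul q m) r

/-- Gödel's β-function: `x = β(c, i)` where `c = ⟨a,b⟩` and `x = a mod (1 + (i+1)b)`. -/
def BetaRel (c i x : M) : Prop :=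
  ∃ a b, S.PairRel c a b ∧ S.ModRel a (S.add S.one (S.mul (S.add i S.one) b)) x

/-- `s` codes a sequence of length `l` (as `s = ⟨c, l⟩`). -/
def SeqLen (s l : M) : Prop := ∃ c, S.PairRel s c l

/-- The `i`-th entry of the sequence coded by `s` is `x`. -/
def SeqAt (s i x : M) : Prop := ∃ c l, S.PairRel s c l ∧ S.lt i l ∧ S.BetaRel c i x

/-- The fixed `Δ₀` coding formula `x ∈ y` for (bounded) sets:
`y = ⟨a,b⟩` and `a mod (1 + (x+1)b) = 1` with modulus `> 1`, and `x < y`. -/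
def MemRel (x y : M) : Prop :=
  S.lt x y ∧ ∃ a b, S.PairRel y a b ∧
    S.lt S.one (S.add S.one (S.mul (S.add x S.one) b)) ∧
    S.ModRel a (S.add S.one (S.mul (S.add x S.one) b)) S.one

/-- Tagged pairs, used for codes of syntax: `x = ⟨tag, payload⟩`. -/
def Node (x tag payload : M) : Prop := S.PairRel x tag payload

/-- `x` is the code of the variable `v`. -/
def VarC (v x : M) : Prop := S.Node x (S.num 0) v

def AddC (t u y : M) : Prop := ∃ p, S.PairRel p t u ∧ S.Node y (S.num 3) p
def MulC (t u y : M) : Prop := ∃ p, S.PairRel p t u ∧ S.Node y (S.num 4) p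
def EqC (t u y : M) : Prop := ∃ p, S.PairRel p t u ∧ S.Node y (S.num 5) p
def LtC (t u y : M) : Prop := ∃ p, S.PairRel p t u ∧ S.Node y (S.num 6) p
def NotC (x y : M) : Prop := S.Node y (S.num 7) x
def ImpC (x y z : M) : Prop := ∃ p, S.PairRel p x y ∧ S.Node z (S.num 8) p
def AllC (v x y : M) : Prop := ∃ p, S.PairRel p v x ∧ S.Node y (S.num 9) p

/-- `s` codes a construction sequence for terms. -/
def IsTermConSeq (s : M) : Prop :=
  ∀ i x, S.SeqAt s i x →
    (∃ v, S.VarC v x) ∨ S.Node x (S.num 1) (S.num 0) ∨ S.Node x (S.num 2) (S.num 0) ∨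
    (∃ j k y z, S.lt j i ∧ S.lt k i ∧ S.SeqAt s j y ∧ S.SeqAt s k z ∧
      (S.AddC y z x ∨ S.MulC y z x))

/-- `x` is a term code (in the sense of `M`, possibly nonstandard). -/
def TermCodeM (x : M) : Prop := ∃ s i, S.IsTermConSeq s ∧ S.SeqAt s i x

/-- `s` codes a construction sequence for (first-order) formulas. -/
def IsFmlConSeq (s : M) : Prop :=
  ∀ i x, S.SeqAt s i x →
    (∃ t u, S.TermCodeM t ∧ S.TermCodeM u ∧ (S.EqC t u x ∨ S.LtC t u x)) ∨
    (∃ j y, S.lt j i ∧ S.SeqAt s j y ∧ S.NotC y x) ∨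
    (∃ j k y z, S.lt j i ∧ S.lt k i ∧ S.SeqAt s j y ∧ S.SeqAt s k z ∧ S.ImpC y z x) ∨
    (∃ j v y, S.lt j i ∧ S.SeqAt s j y ∧ S.AllC v y x)

/-- `x` is a formula code (in the sense of `M`, possibly nonstandard). -/
def FmlCodeM (x : M) : Prop := ∃ s i, S.IsFmlConSeq s ∧ S.SeqAt s i x

/-- Construction sequences of pairs (term code, occurrence flag for the variable `v`). -/
def IsOccConSeq (v s : M) : Prop :=
  ∀ i p, S.SeqAt s i p → ∃ x f, S.PairRel p x f ∧
    ((S.VarC v x ∧ f = S.num 1) ∨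
     (∃ u, S.VarC u x ∧ u ≠ v ∧ f = S.num 0) ∨
     ((S.Node x (S.num 1) (S.num 0) ∨ S.Node x (S.num 2) (S.num 0)) ∧ f = S.num 0) ∨
     (∃ j k y z g h pj pk, S.lt j i ∧ S.lt k i ∧ S.SeqAt s j pj ∧ S.SeqAt s k pk ∧
       S.PairRel pj y g ∧ S.PairRel pk z h ∧ (S.AddC y z x ∨ S.MulC y z x) ∧
       ((f = S.num 1 ∧ (g = S.num 1 ∨ h = S.num 1)) ∨
        (f = S.num 0 ∧ g = S.num 0 ∧ h = S.num 0))))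

/-- `f = 1` iff the variable `v` occurs in the term coded by `t` (`f ∈ {0,1}`). -/
def OccT (v t f : M) : Prop :=
  ∃ s i p, S.IsOccConSeq v s ∧ S.SeqAt s i p ∧ S.PairRel p t f

/-- Construction sequences of pairs (formula code, freeness flag for the variable `v`). -/
def IsFreeConSeq (v s : M) : Prop :=
  ∀ i p, S.SeqAt s i p → ∃ x f, S.PairRel p x f ∧
    ((∃ t u, (S.EqC t u x ∨ S.LtC t u x) ∧
       ((f = S.num 1 ∧ (S.OccT v t (S.num 1) ∨ S.OccT v u (S.num 1))) ∨
        (f = S.num 0 ∧ S.OccT v t (S.num 0) ∧ S.OccT v u (S.num 0)))) ∨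
     (∃ j y g pj, S.lt j i ∧ S.SeqAt s j pj ∧ S.PairRel pj y g ∧ S.NotC y x ∧ f = g) ∨
     (∃ j k y z g h pj pk, S.lt j i ∧ S.lt k i ∧ S.SeqAt s j pj ∧ S.SeqAt s k pk ∧
       S.PairRel pj y g ∧ S.PairRel pk z h ∧ S.ImpC y z x ∧
       ((f = S.num 1 ∧ (g = S.num 1 ∨ h = S.num 1)) ∨
        (f = S.num 0 ∧ g = S.num 0 ∧ h = S.num 0))) ∨
     (∃ j w y g pj, S.lt j i ∧ S.SeqAt s j pj ∧ S.PairRel pj y g ∧ S.AllC w y x ∧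
       ((w = v ∧ f = S.num 0) ∨ (w ≠ v ∧ f = g))))

/-- `f = 1` iff the variable `v` is free in the formula coded by `φ`. -/
def FreeF (v φ f : M) : Prop :=
  ∃ s i p, S.IsFreeConSeq v s ∧ S.SeqAt s i p ∧ S.PairRel p φ f

/-- Construction sequences of pairs (term code, result of substituting `t` for `v`). -/
def IsSubTConSeq (v t s : M) : Prop :=
  ∀ i p, S.SeqAt s i p → ∃ x x', S.PairRel p x x' ∧
    ((S.VarC v x ∧ x' = t) ∨
     (∃ u, S.VarC u x ∧ u ≠ v ∧ x' = x) ∨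
     ((S.Node x (S.num 1) (S.num 0) ∨ S.Node x (S.num 2) (S.num 0)) ∧ x' = x) ∨
     (∃ j k y z y' z' pj pk, S.lt j i ∧ S.lt k i ∧ S.SeqAt s j pj ∧ S.SeqAt s k pk ∧
       S.PairRel pj y y' ∧ S.PairRel pk z z' ∧
       ((S.AddC y z x ∧ S.AddC y' z' x') ∨ (S.MulC y z x ∧ S.MulC y' z' x'))))

/-- Substitution of the term (code) `t` for the variable `v` in terms: `x' = x[t/v]`. -/
def SubT (v t x x' : M) : Prop :=
  ∃ s i p, S.IsSubTConSeq v t s ∧ S.SeqAt s i p ∧ S.PairRel p x x'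

/-- Construction sequences for capture-free substitution in formulas. -/
def IsSubFConSeq (v t s : M) : Prop :=
  ∀ i p, S.SeqAt s i p → ∃ x x', S.PairRel p x x' ∧
    ((∃ a b a' b', S.SubT v t a a' ∧ S.SubT v t b b' ∧
       ((S.EqC a b x ∧ S.EqC a' b' x') ∨ (S.LtC a b x ∧ S.LtC a' b' x'))) ∨
     (∃ j y y' pj, S.lt j i ∧ S.SeqAt s j pj ∧ S.PairRel pj y y' ∧
       S.NotC y x ∧ S.NotC y' x') ∨
     (∃ j k y z y' z' pj pk, S.lt j i ∧ S.lt k i ∧ S.SeqAt s j pj ∧ S.SeqAt s k pk ∧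
       S.PairRel pj y y' ∧ S.PairRel pk z z' ∧ S.ImpC y z x ∧ S.ImpC y' z' x') ∨
     (∃ w y, S.AllC w y x ∧
       ((w = v ∧ x' = x) ∨
        (w ≠ v ∧ (S.OccT w t (S.num 0) ∨ S.FreeF v y (S.num 0)) ∧
          ∃ j y' pj, S.lt j i ∧ S.SeqAt s j pj ∧ S.PairRel pj y y' ∧ S.AllC w y' x'))))

/-- Capture-free substitution in formulas: `x' = x[t/v]`, with `t` substitutable for `v`. -/
def SubF (v t x x' : M) : Prop :=
  ∃ s i p, S.IsSubFConSeq v t s ∧ S.SeqAt s i p ∧ S.PairRel p x x'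

/-- `x` is (the code of) a generalization `∀v₁ ⋯ ∀vₖ y` of `y`. -/
def GenOf (y x : M) : Prop :=
  ∃ s i, S.SeqAt s (S.num 0) y ∧ S.SeqAt s i x ∧
    ∀ j z z', S.SeqAt s j z → S.SeqAt s (S.add j S.one) z' → S.le (S.add j S.one) i →
      ∃ v, S.AllC v z z'

/-- Codes of instances of the logical axiom schemes (a Hilbert-style calculus with
modus ponens as the only rule; axioms are taken together with their generalizations). -/
def LogAxCore (x : M) : Prop :=
  -- A1 : a → (b → a)
  (∃ a b y, S.FmlCodeM a ∧ S.FmlCodeM b ∧ S.ImpC b a y ∧ S.ImpC a y x) ∨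
  -- A2 : (a → (b → c)) → ((a → b) → (a → c))
  (∃ a b c bc abc ab ac r, S.FmlCodeM a ∧ S.FmlCodeM b ∧ S.FmlCodeM c ∧
    S.ImpC b c bc ∧ S.ImpC a bc abc ∧ S.ImpC a b ab ∧ S.ImpC a c ac ∧
    S.ImpC ab ac r ∧ S.ImpC abc r x) ∨
  -- A3 : (¬b → ¬a) → (a → b)
  (∃ a b na nb l r, S.FmlCodeM a ∧ S.FmlCodeM b ∧ S.NotC a na ∧ S.NotC b nb ∧
    S.ImpC nb na l ∧ S.ImpC a b r ∧ S.ImpC l r x) ∨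
  -- A4 : ∀v a → a[t/v]
  (∃ v t a a' al, S.TermCodeM t ∧ S.FmlCodeM a ∧ S.AllC v a al ∧ S.SubF v t a a' ∧
    S.ImpC al a' x) ∨
  -- A5 : ∀v (a → b) → (∀v a → ∀v b)
  (∃ v a b ab alab ala alb r, S.FmlCodeM a ∧ S.FmlCodeM b ∧ S.ImpC a b ab ∧
    S.AllC v ab alab ∧ S.AllC v a ala ∧ S.AllC v b alb ∧ S.ImpC ala alb r ∧
    S.ImpC alab r x) ∨
  -- A6 : a → ∀v a, for v not free in a
  (∃ v a ala, S.FmlCodeM a ∧ S.FreeF v a (S.num 0) ∧ S.AllC v a ala ∧ S.ImpC a ala x) ∨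
  -- E1 : t = t
  (∃ t, S.TermCodeM t ∧ S.EqC t t x) ∨
  -- E2 : u = w → w = u (variables)
  (∃ u w vu vw e1 e2, S.VarC u vu ∧ S.VarC w vw ∧ S.EqC vu vw e1 ∧ S.EqC vw vu e2 ∧
    S.ImpC e1 e2 x) ∨
  -- E3 : u = w → (w = z → u = z) (variables)
  (∃ u w z vu vw vz e1 e2 e3 r, S.VarC u vu ∧ S.VarC w vw ∧ S.VarC z vz ∧
    S.EqC vu vw e1 ∧ S.EqC vw vz e2 ∧ S.EqC vu vz e3 ∧ S.ImpC e2 e3 r ∧ S.ImpC e1 r x) ∨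
  -- E4 : congruence of +, ·, < with respect to = (variables)
  (∃ u1 w1 u2 w2 a1 b1 a2 b2 e1 e2 s1 s2 es r,
    S.VarC u1 a1 ∧ S.VarC w1 b1 ∧ S.VarC u2 a2 ∧ S.VarC w2 b2 ∧
    S.EqC a1 b1 e1 ∧ S.EqC a2 b2 e2 ∧
    ((S.AddC a1 a2 s1 ∧ S.AddC b1 b2 s2 ∧ S.EqC s1 s2 es) ∨
     (S.MulC a1 a2 s1 ∧ S.MulC b1 b2 s2 ∧ S.EqC s1 s2 es) ∨
     (S.LtC a1 a2 s1 ∧ S.LtC b1 b2 s2 ∧ S.ImpC s1 s2 es)) ∧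
    S.ImpC e2 es r ∧ S.ImpC e1 r x) ∨
  -- E5 : congruence of = (variables)
  (∃ u1 w1 u2 w2 a1 b1 a2 b2 e1 e2 d1 d2 inner r,
    S.VarC u1 a1 ∧ S.VarC w1 b1 ∧ S.VarC u2 a2 ∧ S.VarC w2 b2 ∧
    S.EqC a1 b1 e1 ∧ S.EqC a2 b2 e2 ∧ S.EqC a1 a2 d1 ∧ S.EqC b1 b2 d2 ∧
    S.ImpC d1 d2 inner ∧ S.ImpC e2 inner r ∧ S.ImpC e1 r x)

/-- Logical axioms: generalizations of instances of the axiom schemes. -/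
def LogAx (x : M) : Prop := ∃ y, S.LogAxCore y ∧ S.GenOf y x

/-- `s` codes a proof of `φ` from the set `Γ ⊆ M` of (codes of) sentences:
every entry is a logical axiom, a member of `Γ`, or follows by modus ponens. -/
def ProofFrom (Γ : Set M) (s φ : M) : Prop :=
  (∃ i, S.SeqAt s i φ) ∧
  ∀ i x, S.SeqAt s i x →
    S.LogAx x ∨ x ∈ Γ ∨
    (∃ j k y z, S.lt j i ∧ S.lt k i ∧ S.SeqAt s j y ∧ S.SeqAt s k z ∧ S.ImpC y x z)

/-- Provability (in the sense of `M`) from the axiom set `Γ ⊆ M`. -/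
def ProvFrom (Γ : Set M) (φ : M) : Prop := ∃ s, S.ProofFrom Γ s φ

/-- `M ⊨ Con_Γ` : there is no (possibly nonstandard) proof of a contradiction from `Γ`. -/
def ConOf (Γ : Set M) : Prop :=
  ¬ ∃ φ nφ, S.NotC φ nφ ∧ S.ProvFrom Γ φ ∧ S.ProvFrom Γ nφ

/-- `M ⊨ Con_T` for a (standard) theory `T`: `M` thinks every finite subtheory
of `T` is consistent. -/
def SatConTheory (T : Set Fml) : Prop :=
  ∀ F : Finset Fml, ↑F ⊆ T → S.ConOf {x : M | ∃ φ ∈ F, x = S.num (Fml.code φ)}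

/-! ### Coded sets, standard systems, filters on `P_𝔛` -/

/-- `A` is unbounded in `M`. -/
def Unb (A : Set M) : Prop := ∀ b, ∃ a ∈ A, S.lt b a

/-- `P_𝔛`: the collection of unbounded sets in `𝔛` (a partial order under `⊆`). -/
def PX (𝔛 : Set (Set M)) : Set (Set M) := {A | A ∈ 𝔛 ∧ S.Unb A}

/-- The `a`-th slice `(A)_a = {b | ⟨a,b⟩ ∈ A}`. -/
def SliceAt (A : Set M) (a : M) : Set M := {b | ∃ p, S.PairRel p a b ∧ p ∈ A}

/-- A function `M → M` is coded in `𝔛` if its graph (via the canonical pairing)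
belongs to `𝔛`. -/
def CodedFun (𝔛 : Set (Set M)) (f : M → M) : Prop :=
  ∃ G ∈ 𝔛, ∀ a b, f a = b ↔ b ∈ S.SliceAt G a

/-- A family `F` of sets is definable (over `(M,𝔛)`) if `{a | (A)_a ∈ F} ∈ 𝔛`
for every `A ∈ 𝔛`. -/
def DefinableFam (𝔛 F : Set (Set M)) : Prop :=
  ∀ A ∈ 𝔛, {a : M | S.SliceAt A a ∈ F} ∈ 𝔛

/-- `F` is a complete family: every function coded in `𝔛` with bounded range is
constant on some member of `F`. -/
def CompleteOn (𝔛 F : Set (Set M)) : Prop :=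
  ∀ f : M → M, S.CodedFun 𝔛 f → (∃ b, ∀ a, S.lt (f a) b) →
    ∃ A ∈ F, ∀ x ∈ A, ∀ y ∈ A, f x = f y

/-- The standard system `SSy(M)`: standard parts of the `M`-coded sets. -/
def SSy : Set (Set ℕ) := {A | ∃ c : M, ∀ n : ℕ, (n ∈ A ↔ S.MemRel (S.num n) c)}

/-- `M` is nonstandard. -/
def Nonstd : Prop := ∃ a : M, ∀ n : ℕ, a ≠ S.num n

/-- `M` is recursively saturated: every recursive type (in the variable `0`, with
finitely many parameters assigned to the variables `1, …, k`) that is finitely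
realized in `M` is realized in `M`. -/
def RecSat : Prop :=
  ∀ (p : Set Fml) (k : ℕ) (par : ℕ → M),
    (∀ φ ∈ p, Fml.IsFO φ ∧ φ.freeN ⊆ Finset.range (k + 1)) →
    ComputablePred (fun n => ∃ φ ∈ p, Fml.code φ = n) →
    (∀ F : Finset Fml, ↑F ⊆ p →
      ∃ a : M, ∀ φ ∈ F, SatFO S (fun i => if i = 0 then a else par i) φ) →
    ∃ a : M, ∀ φ ∈ p, SatFO S (fun i => if i = 0 then a else par i) φ

/-- `c` is the least code of the (bounded) set `A`. -/
def IsLeastCode (A : Set M) (c : M) : Prop :=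
  (∀ x, S.MemRel x c ↔ x ∈ A) ∧ ∀ c', (∀ x, S.MemRel x c' ↔ x ∈ A) → S.le c c'

/-- `A* = {⟨A ∩ I_{<a}⟩ | a ∈ M}`, the set of least codes of initial segments of `A`. -/
def star (A : Set M) : Set M :=
  {c | ∃ a, S.IsLeastCode (A ∩ {b | S.lt b a}) c}

end AStr

/-! ### Filters and partial orders of sets -/

/-- A filter on a partial order `P` of sets, ordered by inclusion: a proper, nonempty,
upward closed, downward directed subset of `P`. -/
def IsFilterOn {α : Type} (P F : Set (Set α)) : Prop :=
  F ⊆ P ∧ F.Nonempty ∧ F ≠ P ∧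
  (∀ A ∈ F, ∀ B ∈ P, A ⊆ B → B ∈ F) ∧
  (∀ A ∈ F, ∀ B ∈ F, ∃ C ∈ F, C ⊆ A ∧ C ⊆ B)

/-- An ultrafilter on a partial order of sets: a maximal filter. -/
def IsUltraOn {α : Type} (P U : Set (Set α)) : Prop :=
  IsFilterOn P U ∧ ∀ F, IsFilterOn P F → U ⊆ F → F = U

/-- A principal filter on a partial order of sets. -/
def IsPrincipalOn {α : Type} (P U : Set (Set α)) : Prop :=
  ∃ A ∈ P, U = {B | B ∈ P ∧ A ⊆ B}

/-- The countable chain condition for a partial order `P` of sets (ordered by `⊆`):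
every uncountable subset contains two distinct compatible elements. -/
def CCCOn {α : Type} (P : Set (Set α)) : Prop :=
  ∀ A : Set (Set α), A ⊆ P → ¬A.Countable →
    ∃ X ∈ A, ∃ Y ∈ A, X ≠ Y ∧ ∃ Z ∈ P, Z ⊆ X ∧ Z ⊆ Y

/-- `𝔛` is a Boolean algebra of sets. -/
def IsBoolAlg {α : Type} (𝔛 : Set (Set α)) : Prop :=
  Set.univ ∈ 𝔛 ∧ ∅ ∈ 𝔛 ∧
  (∀ A ∈ 𝔛, ∀ B ∈ 𝔛, A ∪ B ∈ 𝔛) ∧ (∀ A ∈ 𝔛, ∀ B ∈ 𝔛, A ∩ B ∈ 𝔛) ∧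
  (∀ A ∈ 𝔛, Aᶜ ∈ 𝔛)

/-- A filter on the Boolean algebra `𝔛`. -/
def IsBAFilter {α : Type} (𝔛 F : Set (Set α)) : Prop :=
  F ⊆ 𝔛 ∧ F.Nonempty ∧ ∅ ∉ F ∧
  (∀ A ∈ F, ∀ B ∈ 𝔛, A ⊆ B → B ∈ F) ∧
  (∀ A ∈ F, ∀ B ∈ F, A ∩ B ∈ F)

/-- An ultrafilter on the Boolean algebra `𝔛`: a maximal filter. -/
def IsBAUltra {α : Type} (𝔛 F : Set (Set α)) : Prop :=
  IsBAFilter 𝔛 F ∧ ∀ G, IsBAFilter 𝔛 G → F ⊆ G → G = F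

/-! ### Scott sets -/

/-- Oracle partial recursive functions: partial recursive in the oracle `O`. -/
inductive RecursiveIn (O : ℕ →. ℕ) : (ℕ →. ℕ) → Prop
  | oracle : RecursiveIn O O
  | zero : RecursiveIn O (pure 0)
  | succ : RecursiveIn O Nat.succ
  | left : RecursiveIn O ↑fun n : ℕ => n.unpair.1
  | right : RecursiveIn O ↑fun n : ℕ => n.unpair.2
  | pair {f g} : RecursiveIn O f → RecursiveIn O g →
      RecursiveIn O fun n => Nat.pair <$> f n <*> g n
  | comp {f g} : RecursiveIn O f → RecursiveIn O g →
      RecursiveIn O fun n => g n >>= f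
  | prec {f g} : RecursiveIn O f → RecursiveIn O g →
      RecursiveIn O (Nat.unpaired fun a n =>
        n.rec (f a) fun y IH => do let i ← IH; g (Nat.pair a (Nat.pair y i)))
  | rfind {f} : RecursiveIn O f →
      RecursiveIn O fun a => Nat.rfind fun n => (fun m => m = 0) <$> f (Nat.pair a n)

/-- The characteristic function of a set of natural numbers. -/
noncomputable def chi (A : Set ℕ) : ℕ →. ℕ :=
  fun n => Part.some (@ite _ (n ∈ A) (Classical.propDecidable _) 1 0)

/-- Turing reducibility: `B ≤_T A`. -/
def TuringLe (B A : Set ℕ) : Prop := RecursiveIn (chi A) (chi B)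

/-- A set of naturals coding a binary tree (codes of finite binary strings,
closed under initial segments). -/
def IsTreeCode (T : Set ℕ) : Prop :=
  (∀ n ∈ T, ∃ l : List Bool, Encodable.encode l = n) ∧
  (∀ l₁ l₂ : List Bool, l₁ <+: l₂ → Encodable.encode l₂ ∈ T → Encodable.encode l₁ ∈ T)

/-- `B` (as the characteristic function of a branch) is an infinite branch of the
binary tree coded by `T`. -/
def IsBranchThrough (B T : Set ℕ) : Prop :=
  ∀ n : ℕ, ∃ l : List Bool, l.length = n ∧
    (∀ i : Fin l.length, (l.get i = true ↔ (i : ℕ) ∈ B)) ∧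
    Encodable.encode l ∈ T

/-- A Scott set: a nonempty Boolean algebra of subsets of `ω` closed under relative
recursion and containing an infinite branch of every infinite binary tree coded in it. -/
def IsScottSet (𝔛 : Set (Set ℕ)) : Prop :=
  𝔛.Nonempty ∧
  (∀ A ∈ 𝔛, ∀ B ∈ 𝔛, A ∪ B ∈ 𝔛) ∧
  (∀ A ∈ 𝔛, Aᶜ ∈ 𝔛) ∧
  (∀ A ∈ 𝔛, ∀ B : Set ℕ, TuringLe B A → B ∈ 𝔛) ∧
  (∀ T ∈ 𝔛, IsTreeCode T → T.Infinite → ∃ B ∈ 𝔛, IsBranchThrough B T)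

/-- The sets represented in the theory `T`. -/
def repSet (T : Set Fml) : Set (Set ℕ) :=
  {A | ∃ φ : Fml, Fml.IsFO φ ∧ φ.freeN ⊆ {0} ∧
    ∀ n : ℕ, (n ∈ A → Proves T (φ.substN 0 (numeral n))) ∧
      (n ∉ A → Proves T (Fml.not (φ.substN 0 (numeral n))))}

/-- Martin's axiom. -/
def MartinsAxiom : Prop :=
  ∀ (P : Type) (_ : PartialOrder P),
    (∀ A : Set P, ¬A.Countable → ∃ x ∈ A, ∃ y ∈ A, x ≠ y ∧ ∃ z, z ≤ x ∧ z ≤ y) →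
    ∀ 𝒟 : Set (Set P), (∀ D ∈ 𝒟, ∀ x : P, ∃ y ∈ D, y ≤ x) →
      Cardinal.mk 𝒟 < Cardinal.continuum →
      ∃ F : Set P, F.Nonempty ∧ (∀ x ∈ F, ∀ y, x ≤ y → y ∈ F) ∧
        (∀ x ∈ F, ∀ y ∈ F, ∃ z ∈ F, z ≤ x ∧ z ≤ y) ∧
        ∀ D ∈ 𝒟, (F ∩ D).Nonempty

open Function

/-! ### Semantics of the syntactic operations -/

section Semantics

variable {M : Type} (S : AStr M)

theorem PTerm.val_congr {v v' : ℕ → M} (t : PTerm) (h : ∀ i ∈ t.vars, v i = v' i) :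
    t.val S v = t.val S v' := by
  induction t with
  | var n => exact h n (by simp [PTerm.vars])
  | zero => rfl
  | one => rfl
  | add t u iht ihu =>
    simp only [PTerm.vars, Finset.mem_union] at h
    simp only [PTerm.val, iht fun i hi => h i (.inl hi), ihu fun i hi => h i (.inr hi)]
  | mul t u iht ihu =>
    simp only [PTerm.vars, Finset.mem_union] at h
    simp only [PTerm.val, iht fun i hi => h i (.inl hi), ihu fun i hi => h i (.inr hi)]

theorem Sat_congr (𝔛 : Set (Set M)) (φ : Fml) : ∀ {v v' : ℕ → M} {w : ℕ → Set M},
    (∀ i ∈ φ.freeN, v i = v' i) → (Sat S 𝔛 v w φ ↔ Sat S 𝔛 v' w φ) := by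
  induction φ with
  | eq t u =>
    intro v v' w h
    simp only [Fml.freeN, Finset.mem_union] at h
    simp only [Sat, t.val_congr S fun i hi => h i (.inl hi),
      u.val_congr S fun i hi => h i (.inr hi)]
  | lt t u =>
    intro v v' w h
    simp only [Fml.freeN, Finset.mem_union] at h
    simp only [Sat, t.val_congr S fun i hi => h i (.inl hi),
      u.val_congr S fun i hi => h i (.inr hi)]
  | mem t k =>
    intro v v' w h
    simp only [Sat, t.val_congr S h]
  | not φ ih =>
    intro v v' w h
    simp only [Sat, ih h]
  | imp φ ψ ihφ ihψ =>
    intro v v' w h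
    simp only [Fml.freeN, Finset.mem_union] at h
    simp only [Sat, ihφ fun i hi => h i (.inl hi), ihψ fun i hi => h i (.inr hi)]
  | all x φ ih =>
    intro v v' w h
    refine forall_congr' fun a => ih fun i hi => ?_
    by_cases hx : i = x
    · simp [hx]
    · simpa [hx] using h i (by simp [Fml.freeN, hx, hi])
  | allS k φ ih =>
    intro v v' w h
    exact forall₂_congr fun X _ => ih h

theorem SatFO_congr {v v' : ℕ → M} (φ : Fml) (h : ∀ i ∈ φ.freeN, v i = v' i) :
    SatFO S v φ ↔ SatFO S v' φ := Sat_congr S _ φ h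

@[simp] theorem SatFO_eq (v : ℕ → M) (t u : PTerm) :
    SatFO S v (.eq t u) ↔ t.val S v = u.val S v := Iff.rfl
@[simp] theorem SatFO_lt (v : ℕ → M) (t u : PTerm) :
    SatFO S v (.lt t u) ↔ S.lt (t.val S v) (u.val S v) := Iff.rfl
@[simp] theorem SatFO_not (v : ℕ → M) (φ : Fml) :
    SatFO S v φ.not ↔ ¬ SatFO S v φ := Iff.rfl
@[simp] theorem SatFO_imp (v : ℕ → M) (φ ψ : Fml) :
    SatFO S v (φ.imp ψ) ↔ (SatFO S v φ → SatFO S v ψ) := Iff.rfl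
@[simp] theorem SatFO_all (v : ℕ → M) (x : ℕ) (φ : Fml) :
    SatFO S v (φ.all x) ↔ ∀ a, SatFO S (update v x a) φ := Iff.rfl
@[simp] theorem SatFO_and (v : ℕ → M) (φ ψ : Fml) :
    SatFO S v (φ.and ψ) ↔ SatFO S v φ ∧ SatFO S v ψ := by simp [Fml.and]
@[simp] theorem SatFO_or (v : ℕ → M) (φ ψ : Fml) :
    SatFO S v (φ.or ψ) ↔ SatFO S v φ ∨ SatFO S v ψ := by simp [Fml.or, or_iff_not_imp_left]
@[simp] theorem SatFO_iff (v : ℕ → M) (φ ψ : Fml) :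
    SatFO S v (φ.iff ψ) ↔ (SatFO S v φ ↔ SatFO S v ψ) := by simp [Fml.iff, iff_def]
@[simp] theorem SatFO_ex (v : ℕ → M) (x : ℕ) (φ : Fml) :
    SatFO S v (φ.ex x) ↔ ∃ a, SatFO S (update v x a) φ := by simp [Fml.ex]

theorem PTerm.val_subst (v : ℕ → M) (x : ℕ) (r t : PTerm) :
    (PTerm.subst x r t).val S v = t.val S (update v x (r.val S v)) := by
  induction t with
  | var n => by_cases h : n = x <;> simp [PTerm.subst, PTerm.val, h]
  | zero => rfl
  | one => rfl
  | add t u iht ihu => simp [PTerm.subst, PTerm.val, iht, ihu]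
  | mul t u iht ihu => simp [PTerm.subst, PTerm.val, iht, ihu]

theorem SatFO_substN (x : ℕ) (r : PTerm) (hr : r.vars ⊆ {x}) (φ : Fml) (hφ : φ.IsFO) :
    ∀ v : ℕ → M, SatFO S v (φ.substN x r) ↔ SatFO S (update v x (r.val S v)) φ := by
  induction φ with
  | eq t u => intro v; simp [Fml.substN, PTerm.val_subst]
  | lt t u => intro v; simp [Fml.substN, PTerm.val_subst]
  | mem t k => exact hφ.elim
  | not φ ih => intro v; simp [Fml.substN, ih hφ]
  | imp φ ψ ihφ ihψ => intro v; simp [Fml.substN, ihφ hφ.1, ihψ hφ.2]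
  | all y φ ih =>
    intro v
    by_cases h : y = x
    · subst h; simp [Fml.substN]
    · simp only [Fml.substN, h, if_false, SatFO_all]
      refine forall_congr' fun a => ?_
      rw [ih hφ, update_comm h]
      have : r.val S (update v y a) = r.val S v := by
        refine r.val_congr S fun i hi => ?_
        have := Finset.mem_singleton.1 (hr hi)
        exact update_of_ne (by rintro rfl; exact h this) _ _
      rw [this]
  | allS k φ ih => exact hφ.elim

/-- Simultaneous renaming of the free variables of a formula, up to equivalence
(bound variables are renamed to avoid capture). -/
theorem exists_rename (φ : Fml) (hφ : φ.IsFO) : ∀ ρ : ℕ → ℕ, ∃ φ' : Fml, φ'.IsFO ∧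
    ∀ v : ℕ → M, SatFO S v φ' ↔ SatFO S (v ∘ ρ) φ := by
  have ht : ∀ (t : PTerm) (ρ : ℕ → ℕ), ∃ t' : PTerm, ∀ v : ℕ → M,
      t'.val S v = t.val S (v ∘ ρ) := by
    intro t ρ
    induction t with
    | var n => exact ⟨.var (ρ n), fun v => rfl⟩
    | zero => exact ⟨.zero, fun v => rfl⟩
    | one => exact ⟨.one, fun v => rfl⟩
    | add t u iht ihu =>
      obtain ⟨t', ht⟩ := iht
      obtain ⟨u', hu⟩ := ihu
      exact ⟨.add t' u', fun v => by simp [PTerm.val, ht, hu]⟩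
    | mul t u iht ihu =>
      obtain ⟨t', ht⟩ := iht
      obtain ⟨u', hu⟩ := ihu
      exact ⟨.mul t' u', fun v => by simp [PTerm.val, ht, hu]⟩
  induction φ with
  | eq t u =>
    intro ρ
    obtain ⟨t', ht'⟩ := ht t ρ
    obtain ⟨u', hu'⟩ := ht u ρ
    exact ⟨.eq t' u', trivial, fun v => by simp [ht', hu']⟩
  | lt t u =>
    intro ρ
    obtain ⟨t', ht'⟩ := ht t ρ
    obtain ⟨u', hu'⟩ := ht u ρ
    exact ⟨.lt t' u', trivial, fun v => by simp [ht', hu']⟩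
  | mem t k => exact hφ.elim
  | not φ ih =>
    intro ρ
    obtain ⟨φ', h, h'⟩ := ih hφ ρ
    exact ⟨.not φ', h, fun v => by simp [h']⟩
  | imp φ ψ ihφ ihψ =>
    intro ρ
    obtain ⟨φ', h, h'⟩ := ihφ hφ.1 ρ
    obtain ⟨ψ', k, k'⟩ := ihψ hφ.2 ρ
    exact ⟨.imp φ' ψ', ⟨h, k⟩, fun v => by simp [h', k']⟩
  | all x φ ih =>
    intro ρ
    obtain ⟨k, hk⟩ := Infinite.exists_notMem_finset (φ.freeN.image ρ)
    obtain ⟨φ', h, h'⟩ := ih hφ (update ρ x k)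
    refine ⟨.all k φ', h, fun v => forall_congr' fun a => ?_⟩
    refine (h' _).trans (SatFO_congr S φ fun i hi => ?_)
    have hki : ρ i ≠ k := fun e => hk (e ▸ Finset.mem_image_of_mem ρ hi)
    by_cases hx : i = x
    · simp [hx]
    · simp [hx, hki]
  | allS k φ ih => exact hφ.elim

theorem SatFO_univClosure {φ : Fml} (h : ∀ v, SatFO S v (univClosure φ)) (v : ℕ → M) :
    SatFO S v φ := by
  have : ∀ L : List ℕ, (∀ v, SatFO S v (L.foldr Fml.all φ)) → ∀ v, SatFO S v φ := by
    intro L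
    induction L with
    | nil => exact id
    | cons x L ih => 
      refine fun h => ih fun v => ?_
      have := (SatFO_all S v x _).1 (h v) (v x)
      rwa [update_eq_self] at this
  exact this _ h v

end Semantics

/-! ### Algebra in models of Peano arithmetic -/

section Algebra

variable {M : Type}

/-- `S` satisfies every instance of the first-order induction scheme. -/
def HasInd (S : AStr M) : Prop := ∀ φ : Fml, φ.IsFO → ∀ x v, SatFO S (update v x S.zero) φ →
  (∀ a, SatFO S (update v x a) φ → SatFO S (update v x (S.add a S.one)) φ) →
  ∀ a, SatFO S (update v x a) φ

theorem hasInd_of_PA {S : AStr M} (h : ModelsT S PAax) : HasInd S := by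
  intro φ hφ x v h0 hs a
  have := SatFO_univClosure S (h (univClosure (indFml φ x)) (.inr ⟨φ, x, hφ, rfl⟩)) v
  simp only [indFml, SatFO_imp, SatFO_and, SatFO_all] at this
  refine this ⟨?_, fun a ha => ?_⟩ a
  · rwa [SatFO_substN S _ _ (by simp [PTerm.vars]) _ hφ]
  · rw [SatFO_substN S _ _ (by simp [PTerm.vars]) _ hφ]
    simpa [PTerm.val] using hs a ha

/-- The structure for the language of arithmetic given by the operations of an
ordered semiring. -/
def ofInst (M : Type) [CommSemiring M] [LinearOrder M] : AStr M :=
  ⟨0, 1, (· + ·), (· * ·), (· < ·)⟩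

/-- Models of `PA`, presented as discretely ordered semirings satisfying the
induction scheme. -/
class PAM (M : Type) extends CommSemiring M, LinearOrder M, IsStrictOrderedRing M,
    CanonicallyOrderedAdd M where
  lt_succ : ∀ a b : M, a < b + 1 ↔ a ≤ b
  ind : HasInd (ofInst M)

/-- Every model of `PA` is a discretely ordered semiring with induction. -/
theorem exists_PAM (S : AStr M) (h : ModelsT S PAax) : ∃ _ : PAM M, S = ofInst M := by
  have hi := hasInd_of_PA h
  obtain ⟨zero, one, add, mul, lt⟩ := S
  have v0 : ℕ → M := fun _ => zero
  have succ_ne : ∀ a, add a one ≠ zero := by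
    intro a
    have := h _ (.inl (.inl rfl)) v0 a
    simpa [PTerm.val, Sat] using this
  have succ_inj : ∀ a b, add a one = add b one → a = b := by
    intro a b
    have := h _ (.inl (.inr (.inl rfl))) v0 a b
    simpa [PTerm.val, Sat] using this
  have add_zero' : ∀ a, add a zero = a := by
    intro a
    have := h _ (.inl (.inr (.inr (.inl rfl)))) v0 a
    simpa [PTerm.val, Sat] using this
  have add_succ' : ∀ a b, add a (add b one) = add (add a b) one := by
    intro a b
    have := h _ (.inl (.inr (.inr (.inr (.inl rfl))))) v0 a b
    simpa [PTerm.val, Sat] using this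
  have mul_zero' : ∀ a, mul a zero = zero := by
    intro a
    have := h _ (.inl (.inr (.inr (.inr (.inr (.inl rfl)))))) v0 a
    simpa [PTerm.val, Sat] using this
  have mul_succ' : ∀ a b, mul a (add b one) = add (mul a b) a := by
    intro a b
    have := h _ (.inl (.inr (.inr (.inr (.inr (.inr (.inl rfl))))))) v0 a b
    simpa [PTerm.val, Sat] using this
  have lt_def : ∀ a b, lt a b ↔ ∃ c, add a (add c one) = b := by
    intro a b
    have := SatFO_all _ _ _ _ |>.1 (SatFO_all _ _ _ _ |>.1
      (h _ (.inl (.inr (.inr (.inr (.inr (.inr (.inr rfl))))))) v0) a) b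
    simpa [PTerm.val] using this
  have zero_add' : ∀ a, add zero a = a := by
    intro a
    have := hi (.eq (.add .zero (.var 0)) (.var 0)) trivial 0 v0 (by simp [PTerm.val, add_zero'])
      (by simp +contextual [PTerm.val, add_succ']) a
    simpa [PTerm.val] using this
  have succ_add' : ∀ a b, add (add a one) b = add (add a b) one := by
    intro a b
    have := hi (.eq (.add (.add (.var 1) .one) (.var 0)) (.add (.add (.var 1) (.var 0)) .one))
      trivial 0 (fun _ => a) (by simp [PTerm.val, add_zero'])
      (by simp +contextual [PTerm.val, add_succ']) b
    simpa [PTerm.val] using this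
  have add_comm' : ∀ a b, add a b = add b a := by
    intro a b
    have := hi (.eq (.add (.var 1) (.var 0)) (.add (.var 0) (.var 1)))
      trivial 0 (fun _ => a) (by simp [PTerm.val, add_zero', zero_add'])
      (by simp +contextual [PTerm.val, add_succ', succ_add']) b
    simpa [PTerm.val] using this
  have add_assoc' : ∀ a b c, add (add a b) c = add a (add b c) := by
    intro a b c
    have := hi (.eq (.add (.add (.var 1) (.var 2)) (.var 0)) (.add (.var 1) (.add (.var 2) (.var 0))))
      trivial 0 (fun i => if i = 1 then a else b) (by simp [PTerm.val, add_zero'])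
      (by simp +contextual [PTerm.val, add_succ']) c
    simpa [PTerm.val] using this
  have zero_mul' : ∀ a, mul zero a = zero := by
    intro a
    have := hi (.eq (.mul .zero (.var 0)) .zero) trivial 0 v0 (by simp [PTerm.val, mul_zero'])
      (by simp +contextual [PTerm.val, mul_succ', add_zero']) a
    simpa [PTerm.val] using this
  have succ_mul' : ∀ a b, mul (add a one) b = add (mul a b) b := by
    intro a b
    have := hi (.eq (.mul (.add (.var 1) .one) (.var 0)) (.add (.mul (.var 1) (.var 0)) (.var 0)))
      trivial 0 (fun _ => a) (by simp [PTerm.val, mul_zero', add_zero'])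
      (by
        simp only [SatFO_eq, PTerm.val, update_self, ne_eq, one_ne_zero, not_false_eq_true,
          update_of_ne, mul_succ', add_succ']
        intro c hc
        rw [hc, add_assoc' (mul a c) c, add_comm' c a, add_assoc' (mul a c) a c]) b
    simpa [PTerm.val] using this
  have mul_comm' : ∀ a b, mul a b = mul b a := by
    intro a b
    have := hi (.eq (.mul (.var 1) (.var 0)) (.mul (.var 0) (.var 1)))
      trivial 0 (fun _ => a) (by simp [PTerm.val, mul_zero', zero_mul'])
      (by simp +contextual [PTerm.val, mul_succ', succ_mul']) b
    simpa [PTerm.val] using this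
  have left_distrib' : ∀ a b c, mul a (add b c) = add (mul a b) (mul a c) := by
    intro a b c
    have := hi (.eq (.mul (.var 1) (.add (.var 2) (.var 0)))
        (.add (.mul (.var 1) (.var 2)) (.mul (.var 1) (.var 0))))
      trivial 0 (fun i => if i = 1 then a else b) (by simp [PTerm.val, add_zero', mul_zero'])
      (by
        simp only [SatFO_eq, PTerm.val, update_self, ne_eq, one_ne_zero, not_false_eq_true,
          update_of_ne, OfNat.ofNat_ne_zero, if_true, OfNat.ofNat_ne_one, if_false]
        intro d hd
        rw [add_succ', mul_succ', hd, mul_succ', add_assoc']) c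
    simpa [PTerm.val] using this
  have mul_assoc' : ∀ a b c, mul (mul a b) c = mul a (mul b c) := by
    intro a b c
    have := hi (.eq (.mul (.mul (.var 1) (.var 2)) (.var 0)) (.mul (.var 1) (.mul (.var 2) (.var 0))))
      trivial 0 (fun i => if i = 1 then a else b) (by simp [PTerm.val, mul_zero'])
      (by simp +contextual [PTerm.val, mul_succ', left_distrib']) c
    simpa [PTerm.val] using this
  have mul_one' : ∀ a, mul a one = a := by
    intro a
    have := mul_succ' a zero
    rwa [zero_add', mul_zero', zero_add'] at this
  have cancel : ∀ a b c, add a c = add b c → a = b := by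
    intro a b c
    have := hi (.imp (.eq (.add (.var 1) (.var 0)) (.add (.var 2) (.var 0))) (.eq (.var 1) (.var 2)))
      ⟨trivial, trivial⟩ 0 (fun i => if i = 1 then a else b) (by simp [PTerm.val, add_zero'])
      (by
        simp only [SatFO_imp, SatFO_eq, PTerm.val, update_self, ne_eq, one_ne_zero,
          not_false_eq_true, update_of_ne, add_succ', OfNat.ofNat_ne_zero]
        intro c hc e
        exact hc (succ_inj _ _ e)) c
    simpa [PTerm.val] using this
  have cases' : ∀ a, a = zero ∨ ∃ b, a = add b one := by
    intro a
    have := hi (.or (.eq (.var 0) .zero) (.ex 1 (.eq (.var 0) (.add (.var 1) .one))))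
      (by simp [Fml.or, Fml.ex, Fml.IsFO]) 0 v0 (by simp [PTerm.val])
      (by
        intro a _
        simp only [SatFO_or, SatFO_ex]
        exact .inr ⟨a, by simp [PTerm.val]⟩) a
    simpa [PTerm.val] using this
  have lt_succ_self : ∀ a, lt a (add a one) := fun a => (lt_def _ _).2 ⟨zero, by rw [zero_add']⟩
  have lt_trans' : ∀ a b c, lt a b → lt b c → lt a c := by
    intro a b c
    simp only [lt_def]
    rintro ⟨d, rfl⟩ ⟨e, rfl⟩
    exact ⟨add (add d one) e, by rw [add_assoc', add_assoc', add_assoc', add_assoc']⟩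
  have lt_irrefl' : ∀ a, ¬ lt a a := by
    intro a
    rw [lt_def]
    rintro ⟨c, hc⟩
    refine succ_ne c (cancel _ _ a ?_)
    rw [add_comm', hc, zero_add']
  have zero_lt_succ : ∀ a, lt zero (add a one) := fun a => (lt_def _ _).2 ⟨a, by rw [zero_add']⟩
  have zero_le' : ∀ a, lt zero a ∨ zero = a := by
    intro a
    rcases cases' a with rfl | ⟨b, rfl⟩
    · exact .inr rfl
    · exact .inl (zero_lt_succ b)
  have lt_add_one' : ∀ a b, lt a (add b one) ↔ (lt a b ∨ a = b) := by
    intro a b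
    constructor
    · rw [lt_def]
      rintro ⟨c, hc⟩
      rw [add_succ'] at hc
      have := succ_inj _ _ hc
      rcases cases' c with rfl | ⟨d, rfl⟩
      · right; rwa [add_zero'] at this
      · left; exact (lt_def _ _).2 ⟨d, this⟩
    · rintro (h | rfl)
      · exact lt_trans' _ _ _ h (lt_succ_self b)
      · exact lt_succ_self a
  have total' : ∀ a b, lt a b ∨ a = b ∨ lt b a := by
    intro a b
    have := hi (.or (.lt (.var 0) (.var 1)) (.or (.eq (.var 0) (.var 1)) (.lt (.var 1) (.var 0))))
      (by simp [Fml.or, Fml.IsFO]) 0 (fun _ => b)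
      (by simpa [PTerm.val] using (zero_le' b).imp_right .inl)
      (by
        simp only [SatFO_or, SatFO_eq, SatFO_lt, PTerm.val, update_self, ne_eq, one_ne_zero,
          not_false_eq_true, update_of_ne]
        rintro a (h | h | h)
        · obtain ⟨c, rfl⟩ := (lt_def _ _).1 h
          rcases cases' c with rfl | ⟨d, rfl⟩
          · simp [zero_add']
          · left
            exact (lt_def _ _).2 ⟨d, by rw [succ_add', add_succ' a (add d one)]⟩
        · right; right; exact (lt_add_one' _ _).2 (.inr h.symm)
        · right; right; exact lt_trans' _ _ _ h (lt_succ_self a)) a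
    simpa [PTerm.val] using this
  have add_lt : ∀ a b c, lt a b → lt (add c a) (add c b) := by
    intro a b c
    simp only [lt_def]
    rintro ⟨d, rfl⟩
    exact ⟨d, add_assoc' _ _ _⟩
  have mul_lt : ∀ a b c, lt zero c → lt a b → lt (mul c a) (mul c b) := by
    intro a b c hc
    obtain ⟨e, rfl⟩ := (lt_def _ _).1 hc
    simp only [lt_def, zero_add']
    rintro ⟨d, rfl⟩
    refine ⟨add (mul (add e one) d) e, ?_⟩
    rw [left_distrib', mul_succ', add_assoc' (mul (add e one) d)]
  have le_add : ∀ a b, lt a (add a b) ∨ a = add a b := by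
    intro a b
    rcases cases' b with rfl | ⟨c, rfl⟩
    · right; rw [add_zero']
    · left; exact (lt_def _ _).2 ⟨c, rfl⟩
  classical
  let i1 : CommSemiring M :=
    { zero := zero, one := one, add := add, mul := mul
      add_assoc := add_assoc', zero_add := zero_add', add_zero := add_zero'
      add_comm := add_comm', left_distrib := left_distrib'
      right_distrib := fun a b c => by
        change mul (add a b) c = add (mul a c) (mul b c)
        rw [mul_comm', left_distrib', mul_comm' c, mul_comm' c]
      zero_mul := zero_mul', mul_zero := mul_zero', mul_assoc := mul_assoc'
      one_mul := fun a => by change mul one a = a; rw [mul_comm', mul_one']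
      mul_one := mul_one', mul_comm := mul_comm'
      nsmul := @nsmulRec M ⟨zero⟩ ⟨add⟩, npow := @npowRec M ⟨one⟩ ⟨mul⟩ }
  let i2 : LinearOrder M :=
    { le := fun a b => lt a b ∨ a = b
      lt := lt
      le_refl := fun a => .inr rfl
      le_trans := by
        rintro a b c (h | rfl) (k | rfl)
        · exact .inl (lt_trans' _ _ _ h k)
        · exact .inl h
        · exact .inl k
        · exact .inr rfl
      lt_iff_le_not_ge := fun a b => by
        constructor
        · refine fun h => ⟨.inl h, ?_⟩
          rintro (k | rfl)
          · exact lt_irrefl' _ (lt_trans' _ _ _ h k)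
          · exact lt_irrefl' _ h
        · rintro ⟨h | rfl, k⟩
          · exact h
          · exact (k (.inr rfl)).elim
      le_antisymm := by
        rintro a b (h | rfl) (k | h')
        · exact (lt_irrefl' _ (lt_trans' _ _ _ h k)).elim
        · exact h'.symm
        · rfl
        · rfl
      le_total := fun a b => by
        rcases total' a b with h | h | h
        · exact .inl (.inl h)
        · exact .inl (.inr h)
        · exact .inr (.inl h)
      toDecidableLE := Classical.decRel _ }
  have i3 : IsStrictOrderedRing M :=
    { add_le_add_left := by
        rintro a b (h | rfl) c
        · exact .inl (by
            change lt (add a c) (add b c)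
            rw [add_comm' a, add_comm' b]; exact add_lt _ _ _ h)
        · exact .inr rfl
      le_of_add_le_add_left := by
        intro a b c hbc
        rcases total' b c with h | h | h
        · exact .inl h
        · exact .inr h
        · exact absurd (show add a b ≤ add a c from hbc) (not_le_of_gt (add_lt _ _ a h))
      zero_le_one := zero_le' one
      exists_pair_ne := ⟨zero, one, fun e => succ_ne zero (by rw [zero_add']; exact e.symm)⟩
      mul_lt_mul_of_pos_left := fun c hc a b hab => mul_lt a b c hc hab
      mul_lt_mul_of_pos_right := fun c hc a b hab => by
        change lt (mul a c) (mul b c)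
        rw [mul_comm' a, mul_comm' b]; exact mul_lt a b c hc hab }
  have i4 : CanonicallyOrderedAdd M :=
    { exists_add_of_le := by
        rintro a b (h | rfl)
        · obtain ⟨c, rfl⟩ := (lt_def _ _).1 h
          exact ⟨add c one, rfl⟩
        · exact ⟨zero, (add_zero' a).symm⟩
      le_add_self := fun a b => by
        change lt a (add b a) ∨ a = add b a
        rw [add_comm']; exact le_add a b
      le_self_add := fun a b => le_add a b }
  exact ⟨{ i1, i2, i3, i4 with lt_succ := lt_add_one', ind := hi }, rfl⟩

end Algebra

/-! ### Definable relations -/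

section Definability

set_option linter.unusedSectionVars false

variable {M : Type} [PAM M]

/-- Term-definable functions of a valuation.  The flag `C` says whether arbitrary
elements of `M` may be used as parameters. -/
class inductive Tm (C : Prop) : ((ℕ → M) → M) → Prop
  | var (k : ℕ) : Tm C (fun v => v k)
  | const (h : C) (c : M) : Tm C (fun _ => c)
  | zero : Tm C (fun _ => 0)
  | one : Tm C (fun _ => 1)
  | add {f g} : Tm C f → Tm C g → Tm C (fun v => f v + g v)
  | mul {f g} : Tm C f → Tm C g → Tm C (fun v => f v * g v)

/-- Definable predicates of a valuation, with quantified variables handled in the style of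
de Bruijn: the bound variable becomes `v 0` and all others are shifted by one.  The flag `C`
says whether parameters from `M` are allowed. -/
class inductive Df (C : Prop) : ((ℕ → M) → Prop) → Prop
  | eq {f g : (ℕ → M) → M} : Tm C f → Tm C g → Df C (fun v => f v = g v)
  | lt {f g : (ℕ → M) → M} : Tm C f → Tm C g → Df C (fun v => f v < g v)
  | not {P : (ℕ → M) → Prop} : Df C P → Df C (fun v => ¬ P v)
  | imp {P Q : (ℕ → M) → Prop} : Df C P → Df C Q → Df C (fun v => P v → Q v)
  | all {P : M → (ℕ → M) → Prop} : Df C (fun v => P (v 0) (fun i => v (i + 1))) →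
      Df C (fun v => ∀ a, P a v)

variable {C : Prop}

theorem Tm.subst {f : (ℕ → M) → M} (hf : Tm C f) (σ : ℕ → (ℕ → M) → M)
    (hσ : ∀ i, Tm C (σ i)) : Tm C (fun v => f (fun i => σ i v)) := by
  induction hf with
  | var k => exact hσ k
  | const h c => exact .const h c
  | zero => exact .zero
  | one => exact .one
  | add _ _ hf hg => exact .add hf hg
  | mul _ _ hf hg => exact .mul hf hg

theorem Df.subst {P : (ℕ → M) → Prop} (hP : Df C P) : ∀ (σ : ℕ → (ℕ → M) → M),
    (∀ i, Tm C (σ i)) → Df C (fun v => P (fun i => σ i v)) := by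
  induction hP with
  | eq hf hg => exact fun σ hσ => .eq (hf.subst σ hσ) (hg.subst σ hσ)
  | lt hf hg => exact fun σ hσ => .lt (hf.subst σ hσ) (hg.subst σ hσ)
  | not _ ih => exact fun σ hσ => .not (ih σ hσ)
  | imp _ _ ihP ihQ => exact fun σ hσ => .imp (ihP σ hσ) (ihQ σ hσ)
  | @all P _ ih =>
    intro σ hσ
    refine .all (P := fun a v => P a (fun i => σ i v)) ?_
    refine ih (fun i => Nat.casesOn i (fun v => v 0) fun i v => σ i (fun j => v (j + 1))) ?_
    rintro (_ | i)
    · exact .var 0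
    · exact (hσ i).subst (fun j v => v (j + 1)) fun j => .var _

attribute [instance] Tm.var Tm.zero Tm.one

instance (c : M) : Tm True (fun _ : ℕ → M => c) := .const trivial c

instance Tm.natCast (n : ℕ) : Tm C (fun _ : ℕ → M => (n : M)) := by
  induction n with
  | zero => simpa using Tm.zero
  | succ n ih => simpa using Tm.add ih .one

theorem Df.congr {P Q : (ℕ → M) → Prop} (h : Df C P) (e : ∀ v, Q v ↔ P v) : Df C Q :=
  (funext fun v => propext (e v) : Q = P) ▸ h

section Connectives

variable {P Q : (ℕ → M) → Prop} {f g : (ℕ → M) → M}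

instance [hf : Tm C f] [hg : Tm C g] : Tm C (fun v => f v + g v) := .add hf hg
instance [hf : Tm C f] [hg : Tm C g] : Tm C (fun v => f v * g v) := .mul hf hg
instance [hf : Tm C f] [hg : Tm C g] : Df C (fun v => f v = g v) := .eq hf hg
instance [hf : Tm C f] [hg : Tm C g] : Df C (fun v => f v < g v) := .lt hf hg
instance [h : Df C P] : Df C (fun v => ¬ P v) := .not h
instance [h : Df C P] [h' : Df C Q] : Df C (fun v => P v → Q v) := .imp h h'
instance {P : M → (ℕ → M) → Prop} [h : Df C (fun v => P (v 0) (fun i => v (i + 1)))] :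
    Df C (fun v => ∀ a, P a v) := .all h

instance [Df C P] [Df C Q] : Df C (fun v => P v ∧ Q v) :=
  Df.congr (inferInstance : Df C (fun v => ¬ (P v → ¬ Q v))) fun v => by tauto
instance [Df C P] [Df C Q] : Df C (fun v => P v ∨ Q v) :=
  Df.congr (inferInstance : Df C (fun v => ¬ P v → Q v)) fun v => by tauto
instance [Df C P] [Df C Q] : Df C (fun v => P v ↔ Q v) :=
  Df.congr (inferInstance : Df C (fun v => (P v → Q v) ∧ (Q v → P v))) fun v => by tauto
instance {P : M → (ℕ → M) → Prop} [Df C (fun v => P (v 0) (fun i => v (i + 1)))] :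
    Df C (fun v => ∃ a, P a v) :=
  Df.congr (inferInstance : Df C (fun v => ¬ ∀ a, ¬ P a v)) fun _ => by push Not; rfl
instance (priority := low) (p : Prop) : Df C (fun _ : ℕ → M => p) := by
  by_cases h : p
  · exact Df.congr (inferInstance : Df C (fun _ : ℕ → M => (0 : M) = 0)) fun _ => by simp [h]
  · exact Df.congr (inferInstance : Df C (fun _ : ℕ → M => ¬ (0 : M) = 0)) fun _ => by simp [h]
instance [Tm C f] [Tm C g] : Df C (fun v => f v ≤ g v) :=
  Df.congr (inferInstance : Df C (fun v => ¬ g v < f v)) fun _ => not_lt.symm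
instance [Tm C f] [Tm C g] : Df C (fun v => f v ≠ g v) :=
  Df.congr (inferInstance : Df C (fun v => ¬ f v = g v)) fun _ => Iff.rfl
end Connectives

theorem Tm.exists_term {f : (ℕ → M) → M} (hf : Tm False f) :
    ∃ t : PTerm, ∀ v, f v = t.val (ofInst M) v := by
  induction hf with
  | var k => exact ⟨.var k, fun v => rfl⟩
  | const h c => exact h.elim
  | zero => exact ⟨.zero, fun v => rfl⟩
  | one => exact ⟨.one, fun v => rfl⟩
  | add _ _ hf hg =>
    obtain ⟨t, ht⟩ := hf
    obtain ⟨u, hu⟩ := hg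
    exact ⟨.add t u, fun v => by beta_reduce; rw [ht, hu]; rfl⟩
  | mul _ _ hf hg =>
    obtain ⟨t, ht⟩ := hf
    obtain ⟨u, hu⟩ := hg
    exact ⟨.mul t u, fun v => by beta_reduce; rw [ht, hu]; rfl⟩

/-- Parameter-free definable predicates are given by first-order formulas. -/
theorem Df.exists_fml {P : (ℕ → M) → Prop} (hP : Df False P) :
    ∃ φ : Fml, φ.IsFO ∧ ∀ v, P v ↔ SatFO (ofInst M) v φ := by
  induction hP with
  | eq hf hg =>
    obtain ⟨t, ht⟩ := hf.exists_term
    obtain ⟨u, hu⟩ := hg.exists_term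
    exact ⟨.eq t u, trivial, fun v => by beta_reduce; rw [ht, hu]; rfl⟩
  | lt hf hg =>
    obtain ⟨t, ht⟩ := hf.exists_term
    obtain ⟨u, hu⟩ := hg.exists_term
    exact ⟨.lt t u, trivial, fun v => by beta_reduce; rw [ht, hu]; rfl⟩
  | not _ ih =>
    obtain ⟨φ, h, h'⟩ := ih
    exact ⟨.not φ, h, fun v => by beta_reduce; rw [h']; rfl⟩
  | imp _ _ ihP ihQ =>
    obtain ⟨φ, h, h'⟩ := ihP
    obtain ⟨ψ, k, k'⟩ := ihQ
    exact ⟨.imp φ ψ, ⟨h, k⟩, fun v => by beta_reduce; rw [h', k']; rfl⟩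
  | @all P _ ih =>
    obtain ⟨φ, h, h'⟩ := ih
    obtain ⟨k, hk⟩ := Infinite.exists_notMem_finset (φ.freeN.image Nat.pred)
    obtain ⟨φ', h₁, h₂⟩ := exists_rename (ofInst M) φ h fun i => Nat.casesOn i k fun i => i
    refine ⟨.all k φ', h₁, fun v => forall_congr' fun a => ?_⟩
    have h3 := h₂ (update v k a)
    refine ((h' (fun i => Nat.casesOn i a fun i => v i)).trans ?_).trans h3.symm
    refine SatFO_congr _ _ fun i hi => ?_
    rcases i with _ | i
    · simp
    · have : i ≠ k := by
        rintro rfl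
        exact hk (Finset.mem_image.2 ⟨_, hi, rfl⟩)
      simp [this]

/-- The valuation with values of `p` at odd places and of `v` at even places. -/
def mix (p v : ℕ → M) (n : ℕ) : M := if n % 2 = 0 then v (n / 2) else p (n / 2)

theorem mix_even (p v : ℕ → M) (n : ℕ) : mix p v (2 * n) = v n := by simp [mix]
theorem mix_odd (p v : ℕ → M) (n : ℕ) : mix p v (2 * n + 1) = p n := by
  have : (2 * n + 1) / 2 = n := by omega
  simp [mix, Nat.add_mod, this]

/-- Two parameter lists can be combined into one. -/
theorem exists_merge (p q : ℕ → M) : ∃ r : ℕ → M, ∃ ρ τ : ℕ → ℕ,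
    (∀ v, mix p v = fun i => mix r v (ρ i)) ∧ ∀ v, mix q v = fun i => mix r v (τ i) := by
  refine ⟨mix p q, fun n => if n % 2 = 0 then n else 2 * (2 * (n / 2) + 1) + 1,
    fun n => if n % 2 = 0 then n else 2 * (2 * (n / 2)) + 1, fun v => ?_, fun v => ?_⟩ <;>
  · funext n
    by_cases h : n % 2 = 0
    · simp [mix, h]
    · simp only [h, if_false, mix_odd, mix_even]
      simp [mix, h]

theorem Tm.exists_param {f : (ℕ → M) → M} (hf : Tm C f) :
    ∃ g p, Tm (M := M) False g ∧ ∀ v, f v = g (mix p v) := by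
  induction hf with
  | var k => exact ⟨fun v => v (2 * k), fun _ => 0, .var _, fun v => (mix_even _ _ _).symm⟩
  | const h c => exact ⟨fun v => v (2 * 0 + 1), fun _ => c, .var _, fun v => (mix_odd (fun _ => c) v 0).symm⟩
  | zero => exact ⟨_, fun _ => 0, .zero, fun v => rfl⟩
  | one => exact ⟨_, fun _ => 0, .one, fun v => rfl⟩
  | add _ _ hf hg =>
    obtain ⟨f', p, h1, h2⟩ := hf
    obtain ⟨g', q, h3, h4⟩ := hg
    obtain ⟨r, ρ, τ, hρ, hτ⟩ := exists_merge p q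
    exact ⟨_, r, .add (h1.subst _ fun i => .var (ρ i)) (h3.subst _ fun i => .var (τ i)),
      fun v => by beta_reduce; rw [h2, h4, hρ, hτ]⟩
  | mul _ _ hf hg =>
    obtain ⟨f', p, h1, h2⟩ := hf
    obtain ⟨g', q, h3, h4⟩ := hg
    obtain ⟨r, ρ, τ, hρ, hτ⟩ := exists_merge p q
    exact ⟨_, r, .mul (h1.subst _ fun i => .var (ρ i)) (h3.subst _ fun i => .var (τ i)),
      fun v => by beta_reduce; rw [h2, h4, hρ, hτ]⟩

theorem Df.exists_param {P : (ℕ → M) → Prop} (hP : Df C P) :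
    ∃ Q p, Df (M := M) False Q ∧ ∀ v, P v ↔ Q (mix p v) := by
  induction hP with
  | eq hf hg =>
    obtain ⟨f', p, h1, h2⟩ := hf.exists_param
    obtain ⟨g', q, h3, h4⟩ := hg.exists_param
    obtain ⟨r, ρ, τ, hρ, hτ⟩ := exists_merge p q
    exact ⟨_, r, .eq (h1.subst _ fun i => .var (ρ i)) (h3.subst _ fun i => .var (τ i)),
      fun v => by beta_reduce; rw [h2, h4, hρ, hτ]⟩
  | lt hf hg =>
    obtain ⟨f', p, h1, h2⟩ := hf.exists_param
    obtain ⟨g', q, h3, h4⟩ := hg.exists_param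
    obtain ⟨r, ρ, τ, hρ, hτ⟩ := exists_merge p q
    exact ⟨_, r, .lt (h1.subst _ fun i => .var (ρ i)) (h3.subst _ fun i => .var (τ i)),
      fun v => by beta_reduce; rw [h2, h4, hρ, hτ]⟩
  | not _ ih =>
    obtain ⟨Q, p, h, h'⟩ := ih
    exact ⟨_, p, .not h, fun v => by beta_reduce; rw [h']⟩
  | imp _ _ ihP ihQ =>
    obtain ⟨f', p, h1, h2⟩ := ihP
    obtain ⟨g', q, h3, h4⟩ := ihQ
    obtain ⟨r, ρ, τ, hρ, hτ⟩ := exists_merge p q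
    exact ⟨_, r, .imp (h1.subst _ fun i => .var (ρ i)) (h3.subst _ fun i => .var (τ i)),
      fun v => by beta_reduce; rw [h2, h4, hρ, hτ]⟩
  | @all P _ ih =>
    obtain ⟨Q, p, h, h'⟩ := ih
    -- variable `0` is the bound one, the others of even index move down by two
    let σ : ℕ → (ℕ → M) → M := fun i v =>
      if i = 0 then v 0 else if i % 2 = 0 then v (i - 1) else v (i + 1)
    have hσ : ∀ i, Tm False (σ i) := by
      intro i
      by_cases h0 : i = 0
      · simpa only [σ, h0, if_true] using Tm.var 0
      · by_cases h2 : i % 2 = 0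
        · simpa only [σ, h0, h2, if_true, if_false] using Tm.var _
        · simpa only [σ, h0, h2, if_false] using Tm.var _
    refine ⟨fun v => ∀ a, Q (fun i => σ i fun j => Nat.casesOn j a v), p, ?_, fun v => ?_⟩
    · refine .all (P := fun a v => Q (fun i => σ i fun j => Nat.casesOn j a v)) ?_
      refine (h.subst σ hσ).congr fun v => ?_
      have : (fun j => Nat.casesOn j (v 0) fun i => v (i + 1) : ℕ → M) = v := by
        funext j; cases j <;> rfl
      rw [this]
    · refine forall_congr' fun a => ?_
      refine (h' (fun i => Nat.casesOn i a v)).trans (Eq.to_iff (congrArg Q ?_))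
      funext i
      rcases Nat.even_or_odd' i with ⟨k, rfl | rfl⟩
      · rw [mix_even]
        rcases k with _ | k
        · rfl
        · have e1 : 2 * (k + 1) ≠ 0 := by omega
          have e2 : 2 * (k + 1) % 2 = 0 := by omega
          have e3 : 2 * (k + 1) - 1 = 2 * k + 1 := by omega
          simp only [σ, e1, e2, e3, if_true, if_false]
          exact (mix_even p v k).symm
      · rw [mix_odd]
        have e1 : 2 * k + 1 ≠ 0 := by omega
        have e2 : ¬ (2 * k + 1) % 2 = 0 := by omega
        simp only [σ, e1, e2, if_false]
        exact (mix_odd p v k).symm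

/-- Induction for predicates definable with parameters. -/
theorem pa_induction {P : M → Prop} (hP : Df True (fun v : ℕ → M => P (v 0)))
    (h0 : P 0) (hs : ∀ a, P a → P (a + 1)) (a : M) : P a := by
  obtain ⟨Q, p, hQ, h⟩ := hP.exists_param
  obtain ⟨φ, hφ, h'⟩ := hQ.exists_fml
  have key : ∀ a, P a ↔ SatFO (ofInst M) (update (mix p fun _ => 0) 0 a) φ := by
    intro a
    rw [← h', ← show mix p (update (fun _ => 0) 0 a) = update (mix p fun _ => 0) 0 a from ?_]
    · exact h (update (fun _ => 0) 0 a)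
    · funext n
      rcases n with _ | n
      · simp [mix]
      · by_cases h : (n + 1) % 2 = 0
        · have : (n + 1) / 2 ≠ 0 := by omega
          simp [mix, h, this]
        · simp [mix, h]
  rw [key]
  exact PAM.ind φ hφ 0 _ ((key 0).1 h0) (fun a ha => (key (a + 1)).1 (hs a ((key a).2 ha))) a

/-- The least element principle for predicates definable with parameters. -/
theorem pa_least {P : M → Prop} (hP : Df True (fun v : ℕ → M => P (v 0))) (h : ∃ a, P a) :
    ∃ a, P a ∧ ∀ b < a, ¬ P b := by
  by_contra! hc
  have : ∀ a, ∀ b < a, ¬ P b := by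
    refine pa_induction ?_ ?_ ?_
    · have := fun k : ℕ => hP.subst (fun _ v => v k) fun i => .var k
      infer_instance
    · simp
    · intro a ih b hb hPb
      rw [PAM.lt_succ] at hb
      obtain ⟨c, hc1, hc2⟩ := hc b hPb
      exact ih c (hc1.trans_le hb) hc2
  obtain ⟨a, ha⟩ := h
  exact this (a + 1) a ((PAM.lt_succ _ _).2 le_rfl) ha

/-- Satisfaction of a first-order formula is definable. -/
theorem Df.satFO (φ : Fml) (hφ : φ.IsFO) : Df C (fun v => SatFO (ofInst M) v φ) := by
  have ht : ∀ t : PTerm, Tm C (fun v => t.val (ofInst M) v) := by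
    intro t
    induction t with
    | var n => exact .var n
    | zero => exact .zero
    | one => exact .one
    | add t u iht ihu => exact .add iht ihu
    | mul t u iht ihu => exact .mul iht ihu
  induction φ with
  | eq t u => exact .eq (ht t) (ht u)
  | lt t u => exact .lt (ht t) (ht u)
  | mem t k => exact hφ.elim
  | not φ ih => exact .not (ih hφ)
  | imp φ ψ ihφ ihψ => exact .imp (ihφ hφ.1) (ihψ hφ.2)
  | all x φ ih =>
    refine .all (P := fun a v => SatFO (ofInst M) (update v x a) φ) ?_
    refine ((ih hφ).subst (fun i v => if i = x then v 0 else v (i + 1)) fun i => ?_).congr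
      fun v => ?_
    · by_cases h : i = x
      · simpa only [h, if_true] using Tm.var 0
      · simpa only [h, if_false] using Tm.var _
    · refine Eq.to_iff (congrArg (fun v => SatFO (ofInst M) v φ) ?_)
      funext i
      by_cases h : i = x <;> simp [h]
  | allS k φ ih => exact hφ.elim

/-! ### Uniform substitution into definable relations -/

theorem Df.sub1 {R : M → Prop} (h : Df C (fun v : ℕ → M => R (v 0)))
    {f : (ℕ → M) → M} (hf : Tm C f) : Df C (fun v => R (f v)) :=
  h.subst (fun _ => f) fun _ => hf

theorem Df.sub2 {R : M → M → Prop} (h : Df C (fun v : ℕ → M => R (v 0) (v 1)))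
    {f g : (ℕ → M) → M} (hf : Tm C f) (hg : Tm C g) : Df C (fun v => R (f v) (g v)) :=
  h.subst (fun | 0 => f | _ => g) fun | 0 => hf | _ + 1 => hg

theorem Df.sub3 {R : M → M → M → Prop} (h : Df C (fun v : ℕ → M => R (v 0) (v 1) (v 2)))
    {f g k : (ℕ → M) → M} (hf : Tm C f) (hg : Tm C g) (hk : Tm C k) :
    Df C (fun v => R (f v) (g v) (k v)) :=
  h.subst (fun | 0 => f | 1 => g | _ => k) fun | 0 => hf | 1 => hg | _ + 2 => hk

theorem Df.sub4 {R : M → M → M → M → Prop}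
    (h : Df C (fun v : ℕ → M => R (v 0) (v 1) (v 2) (v 3)))
    {f g k l : (ℕ → M) → M} (hf : Tm C f) (hg : Tm C g) (hk : Tm C k) (hl : Tm C l) :
    Df C (fun v => R (f v) (g v) (k v) (l v)) :=
  h.subst (fun | 0 => f | 1 => g | 2 => k | _ => l)
    fun | 0 => hf | 1 => hg | 2 => hk | _ + 3 => hl

section

variable {f g k : (ℕ → M) → M}

instance [Tm C f] [Tm C g] [Tm C k] :
    Df C (fun v => (ofInst M).PairRel (f v) (g v) (k v)) :=
  inferInstanceAs (Df C (fun v => (1 + 1) * f v =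
    (g v + k v) * ((g v + k v) + 1) + (1 + 1) * g v))

instance [hf : Tm C f] [hg : Tm C g] : Df C (fun v => f v ∣ g v) :=
  Df.sub2 (inferInstanceAs (Df C (fun v : ℕ → M => ∃ c, v 1 = v 0 * c))) hf hg

instance [hf : Tm C f] [hg : Tm C g] : Df C (fun v => (ofInst M).MemRel (f v) (g v)) :=
  Df.sub2 (R := (ofInst M).MemRel) (inferInstanceAs (Df C (fun v : ℕ → M =>
    v 0 < v 1 ∧ ∃ a b : M, (ofInst M).PairRel (v 1) a b ∧
    1 < 1 + (v 0 + 1) * b ∧ 1 < 1 + (v 0 + 1) * b ∧ ∃ q, a = q * (1 + (v 0 + 1) * b) + 1))) hf hg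

end

end Definability

/-! ### Finite sets inside a model of Peano arithmetic -/

section Coding

variable {M : Type} [PAM M]

theorem add_one_le {a b : M} : a + 1 ≤ b ↔ a < b := by
  rw [← not_lt, PAM.lt_succ, not_le]

theorem one_le_of_pos {a : M} (h : 0 < a) : 1 ≤ a := by
  have := add_one_le.2 h
  rwa [zero_add] at this

/-- The standard model is a model of Peano arithmetic. -/
instance : PAM ℕ where
  lt_succ _ _ := Nat.lt_succ_iff
  ind φ _ x v h0 hs a := by
    induction a with
    | zero => exact h0
    | succ n ih => exact hs n ih

theorem num_eq (n : ℕ) : (ofInst M).num n = n := by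
  induction n with
  | zero => exact Nat.cast_zero.symm
  | succ n ih => rw [Nat.cast_succ, ← ih]; rfl

/-- The standard elements form an initial segment. -/
theorem lt_cast {a : M} {n : ℕ} (h : a < n) : ∃ k < n, a = k := by
  induction n with
  | zero => simp at h
  | succ n ih =>
    rw [Nat.cast_succ, PAM.lt_succ] at h
    rcases h.lt_or_eq with h | h
    · obtain ⟨k, hk, e⟩ := ih h
      exact ⟨k, hk.trans n.lt_succ_self, e⟩
    · exact ⟨n, n.lt_succ_self, h⟩

theorem le_cast {a : M} {n : ℕ} (h : a ≤ n) : ∃ k ≤ n, a = k := by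
  obtain ⟨k, hk, e⟩ := lt_cast (a := a) (n := n + 1) (by
    rw [Nat.cast_succ]; exact (PAM.lt_succ _ _).2 h)
  exact ⟨k, Nat.lt_succ_iff.1 hk, e⟩

theorem cast_lt_of_nonstd {a : M} (h : ∀ n : ℕ, a ≠ n) (n : ℕ) : (n : M) < a := by
  by_contra hc
  obtain ⟨k, _, e⟩ := le_cast (not_lt.1 hc)
  exact h k e

theorem nonstd_of_cast_lt {a : M} (h : ∀ n : ℕ, (n : M) < a) (n : ℕ) : a ≠ n :=
  fun e => lt_irrefl _ (e ▸ h n)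

/-- Overspill: a definable property of all standard numbers holds of some number above all
the standard ones. -/
theorem overspill {P : M → Prop} (hP : Df True (fun v : ℕ → M => P (v 0)))
    {w : M} (hw : ∀ n : ℕ, (n : M) < w) (h : ∀ n : ℕ, P n) :
    ∃ a, (∀ n : ℕ, (n : M) < a) ∧ P a := by
  by_cases hc : ∃ a, ¬ P a
  · obtain ⟨a, ha, ha'⟩ := pa_least inferInstance hc
    have hns : ∀ n : ℕ, a ≠ n := fun n e => ha (e ▸ h n)
    have h0 : 1 ≤ a := one_le_of_pos (by simpa using cast_lt_of_nonstd hns 0)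
    obtain ⟨a', rfl⟩ := exists_add_of_le h0
    refine ⟨a', cast_lt_of_nonstd fun n e => hns (n + 1) ?_, ?_⟩
    · rw [e, add_comm, Nat.cast_succ]
    · refine not_not.1 (ha' a' ?_)
      rw [add_comm]
      exact (PAM.lt_succ _ _).2 le_rfl
  · push Not at hc
    exact ⟨w, hw, hc w⟩

theorem pairRel_iff {p a b : M} :
    (ofInst M).PairRel p a b ↔ (1 + 1) * p = (a + b) * (a + b + 1) + (1 + 1) * a := Iff.rfl

theorem two_mul_cancel {a b : M} (h : (1 + 1) * a = (1 + 1) * b) : a = b :=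
  mul_left_cancel₀ (show (1 + 1 : M) ≠ 0 by positivity) h

theorem exists_pairRel (a b : M) : ∃ p, (ofInst M).PairRel p a b := by
  have : ∀ n : M, ∃ q, (1 + 1) * q = n * (n + 1) := by
    refine pa_induction inferInstance ⟨0, by simp⟩ ?_
    rintro n ⟨q, hq⟩
    exact ⟨q + n + 1, by rw [add_assoc, mul_add, hq]; ring⟩
  obtain ⟨q, hq⟩ := this (a + b)
  exact ⟨q + a, by rw [pairRel_iff, mul_add, hq]⟩

theorem pairRel_left_le {p a b : M} (h : (ofInst M).PairRel p a b) : a ≤ p := by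
  rw [pairRel_iff] at h
  refine le_of_mul_le_mul_left ?_ (show (0 : M) < 1 + 1 by positivity)
  rw [h]
  exact le_add_self

theorem pairRel_right_le {p a b : M} (h : (ofInst M).PairRel p a b) : b ≤ p := by
  rw [pairRel_iff] at h
  rcases eq_or_ne b 0 with rfl | hb
  · exact zero_le
  refine le_of_mul_le_mul_left ?_ (show (0 : M) < 1 + 1 by positivity)
  rw [h, mul_comm]
  refine le_trans ?_ le_self_add
  have h1 : b ≤ a + b := le_add_self
  have h2 : 1 ≤ b := one_le_of_pos (pos_iff_ne_zero.2 hb)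
  gcongr
  exact h2.trans h1

theorem pairRel_inj {p a b a' b' : M} (h : (ofInst M).PairRel p a b)
    (h' : (ofInst M).PairRel p a' b') : a = a' ∧ b = b' := by
  have key : ∀ {a b a' b' : M}, (ofInst M).PairRel p a b → (ofInst M).PairRel p a' b' →
      ¬ a + b < a' + b' := by
    intro a b a' b' h h' hlt
    rw [pairRel_iff] at h h'
    rw [h] at h'
    have h1 : a + b + 1 ≤ a' + b' := add_one_le.2 hlt
    have h2 : (a + b) * (a + b + 1) + (1 + 1) * a < (a + b + 1) * (a + b + 1 + 1) := by
      have : a < a + b + 1 := (PAM.lt_succ _ _).2 le_self_add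
      calc (a + b) * (a + b + 1) + (1 + 1) * a
          < (a + b) * (a + b + 1) + (1 + 1) * (a + b + 1) := by gcongr
        _ = _ := by ring
    have h3 : (a + b + 1) * (a + b + 1 + 1) ≤ (a' + b') * (a' + b' + 1) := by gcongr
    exact absurd h' (ne_of_lt (h2.trans_le (h3.trans le_self_add)))
  have hs : a + b = a' + b' := le_antisymm (not_lt.1 (key h' h)) (not_lt.1 (key h h'))
  rw [pairRel_iff] at h h'
  rw [h, hs] at h'
  have ha := two_mul_cancel (add_left_cancel h')
  subst ha
  exact ⟨rfl, add_left_cancel hs⟩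

theorem pairRel_cast {p a b : ℕ} : (ofInst M).PairRel (p : M) a b ↔ natStr.PairRel p a b := by
  rw [pairRel_iff]
  exact_mod_cast Iff.rfl

/-- Membership in a coded set, unfolded. -/
theorem memRel_iff {x y : M} : (ofInst M).MemRel x y ↔ x < y ∧ ∃ a b, (ofInst M).PairRel y a b ∧
    1 < 1 + (x + 1) * b ∧ 1 < 1 + (x + 1) * b ∧ ∃ q, a = q * (1 + (x + 1) * b) + 1 := Iff.rfl

theorem memRel_lt {x y : M} (h : (ofInst M).MemRel x y) : x < y := h.1

/-- The membership relation is absolute between `ℕ` and a model of `PA`. -/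
theorem memRel_cast {x y : ℕ} : (ofInst M).MemRel (x : M) y ↔ (ofInst ℕ).MemRel x y := by
  rw [memRel_iff, memRel_iff]
  constructor
  · rintro ⟨h1, a, b, h2, h3, -, q, h4⟩
    obtain ⟨a, -, rfl⟩ := le_cast (pairRel_left_le h2)
    obtain ⟨b, -, rfl⟩ := le_cast (pairRel_right_le h2)
    have hq : q ≤ (a : M) := by
      rw [h4]
      refine le_trans ?_ le_self_add
      exact le_mul_of_one_le_right zero_le h3.le
    obtain ⟨q, -, rfl⟩ := le_cast hq
    refine ⟨by exact_mod_cast h1, a, b, pairRel_cast.1 h2, by exact_mod_cast h3,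
      by exact_mod_cast h3, q, by exact_mod_cast h4⟩
  · rintro ⟨h1, a, b, h2, h3, -, q, h4⟩
    exact ⟨by exact_mod_cast h1, a, b, pairRel_cast.2 h2, by exact_mod_cast h3,
      by exact_mod_cast h3, q, by exact_mod_cast h4⟩

theorem dvd_of_dvd_add' {m x y : M} (h : m ∣ x + y) (hx : m ∣ y) : m ∣ x := by
  obtain ⟨s, hs⟩ := h
  obtain ⟨t, rfl⟩ := hx
  rcases le_total t s with hts | hts
  · obtain ⟨u, rfl⟩ := exists_add_of_le hts
    rw [mul_add, add_comm] at hs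
    exact ⟨u, add_left_cancel hs⟩
  · obtain ⟨u, rfl⟩ := exists_add_of_le hts
    have : x + m * u = 0 := by
      refine add_right_cancel (b := m * s) ?_
      rw [zero_add]
      exact Eq.trans (by ring) hs
    rw [add_eq_zero] at this
    rw [this.1]
    exact dvd_zero m

/-- The moduli `1 + (i + 1) b` are pairwise coprime when `b` is divisible by the differences of
the indices. -/
theorem coprime_moduli {b' i k P : M} (hik : i ≠ k)
    (hd : ∀ d, 0 < d → (d ≤ i ∨ d ≤ k) → d ∣ b')
    (h : 1 + (i + 1) * b' ∣ P * (1 + (k + 1) * b')) : 1 + (i + 1) * b' ∣ P := by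
  rcases lt_or_gt_of_ne hik with hlt | hlt
  · obtain ⟨d, rfl⟩ := exists_add_of_le hlt.le
    obtain ⟨e, he⟩ := hd d (pos_iff_ne_zero.2 (by rintro rfl; simp at hlt)) (.inr le_add_self)
    have key : P + P * ((i + 1) * (i + d + 1) * e) * (1 + (i + 1) * b') =
        (i + 1) * (i + 1) * e * (P * (1 + (i + d + 1) * b')) + P * (1 + (i + 1) * b') := by
      rw [he]; ring
    refine dvd_of_dvd_add' (y := P * ((i + 1) * (i + d + 1) * e) * (1 + (i + 1) * b')) ?_
      (Dvd.intro_left _ rfl)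
    rw [key]
    exact dvd_add (h.mul_left _) (Dvd.intro_left _ rfl)
  · obtain ⟨d, rfl⟩ := exists_add_of_le hlt.le
    obtain ⟨e, he⟩ := hd d (pos_iff_ne_zero.2 (by rintro rfl; simp at hlt)) (.inl le_add_self)
    have key : P * ((k + d + 1) * (k + 1) * e + 1) * (1 + (k + d + 1) * b') =
        P + (k + d + 1) * (k + d + 1) * e * (P * (1 + (k + 1) * b')) := by
      rw [he]; ring
    exact dvd_of_dvd_add' (key ▸ Dvd.intro_left _ rfl) (h.mul_left _)

/-- Every definable set is coded below any given bound: `D` is coded by the pair `(P + 1, b')`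
where `P` is the product of the moduli `1 + (i + 1) b'` over the `i < b` in `D`. -/
theorem exists_code {D : M → Prop} (hD : Df True (fun v : ℕ → M => D (v 0))) (b : M) :
    ∃ c, ∀ x < b, ((ofInst M).MemRel x c ↔ D x) := by
  -- a common multiple of all numbers up to `b`, in place of a factorial
  obtain ⟨b', hb0, hb1, hb2⟩ : ∃ b', 0 < b' ∧ b ≤ b' ∧ ∀ d, 0 < d → d ≤ b → d ∣ b' := by
    refine pa_induction (P := fun b => ∃ b', 0 < b' ∧ b ≤ b' ∧ ∀ d, 0 < d → d ≤ b → d ∣ b')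
      inferInstance ?_ ?_ b
    · exact ⟨1, zero_lt_one, zero_le, fun d h1 h2 => absurd (h1.trans_le h2) (lt_irrefl _)⟩
    · rintro b ⟨b', h0, h1, h2⟩
      refine ⟨b' * (b + 1), by positivity,
        le_mul_of_one_le_left zero_le (one_le_of_pos h0), fun d hd hd' => ?_⟩
      rcases hd'.lt_or_eq with h | rfl
      · exact (h2 d hd ((PAM.lt_succ _ _).1 h)).mul_right _
      · exact Dvd.intro_left _ rfl
  have hm : ∀ x : M, 1 < 1 + (x + 1) * b' := fun x =>
    lt_add_of_pos_right _ (mul_pos (by positivity) hb0)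
  have hDk := fun k : ℕ => hD.subst (fun _ v => v k) fun i => .var k
  -- the product of the moduli with index in `D`, found by induction on a bound for the indices
  obtain ⟨P, hP⟩ : ∃ P, ∀ i < b, (1 + (i + 1) * b' ∣ P ↔ i < b ∧ D i) := by
    refine pa_induction
      (P := fun k => k ≤ b → ∃ P, ∀ i < b, (1 + (i + 1) * b' ∣ P ↔ i < k ∧ D i))
      inferInstance ?_ ?_ b le_rfl
    · refine fun _ => ⟨1, fun i hi => ⟨fun ⟨q, h⟩ => ?_, fun h => absurd h.1 (by simp)⟩⟩
      have hq : 1 ≤ q := one_le_of_pos (pos_iff_ne_zero.2 (by rintro rfl; simp at h))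
      exact absurd h (ne_of_lt ((hm i).trans_le (le_mul_of_one_le_right zero_le hq)))
    · intro k ih hk
      have hk' : k < b := add_one_le.1 hk
      obtain ⟨P, hP⟩ := ih hk'.le
      by_cases hDk : D k
      · refine ⟨P * (1 + (k + 1) * b'), fun i hi => ⟨fun h => ?_, fun ⟨h, h'⟩ => ?_⟩⟩
        · rcases eq_or_ne i k with rfl | hik
          · exact ⟨(PAM.lt_succ _ _).2 le_rfl, hDk⟩
          · have := (hP i hi).1 (coprime_moduli hik (fun d h0 h1 => hb2 d h0
              (h1.elim (fun h => h.trans hi.le) fun h => h.trans hk'.le)) h)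
            exact ⟨this.1.trans ((PAM.lt_succ _ _).2 le_rfl), this.2⟩
        · rcases ((PAM.lt_succ _ _).1 h).lt_or_eq with h | rfl
          · exact ((hP i hi).2 ⟨h, h'⟩).mul_right _
          · exact Dvd.intro_left _ rfl
      · refine ⟨P, fun i hi => (hP i hi).trans ⟨fun ⟨h, h'⟩ =>
          ⟨h.trans ((PAM.lt_succ _ _).2 le_rfl), h'⟩, fun ⟨h, h'⟩ => ⟨?_, h'⟩⟩⟩
        rcases ((PAM.lt_succ _ _).1 h).lt_or_eq with h | rfl
        · exact h
        · exact absurd h' hDk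
  obtain ⟨c, hc⟩ := exists_pairRel (P + 1) b'
  refine ⟨c, fun x hx => ?_⟩
  have hxD : D x ↔ 1 + (x + 1) * b' ∣ P := by rw [hP x hx]; simp [hx]
  rw [hxD, memRel_iff]
  constructor
  · rintro ⟨-, a, b₁, hab, -, -, q, hq⟩
    obtain ⟨rfl, rfl⟩ := pairRel_inj hc hab
    exact ⟨q, by rw [add_right_cancel hq, mul_comm]⟩
  · rintro ⟨q, hq⟩
    exact ⟨hx.trans_le (hb1.trans (pairRel_right_le hc)), _, _, hc, hm x, hm x, q,
      by rw [hq, mul_comm]⟩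

end Coding

/-- Finite sets of natural numbers are coded by natural numbers. -/
theorem exists_nat_code (D : ℕ → Prop) (b : ℕ) :
    ∃ c, ∀ x < b, (natStr.MemRel x c ↔ D x) := by
  have : Df True (fun v : ℕ → ℕ => v 0 < b ∧ D (v 0)) := by
    induction b with
    | zero => exact Df.congr (inferInstance : Df True fun _ => False) fun v => by simp
    | succ b ih =>
      refine Df.congr (inferInstance :
        Df True (fun v : ℕ → ℕ => (v 0 < b ∧ D (v 0)) ∨ (v 0 = b ∧ D b))) fun v => ?_
      constructor
      · rintro ⟨h1, h2⟩
        rcases (Nat.lt_succ_iff.1 h1).lt_or_eq with h | h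
        · exact .inl ⟨h, h2⟩
        · exact .inr ⟨h, h ▸ h2⟩
      · rintro (⟨h1, h2⟩ | ⟨h1, h2⟩)
        · exact ⟨by omega, h2⟩
        · exact ⟨by omega, h1 ▸ h2⟩
  obtain ⟨c, hc⟩ := exists_code (D := fun x => x < b ∧ D x) this b
  exact ⟨c, fun x hx => (hc x hx).trans (by simp [hx])⟩

/-! ### Relative computability -/

section Computability

theorem recursiveIn_of_partrec {O f : ℕ →. ℕ} (hf : Nat.Partrec f) : RecursiveIn O f := by
  induction hf with
  | zero => exact .zero
  | succ => exact .succ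
  | left => exact .left
  | right => exact .right
  | pair _ _ h1 h2 => exact .pair h1 h2
  | comp _ _ h1 h2 => exact .comp h1 h2
  | prec _ _ h1 h2 => exact .prec h1 h2
  | rfind _ h1 => exact .rfind h1

theorem recursiveIn_of_computable {O : ℕ →. ℕ} {f : ℕ → ℕ} (hf : Computable f) :
    RecursiveIn O (fun n => Part.some (f n)) :=
  recursiveIn_of_partrec (Partrec.nat_iff.1 hf)

/-- The characteristic function as a total function. -/
noncomputable def chi01 (A : Set ℕ) (n : ℕ) : ℕ := @ite _ (n ∈ A) (Classical.propDecidable _) 1 0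

theorem chi_eq (A : Set ℕ) : chi A = fun n => Part.some (chi01 A n) := rfl

theorem chi01_eq_one {A : Set ℕ} {n : ℕ} : chi01 A n = 1 ↔ n ∈ A := by
  unfold chi01; split_ifs with h <;> simp [h]

theorem chi01_eq_zero {A : Set ℕ} {n : ℕ} : chi01 A n = 0 ↔ n ∉ A := by
  unfold chi01; split_ifs with h <;> simp [h]

theorem chi01_of_mem {A : Set ℕ} {n : ℕ} (h : n ∈ A) : chi01 A n = 1 := chi01_eq_one.2 h
theorem chi01_of_not_mem {A : Set ℕ} {n : ℕ} (h : n ∉ A) : chi01 A n = 0 := chi01_eq_zero.2 h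

/-- `B` is computable from `A` if a computable function decides `n ∈ B` from `n` and one bit
`g n ∈ A`. -/
theorem turingLe_of_query {A B : Set ℕ} {g h : ℕ → ℕ} (hg : Computable g) (hh : Computable h)
    (e : ∀ n, chi01 B n = h (Nat.pair n (chi01 A (g n)))) : TuringLe B A := by
  have h1 : RecursiveIn (chi A) (fun n => Part.some (chi01 A (g n))) := by
    have := RecursiveIn.comp (O := chi A) .oracle (recursiveIn_of_computable hg)
    simpa [chi_eq] using this
  have h2 : RecursiveIn (chi A) (fun n => Part.some (Nat.pair n (chi01 A (g n)))) := by
    have := RecursiveIn.pair (recursiveIn_of_computable Computable.id) h1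
    simpa [Seq.seq] using this
  have h3 := RecursiveIn.comp (recursiveIn_of_computable (O := chi A) hh) h2
  unfold TuringLe
  rw [chi_eq B]
  simpa [← e] using h3

theorem turingLe_preimage {A : Set ℕ} {g : ℕ → ℕ} (hg : Computable g) :
    TuringLe {n | g n ∈ A} A := by
  refine turingLe_of_query (h := fun p => p.unpair.2) hg
    (Primrec.snd.comp Primrec.unpair).to_comp fun n => ?_
  simp only [Nat.unpair_pair]; rfl

theorem turingLe_of_primrec {A P : Set ℕ} (hP : PrimrecPred fun n => n ∈ P) : TuringLe P A := by
  obtain ⟨_, hP⟩ := hP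
  refine turingLe_of_query (h := fun p => bif decide (p.unpair.1 ∈ P) then 1 else 0)
    Computable.id ?_ fun n => ?_
  · exact (Primrec.cond (hP.comp (Primrec.fst.comp Primrec.unpair)) (Primrec.const 1)
      (Primrec.const 0)).to_comp
  · by_cases h : n ∈ P <;> simp [h, chi01_of_mem, chi01_of_not_mem]

/-- Bounded universal quantification is computable. -/
theorem turingLe_forall_lt {P : Set ℕ} {u : ℕ → ℕ} (hu : Primrec u) :
    TuringLe {a | ∀ k < u a, Nat.pair a k ∈ P} P := by
  set Q : Set ℕ := {p | p.unpair.2 < u p.unpair.1 ∧ p ∈ P} with hQ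
  have u1 := Primrec.fst.comp Primrec.unpair
  have u2 := Primrec.snd.comp Primrec.unpair
  have hQr : RecursiveIn (chi P) (chi Q) := by
    refine turingLe_of_query (h := fun p =>
      bif decide (p.unpair.1.unpair.2 < u p.unpair.1.unpair.1) then p.unpair.2 else 0)
      Computable.id ?_ fun n => ?_
    · exact (Primrec.cond (Primrec.nat_lt.decide.comp (u2.comp u1) (hu.comp (u1.comp u1))) u2
        (Primrec.const 0)).to_comp
    · by_cases h : n.unpair.2 < u n.unpair.1
      · by_cases h' : n ∈ P
        · rw [chi01_of_mem (show n ∈ Q from ⟨h, h'⟩)]; simp [h, chi01_of_mem h']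
        · rw [chi01_of_not_mem (show n ∉ Q from fun hc => h' hc.2)]
          simp [h, chi01_of_not_mem h']
      · rw [chi01_of_not_mem (show n ∉ Q from fun hc => h hc.1)]; simp [h]
  have h2 := RecursiveIn.rfind hQr
  have h3 := RecursiveIn.pair (recursiveIn_of_computable (O := chi P) Computable.id) h2
  have hh : Primrec fun p : ℕ => bif decide (u p.unpair.1 ≤ p.unpair.2) then 1 else 0 :=
    Primrec.cond (Primrec.nat_le.decide.comp (hu.comp u1) u2) (Primrec.const 1) (Primrec.const 0)
  have h4 := RecursiveIn.comp (recursiveIn_of_computable (O := chi P) hh.to_comp) h3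
  unfold TuringLe
  refine (congrArg (RecursiveIn (chi P)) (funext fun a => ?_)).mpr h4
  -- the search stops at `u a` at the latest
  obtain ⟨r, hr⟩ : ∃ r, r ∈ Nat.rfind fun n => (fun m => decide (m = 0)) <$> chi Q (Nat.pair a n) := by
    have : (Nat.rfind fun n => (fun m => decide (m = 0)) <$> chi Q (Nat.pair a n)).Dom := by
      refine Nat.rfind_dom.2 ⟨u a, ?_, fun {m} _ => by simp [chi_eq]⟩
      simp [chi_eq, chi01_eq_zero, hQ]
    exact ⟨_, Part.get_mem this⟩
  obtain ⟨hr1, hr2⟩ := Nat.mem_rfind.1 hr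
  simp only [chi_eq, Part.map_eq_map, Part.map_some, Part.mem_some_iff] at hr1 hr2
  have hr1 : Nat.pair a r ∉ Q := by simpa [chi01_eq_zero] using hr1.symm
  have hr2 : ∀ m < r, Nat.pair a m ∈ Q := fun m hm => by
    have := hr2 hm
    by_contra hc
    simp [chi01_of_not_mem hc] at this
  rw [Part.eq_some_iff.2 hr]
  have key : a ∈ {a | ∀ k < u a, Nat.pair a k ∈ P} ↔ u a ≤ r := by
    constructor
    · intro h
      by_contra hc
      exact hr1 ⟨by simpa using hc, h _ (not_le.1 hc)⟩
    · intro h k hk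
      exact (hr2 k (hk.trans_le h)).2
  by_cases hc : u a ≤ r
  · simp [chi_eq, Seq.seq, chi01_of_mem (key.2 hc), hc]
  · simp [chi_eq, Seq.seq, chi01_of_not_mem (mt key.1 hc), hc]

theorem primrecPred_exists_lt {α : Type} [Primcodable α] {P : α → ℕ → Prop}
    (hP : PrimrecPred fun p : α × ℕ => P p.1 p.2) {u : α → ℕ} (hu : Primrec u) :
    PrimrecPred fun a => ∃ x < u a, P a x := by
  have : PrimrecRel fun (n : ℕ) (a : α) => P a n := hP.comp (Primrec.pair Primrec.snd Primrec.fst)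
  exact (PrimrecRel.comp this.exists_mem_list (Primrec.list_range.comp hu) Primrec.id).of_eq
    fun a => by simp

theorem primrecPred_forall_lt {α : Type} [Primcodable α] {P : α → ℕ → Prop}
    (hP : PrimrecPred fun p : α × ℕ => P p.1 p.2) {u : α → ℕ} (hu : Primrec u) :
    PrimrecPred fun a => ∀ x < u a, P a x := by
  have : PrimrecRel fun (n : ℕ) (a : α) => P a n := hP.comp (Primrec.pair Primrec.snd Primrec.fst)
  exact (PrimrecRel.comp this.forall_mem_list (Primrec.list_range.comp hu) Primrec.id).of_eq
    fun a => by simp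

theorem natMem_iff {x y : ℕ} : natStr.MemRel x y ↔ x < y ∧ ∃ a < y + 1, ∃ b < y + 1,
    2 * y = (a + b) * (a + b + 1) + 2 * a ∧ 1 < 1 + (x + 1) * b ∧
      a % (1 + (x + 1) * b) = 1 := by
  change (ofInst ℕ).MemRel x y ↔ _
  rw [memRel_iff]
  refine and_congr_right fun _ => ⟨?_, ?_⟩
  · rintro ⟨a, b, h, h1, -, q, hq⟩
    refine ⟨a, Nat.lt_succ_iff.2 (pairRel_left_le h), b, Nat.lt_succ_iff.2 (pairRel_right_le h),
      pairRel_iff.1 h, h1, ?_⟩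
    rw [hq, add_comm, Nat.add_mul_mod_self_right, Nat.mod_eq_of_lt h1]
  · rintro ⟨a, -, b, -, h, h1, h2⟩
    refine ⟨a, b, pairRel_iff.2 h, h1, h1, a / (1 + (x + 1) * b), ?_⟩
    have := Nat.div_add_mod a (1 + (x + 1) * b)
    rw [h2, mul_comm] at this
    exact this.symm

/-- The membership relation on `ℕ` is primitive recursive. -/
theorem primrec_natMem : PrimrecRel fun x y : ℕ => natStr.MemRel x y := by
  have : PrimrecPred fun p : ℕ × ℕ => p.1 < p.2 ∧ ∃ a < p.2 + 1, ∃ b < p.2 + 1,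
      2 * p.2 = (a + b) * (a + b + 1) + 2 * a ∧ 1 < 1 + (p.1 + 1) * b ∧
        a % (1 + (p.1 + 1) * b) = 1 := by
    refine (Primrec.nat_lt.comp Primrec.fst Primrec.snd).and
      (primrecPred_exists_lt ?_ (Primrec.succ.comp Primrec.snd))
    refine primrecPred_exists_lt ?_ (Primrec.succ.comp (Primrec.snd.comp Primrec.fst))
    have hx : Primrec fun q : ((ℕ × ℕ) × ℕ) × ℕ => q.1.1.1 :=
      Primrec.fst.comp (Primrec.fst.comp Primrec.fst)
    have hy : Primrec fun q : ((ℕ × ℕ) × ℕ) × ℕ => q.1.1.2 :=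
      Primrec.snd.comp (Primrec.fst.comp Primrec.fst)
    have ha : Primrec fun q : ((ℕ × ℕ) × ℕ) × ℕ => q.1.2 := Primrec.snd.comp Primrec.fst
    have hb : Primrec fun q : ((ℕ × ℕ) × ℕ) × ℕ => q.2 := Primrec.snd
    have hab := Primrec.nat_add.comp ha hb
    have hm := Primrec.nat_add.comp (Primrec.const 1)
      (Primrec.nat_mul.comp (Primrec.succ.comp hx) hb)
    refine PrimrecPred.and ?_ (PrimrecPred.and ?_ ?_)
    · exact Primrec.eq.comp (Primrec.nat_mul.comp (Primrec.const 2) hy)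
        (Primrec.nat_add.comp (Primrec.nat_mul.comp hab (Primrec.succ.comp hab))
          (Primrec.nat_mul.comp (Primrec.const 2) ha))
    · exact Primrec.nat_lt.comp (Primrec.const 1) hm
    · exact Primrec.eq.comp (Primrec.nat_mod.comp ha hm) (Primrec.const 1)
  exact this.of_eq fun p => natMem_iff.symm

open Classical in
/-- The list of the first `n` bits of the finite set coded by `c`. -/
noncomputable def bits (c n : ℕ) : List Bool :=
  (List.range n).map fun k => decide (natStr.MemRel k c)

theorem length_bits (c n : ℕ) : (bits c n).length = n := by simp [bits]

theorem getD_bits {c n k : ℕ} (h : k < n) :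
    (bits c n).getD k false = true ↔ natStr.MemRel k c := by
  simp [bits, List.getD, h]

theorem primrec_bits : Primrec₂ bits := by
  classical
  obtain ⟨_, h⟩ := primrec_natMem
  refine (Primrec.list_map (Primrec.list_range.comp Primrec.snd)
    (g := fun (p : ℕ × ℕ) k => decide (natStr.MemRel k p.1)) ?_).of_eq fun p => ?_
  · exact (h.comp (Primrec.pair Primrec.snd (Primrec.fst.comp Primrec.fst))).of_eq
      fun p => by simp
  · simp only [bits]

/-- The bit string with a given number. -/
def dec (n : ℕ) : List Bool := (Encodable.decode n : Option (List Bool)).getD []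

theorem dec_encode (l : List Bool) : dec (Encodable.encode l) = l := by simp [dec]

theorem primrec_dec : Primrec dec := by
  exact Primrec.option_getD.comp Primrec.decode (Primrec.const [])

theorem exists_strCode (l : List Bool) :
    ∃ c, ∀ k < l.length, (natStr.MemRel k c ↔ l.getD k false = true) :=
  exists_nat_code _ _

/-- A code of the finite set with characteristic sequence `l`, found by search. -/
theorem exists_computable_code : ∃ c : List Bool → ℕ, Computable c ∧
    ∀ l, ∀ k < l.length, (natStr.MemRel k (c l) ↔ l.getD k false = true) := by
  classical
  have h : PrimrecPred fun p : List Bool × ℕ =>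
      ∀ k < p.1.length, (natStr.MemRel k p.2 ↔ p.1.getD k false = true) := by
    refine primrecPred_forall_lt ?_ (Primrec.list_length.comp Primrec.fst)
    have h1 : PrimrecPred fun p : (List Bool × ℕ) × ℕ => natStr.MemRel p.2 p.1.2 :=
      primrec_natMem.comp Primrec.snd (Primrec.snd.comp Primrec.fst)
    have h2 : PrimrecPred fun p : (List Bool × ℕ) × ℕ => p.1.1.getD p.2 false = true :=
      Primrec.eq.comp ((Primrec.list_getD false).comp (Primrec.fst.comp Primrec.fst) Primrec.snd)
        (Primrec.const true)
    exact ((h1.and h2).or (h1.not.and h2.not)).of_eq fun p => by tauto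
  obtain ⟨_, h⟩ := h
  refine ⟨fun l => Nat.find (exists_strCode l), ?_, fun l => Nat.find_spec (exists_strCode l)⟩
  have h' : Partrec₂ (fun (l : List Bool) => ((fun c : ℕ => decide
      (∀ k < l.length, (natStr.MemRel k c ↔ l.getD k false = true)) : ℕ → Bool) : ℕ →. Bool)) :=
    (h.to_comp.of_eq fun p => by congr)
  refine (Partrec.rfind h').of_eq_tot fun l => ?_
  rw [Nat.mem_rfind]
  constructor
  · have := Nat.find_spec (exists_strCode l)
    simpa using this
  · intro m hm
    have := Nat.find_min (exists_strCode l) hm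
    simpa using this

end Computability

/-! ### Relations on `ℕ` that lift to definable relations on a model -/

section Lifting

variable (M : Type) [PAM M]

/-- Functions on `ℕ` that are the restriction of a term, with parameters, of the model `M`. -/
class LTm (f : (ℕ → ℕ) → ℕ) : Prop where
  out : ∃ g : (ℕ → M) → M, Tm True g ∧ ∀ v : ℕ → ℕ, g (fun i => (v i : M)) = (f v : M)

/-- Relations on `ℕ` that are the trace of a relation definable with parameters on the
model `M`.  They are closed under Boolean operations and bounded quantification. -/
class LDf (P : (ℕ → ℕ) → Prop) : Prop where
  out : ∃ Q : (ℕ → M) → Prop, Df True Q ∧ ∀ v : ℕ → ℕ, Q (fun i => (v i : M)) ↔ P v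

variable {M}

instance (k : ℕ) : LTm M (fun v => v k) := ⟨_, .var k, fun _ => rfl⟩
instance (priority := low) (n : ℕ) : LTm M (fun _ => n) := ⟨_, .const trivial (n : M), fun _ => rfl⟩

theorem LDf.congr {P Q : (ℕ → ℕ) → Prop} [hP : LDf M P] (e : ∀ v, Q v ↔ P v) : LDf M Q := by
  obtain ⟨R, hR, eR⟩ := hP
  exact ⟨R, hR, fun v => (eR v).trans (e v).symm⟩

section

variable {f g : (ℕ → ℕ) → ℕ} [hf : LTm M f] [hg : LTm M g] {P Q : (ℕ → ℕ) → Prop}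
  [hP : LDf M P] [hQ : LDf M Q]

include hf hg

instance : LTm M (fun v => f v + g v) := by
  obtain ⟨F, hF, eF⟩ := hf
  obtain ⟨G, hG, eG⟩ := hg
  exact ⟨_, .add hF hG, fun v => by simp [eF, eG]⟩

instance : LTm M (fun v => f v * g v) := by
  obtain ⟨F, hF, eF⟩ := hf
  obtain ⟨G, hG, eG⟩ := hg
  exact ⟨_, .mul hF hG, fun v => by simp [eF, eG]⟩

instance : LDf M (fun v => f v = g v) := by
  obtain ⟨F, hF, eF⟩ := hf
  obtain ⟨G, hG, eG⟩ := hg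
  exact ⟨_, .eq hF hG, fun v => by simp [eF, eG]⟩

instance : LDf M (fun v => f v < g v) := by
  obtain ⟨F, hF, eF⟩ := hf
  obtain ⟨G, hG, eG⟩ := hg
  exact ⟨_, .lt hF hG, fun v => by simp [eF, eG]⟩

instance : LDf M (fun v => natStr.MemRel (f v) (g v)) := by
  obtain ⟨F, hF, eF⟩ := hf
  obtain ⟨G, hG, eG⟩ := hg
  exact ⟨fun v => (ofInst M).MemRel (F v) (G v), inferInstance, fun v => by
    simp only [eF, eG]; exact memRel_cast⟩

omit hf hg
include hP

instance : LDf M (fun v => ¬ P v) := by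
  obtain ⟨R, hR, eR⟩ := hP
  exact ⟨_, .not hR, fun v => by simp only [eR]⟩

include hQ

instance : LDf M (fun v => P v ∧ Q v) := by
  obtain ⟨R, hR, eR⟩ := hP
  obtain ⟨S, hS, eS⟩ := hQ
  exact ⟨fun v => R v ∧ S v, inferInstance, fun v => by simp only [eR, eS]⟩

instance : LDf M (fun v => P v ∨ Q v) := by
  obtain ⟨R, hR, eR⟩ := hP
  obtain ⟨S, hS, eS⟩ := hQ
  exact ⟨fun v => R v ∨ S v, inferInstance, fun v => by simp only [eR, eS]⟩

instance : LDf M (fun v => P v → Q v) := by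
  obtain ⟨R, hR, eR⟩ := hP
  obtain ⟨S, hS, eS⟩ := hQ
  exact ⟨fun v => R v → S v, inferInstance, fun v => by simp only [eR, eS]⟩

end

theorem LDf.subst {P : (ℕ → ℕ) → Prop} (hP : LDf M P) (σ : ℕ → (ℕ → ℕ) → ℕ)
    (hσ : ∀ i, LTm M (σ i)) : LDf M (fun v => P (fun i => σ i v)) := by
  obtain ⟨R, hR, eR⟩ := hP
  choose τ hτ eτ using fun i => (hσ i).out
  exact ⟨_, hR.subst τ hτ, fun v => by simp only [eτ]; exact eR _⟩

theorem LDf.sub3 {R : ℕ → ℕ → ℕ → Prop} (h : LDf M (fun v => R (v 0) (v 1) (v 2)))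
    {f g k : (ℕ → ℕ) → ℕ} (hf : LTm M f) (hg : LTm M g) (hk : LTm M k) :
    LDf M (fun v => R (f v) (g v) (k v)) :=
  h.subst (fun | 0 => f | 1 => g | _ => k) fun | 0 => hf | 1 => hg | _ + 2 => hk

section

variable {f g k : (ℕ → ℕ) → ℕ} {P : ℕ → (ℕ → ℕ) → Prop} [hf : LTm M f] [hg : LTm M g]
  [hk : LTm M k] [hP : LDf M (fun v => P (v 0) (fun i => v (i + 1)))]

include hf hP

instance : LDf M (fun v => ∃ x, x < f v ∧ P x v) := by
  obtain ⟨F, hF, eF⟩ := hf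
  obtain ⟨R, hR, eR⟩ := hP
  refine ⟨fun v => ∃ x, x < F v ∧ R (fun i => Nat.casesOn i x v), ?_, fun v => ?_⟩
  · have h1 : Df True (fun v : ℕ → M => v 0 < F (fun i => v (i + 1))) :=
      .lt (.var 0) (hF.subst (fun i v => v (i + 1)) fun i => .var _)
    have h2 : Df True (fun v : ℕ → M => R (fun i => Nat.casesOn i (v 0) fun i => v (i + 1))) := by
      refine Df.congr hR fun v => iff_of_eq (congrArg R (funext ?_))
      rintro (_ | i) <;> rfl
    infer_instance
  · have key : ∀ x : ℕ, R (fun i => Nat.casesOn i (x : M) fun i => (v i : M)) ↔ P x v := by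
      intro x
      refine Iff.trans ?_ (eR (fun i => Nat.casesOn i x v))
      refine iff_of_eq (congrArg R (funext ?_))
      rintro (_ | i) <;> rfl
    constructor
    · rintro ⟨x, hx, h⟩
      rw [eF] at hx
      obtain ⟨x, hx', rfl⟩ := lt_cast hx
      exact ⟨x, hx', (key x).1 h⟩
    · rintro ⟨x, hx, h⟩
      exact ⟨x, by rw [eF]; exact Nat.cast_lt.2 hx, (key x).2 h⟩

instance : LDf M (fun v => ∀ x, x < f v → P x v) :=
  LDf.congr (P := fun v => ¬ ∃ x, x < f v ∧ ¬ P x v) fun v => by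
    push Not; exact Iff.rfl

instance : LDf M (fun v => ∃ x, x ≤ f v ∧ P x v) :=
  LDf.congr (P := fun v => ∃ x, x < f v + 1 ∧ P x v) fun v => by
    simp only [Nat.lt_succ_iff]

instance : LDf M (fun v => ∀ x, x ≤ f v → P x v) :=
  LDf.congr (P := fun v => ∀ x, x < f v + 1 → P x v) fun v => by
    simp only [Nat.lt_succ_iff]

omit hP
include hg hk

instance : LDf M (fun v => Nat.pair (f v) (g v) = k v) :=
  LDf.congr (P := fun v => (f v < g v ∧ k v = g v * g v + f v) ∨
    (¬ f v < g v ∧ k v = f v * f v + f v + g v)) fun v => by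
      unfold Nat.pair
      split_ifs with h <;> simp [h, eq_comm]

end

open Filter

/-- A partial function whose graph is exhausted by stages: the stages `R s` are contained in the
graph and uniformly liftable to `M`, and each point of the graph lies in all late enough stages. -/
def Approx (M : Type) [PAM M] (f : ℕ →. ℕ) : Prop :=
  ∃ R : ℕ → ℕ → ℕ → Prop, LDf M (fun v => R (v 0) (v 1) (v 2)) ∧
    (∀ s x y, R s x y → y ∈ f x) ∧ ∀ x y, y ∈ f x → ∀ᶠ s in atTop, R s x y

/-- A value of a primitive recursion is found at stage `s` if `s` bounds the code of a finite
set of pairs `(i, z)` which proves, by stage `s`, all of its members to be values. -/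
theorem Approx.prec {f g : ℕ →. ℕ} (hf : Approx M f) (hg : Approx M g) :
    Approx M (Nat.unpaired fun a n =>
      n.rec (f a) fun y IH => do let i ← IH; g (Nat.pair a (Nat.pair y i))) := by
  obtain ⟨F, hF, sF, cF⟩ := hf
  obtain ⟨G, hG, sG, cG⟩ := hg
  -- `Val c b i z`: the finite set coded by `c`, cut off at `b`, contains the pair `(i, z)`
  set Val : ℕ → ℕ → ℕ → ℕ → Prop := fun c b i z =>
    ∃ p, p < b ∧ Nat.pair i z = p ∧ natStr.MemRel p c with hVal
  have iF : ∀ {f g k : (ℕ → ℕ) → ℕ} [LTm M f] [LTm M g] [LTm M k],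
    LDf M (fun v => F (f v) (g v) (k v)) := fun {_ _ _} h1 h2 h3 => hF.sub3 h1 h2 h3
  have iG : ∀ {f g k : (ℕ → ℕ) → ℕ} [LTm M f] [LTm M g] [LTm M k],
    LDf M (fun v => G (f v) (g v) (k v)) := fun {_ _ _} h1 h2 h3 => hG.sub3 h1 h2 h3
  refine ⟨fun s x y => ∃ a, a ≤ x ∧ ∃ k, k ≤ x ∧ Nat.pair a k = x ∧ ∃ c, c ≤ s ∧ ∃ b, b ≤ s ∧
    Val c b k y ∧ ∀ i, i ≤ k → ∀ z, z ≤ s → Val c b i z → (i = 0 ∧ F s a z) ∨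
      ∃ j, j ≤ k ∧ i = j + 1 ∧ ∃ z', z' ≤ s ∧ Val c b j z' ∧ ∃ q, q ≤ s ∧ Nat.pair j z' = q ∧
        ∃ r, r ≤ s ∧ Nat.pair a q = r ∧ G s r z, ?_, ?_, ?_⟩
  · simp only [hVal]
    infer_instance
  · rintro s x y ⟨a, -, k, -, rfl, c, -, b, hb, hy, h⟩
    simp only [Nat.unpaired, Nat.unpair_pair]
    have key : ∀ i ≤ k, ∀ z, Val c b i z →
        z ∈ (Nat.rec (f a) (fun y IH => IH.bind fun i => g (Nat.pair a (Nat.pair y i))) i :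
          Part ℕ) := by
      intro i
      induction i with
      | zero =>
        intro hi z hz
        have hzs : z ≤ s := by
          obtain ⟨p, hp, e, -⟩ := hz
          have := Nat.right_le_pair 0 z
          omega
        rcases h 0 hi z hzs hz with ⟨-, h⟩ | ⟨j, -, h, -⟩
        · exact sF _ _ _ h
        · omega
      | succ i ih =>
        intro hi z hz
        have hzs : z ≤ s := by
          obtain ⟨p, hp, e, -⟩ := hz
          have := Nat.right_le_pair (i + 1) z
          omega
        rcases h _ hi z hzs hz with ⟨h, -⟩ | ⟨j, -, h, z', hz', hv, q, -, rfl, r, -, rfl, hG⟩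
        · omega
        · obtain rfl : i = j := by omega
          exact Part.mem_bind (ih (by omega) z' hv) (sG _ _ _ hG)
    exact key k le_rfl y hy
  · intro x y hy
    obtain ⟨a, k, rfl⟩ : ∃ a k, x = Nat.pair a k := ⟨_, _, (Nat.pair_unpair x).symm⟩
    simp only [Nat.unpaired, Nat.unpair_pair] at hy
    set rc : ℕ → Part ℕ := fun i =>
      Nat.rec (f a) (fun y IH => IH.bind fun i => g (Nat.pair a (Nat.pair y i))) i with hrc
    have hy : y ∈ rc k := hy
    -- the sequence of intermediate values of the recursion
    obtain ⟨H, hHk, hH⟩ : ∃ H : ℕ → ℕ, H k = y ∧ H 0 ∈ f a ∧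
        ∀ i < k, H (i + 1) ∈ g (Nat.pair a (Nat.pair i (H i))) := by
      have : ∀ k y, y ∈ (Nat.rec (f a) (fun y IH => IH.bind fun i =>
          g (Nat.pair a (Nat.pair y i))) k : Part ℕ) → ∃ H : ℕ → ℕ, H k = y ∧ H 0 ∈ f a ∧
          ∀ i < k, H (i + 1) ∈ g (Nat.pair a (Nat.pair i (H i))) := by
        intro k
        induction k with
        | zero => exact fun y hy => ⟨fun _ => y, rfl, hy, by simp⟩
        | succ k ih =>
          intro y hy
          obtain ⟨z, hz, hy⟩ := Part.mem_bind_iff.1 hy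
          obtain ⟨H, h1, h2, h3⟩ := ih z hz
          refine ⟨update H (k + 1) y, by simp, by simpa using h2, fun i hi => ?_⟩
          rcases Nat.lt_succ_iff_lt_or_eq.1 hi with hi | rfl
          · rw [update_of_ne (by omega), update_of_ne (by omega)]
            exact h3 i hi
          · rw [update_self, update_of_ne (by omega), h1]
            exact hy
      exact this k y hy
    set b := ((Finset.range (k + 1)).sup fun i => Nat.pair i (H i)) + 1 with hb
    have hbi : ∀ i ≤ k, Nat.pair i (H i) < b := fun i hi => by
      have := Finset.le_sup (f := fun i => Nat.pair i (H i))
        (Finset.mem_range.2 (show i < k + 1 by omega))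
      omega
    obtain ⟨c, hc⟩ := exists_nat_code (fun p => p.unpair.2 = H p.unpair.1) b
    have hV : ∀ {i z}, i ≤ k → (Val c b i z ↔ z = H i) := by
      intro i z hi
      constructor
      · rintro ⟨p, hp, rfl, h⟩
        simpa using (hc _ hp).1 h
      · rintro rfl
        exact ⟨_, hbi i hi, rfl, (hc _ (hbi i hi)).2 (by simp)⟩
    have e1 : ∀ᶠ s in atTop, ∀ i ∈ Finset.range k,
        G s (Nat.pair a (Nat.pair i (H i))) (H (i + 1)) ∧ Nat.pair a (Nat.pair i (H i)) ≤ s := by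
      refine (Filter.eventually_all_finset _).2 fun i hi => ?_
      exact (cG _ _ (hH.2 i (Finset.mem_range.1 hi))).and (eventually_ge_atTop _)
    filter_upwards [cF _ _ hH.1, e1, eventually_ge_atTop c, eventually_ge_atTop b]
      with s h1 h2 h3 h4
    refine ⟨a, Nat.left_le_pair _ _, k, Nat.right_le_pair _ _, rfl, c, h3, b, h4,
      (hV le_rfl).2 hHk.symm, fun i hi z hz hv => ?_⟩
    obtain rfl := (hV hi).1 hv
    rcases i with _ | i
    · exact .inl ⟨rfl, h1⟩
    · obtain ⟨h5, h6⟩ := h2 i (Finset.mem_range.2 hi)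
      have h7 := hbi i (by omega)
      exact .inr ⟨i, by omega, rfl, H i, by have := Nat.right_le_pair i (H i); omega,
        (hV (by omega)).2 rfl, _, by omega, rfl, _, h6, rfl, h5⟩

/-- Functions recursive in a set that lifts to the model are approximable. -/
theorem approx_of_recursiveIn {A : Set ℕ} [hA : ∀ k, LDf M (fun v => v k ∈ A)] {f : ℕ →. ℕ}
    (h : RecursiveIn (chi A) f) : Approx M f := by
  induction h with
  | oracle =>
    refine ⟨fun s x y => (y = 1 ∧ x ∈ A) ∨ (y = 0 ∧ ¬ x ∈ A), inferInstance, ?_, ?_⟩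
    · rintro s x y (⟨rfl, h⟩ | ⟨rfl, h⟩)
      · simp [chi_eq, chi01_of_mem h]
      · simp [chi_eq, chi01_of_not_mem h]
    · refine fun x y h => Eventually.of_forall fun s => ?_
      by_cases hx : x ∈ A
      · exact .inl ⟨by simpa [chi_eq, chi01_of_mem hx] using h, hx⟩
      · exact .inr ⟨by simpa [chi_eq, chi01_of_not_mem hx] using h, hx⟩
  | zero => exact ⟨fun s x y => y = 0, inferInstance, fun s x y h => by simp [h, pure, PFun.pure],
      fun x y h => Eventually.of_forall fun s => by simpa [pure, PFun.pure] using h⟩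
  | succ => exact ⟨fun s x y => y = x + 1, inferInstance, fun s x y h => by simp [h],
      fun x y h => Eventually.of_forall fun s => by simpa using h⟩
  | left =>
    refine ⟨fun s x y => ∃ b, b ≤ x ∧ Nat.pair y b = x, inferInstance, ?_, ?_⟩
    · rintro s x y ⟨b, -, rfl⟩
      simp
    · refine fun x y h => Eventually.of_forall fun s => ⟨x.unpair.2, Nat.unpair_right_le x, ?_⟩
      obtain rfl : y = x.unpair.1 := by simpa using h
      simp
  | right =>
    refine ⟨fun s x y => ∃ b, b ≤ x ∧ Nat.pair b y = x, inferInstance, ?_, ?_⟩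
    · rintro s x y ⟨b, -, rfl⟩
      simp
    · refine fun x y h => Eventually.of_forall fun s => ⟨x.unpair.1, Nat.unpair_left_le x, ?_⟩
      obtain rfl : y = x.unpair.2 := by simpa using h
      simp
  | pair _ _ hf hg =>
    obtain ⟨F, hF, sF, cF⟩ := hf
    obtain ⟨G, hG, sG, cG⟩ := hg
    have iF : ∀ {f g k : (ℕ → ℕ) → ℕ} [LTm M f] [LTm M g] [LTm M k],
      LDf M (fun v => F (f v) (g v) (k v)) := fun {_ _ _} h1 h2 h3 => hF.sub3 h1 h2 h3
    have iG : ∀ {f g k : (ℕ → ℕ) → ℕ} [LTm M f] [LTm M g] [LTm M k],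
      LDf M (fun v => G (f v) (g v) (k v)) := fun {_ _ _} h1 h2 h3 => hG.sub3 h1 h2 h3
    refine ⟨fun s x y => ∃ a, a ≤ y ∧ ∃ b, b ≤ y ∧ F s x a ∧ G s x b ∧ Nat.pair a b = y,
      inferInstance, ?_, ?_⟩
    · rintro s x y ⟨a, -, b, -, h1, h2, rfl⟩
      simp only [Seq.seq, Part.map_eq_map, Part.mem_bind_iff, Part.mem_map_iff]
      exact ⟨_, ⟨a, sF _ _ _ h1, rfl⟩, b, sG _ _ _ h2, rfl⟩
    · intro x y h
      simp only [Seq.seq, Part.map_eq_map, Part.mem_bind_iff, Part.mem_map_iff] at h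
      obtain ⟨_, ⟨a, h1, rfl⟩, b, h2, rfl⟩ := h
      filter_upwards [cF _ _ h1, cG _ _ h2] with s h3 h4
      exact ⟨a, Nat.left_le_pair _ _, b, Nat.right_le_pair _ _, h3, h4, rfl⟩
  | comp _ _ hf hg =>
    obtain ⟨F, hF, sF, cF⟩ := hf
    obtain ⟨G, hG, sG, cG⟩ := hg
    have iF : ∀ {f g k : (ℕ → ℕ) → ℕ} [LTm M f] [LTm M g] [LTm M k],
      LDf M (fun v => F (f v) (g v) (k v)) := fun {_ _ _} h1 h2 h3 => hF.sub3 h1 h2 h3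
    have iG : ∀ {f g k : (ℕ → ℕ) → ℕ} [LTm M f] [LTm M g] [LTm M k],
      LDf M (fun v => G (f v) (g v) (k v)) := fun {_ _ _} h1 h2 h3 => hG.sub3 h1 h2 h3
    refine ⟨fun s x y => ∃ z, z ≤ s ∧ G s x z ∧ F s z y, inferInstance, ?_, ?_⟩
    · rintro s x y ⟨z, -, h1, h2⟩
      exact Part.mem_bind (sG _ _ _ h1) (sF _ _ _ h2)
    · intro x y h
      obtain ⟨z, h1, h2⟩ := Part.mem_bind_iff.1 h
      filter_upwards [cG _ _ h1, cF _ _ h2, eventually_ge_atTop z] with s h3 h4 h5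
      exact ⟨z, h5, h3, h4⟩
  | prec _ _ hf hg => exact hf.prec hg
  | rfind _ hf =>
    obtain ⟨F, hF, sF, cF⟩ := hf
    have iF : ∀ {f g k : (ℕ → ℕ) → ℕ} [LTm M f] [LTm M g] [LTm M k],
      LDf M (fun v => F (f v) (g v) (k v)) := fun {_ _ _} h1 h2 h3 => hF.sub3 h1 h2 h3
    refine ⟨fun s x y => (∃ p, p ≤ s ∧ Nat.pair x y = p ∧ F s p 0) ∧
      ∀ i, i < y → ∃ z, z ≤ s ∧ ¬ z = 0 ∧ ∃ p, p ≤ s ∧ Nat.pair x i = p ∧ F s p z,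
      inferInstance, ?_, ?_⟩
    · rintro s x y ⟨⟨_, -, rfl, h⟩, h'⟩
      refine Nat.mem_rfind.2 ⟨?_, fun {m} hm => ?_⟩
      · exact (Part.mem_map_iff _).2 ⟨0, sF _ _ _ h, by simp⟩
      · obtain ⟨z, -, hz, _, -, rfl, h⟩ := h' m hm
        exact (Part.mem_map_iff _).2 ⟨z, sF _ _ _ h, by simpa using hz⟩
    · intro x y h
      obtain ⟨h1, h2⟩ := Nat.mem_rfind.1 h
      obtain ⟨z, h1, hz⟩ := (Part.mem_map_iff _).1 h1
      obtain rfl : z = 0 := by simpa using hz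
      have h3 : ∀ᶠ s in atTop, ∀ i ∈ Finset.range y,
          ∃ z, z ≤ s ∧ ¬ z = 0 ∧ ∃ p, p ≤ s ∧ Nat.pair x i = p ∧ F s p z := by
        refine (Filter.eventually_all_finset _).2 fun i hi => ?_
        obtain ⟨z, h2, hz⟩ := (Part.mem_map_iff _).1 (h2 (Finset.mem_range.1 hi))
        filter_upwards [cF _ _ h2, eventually_ge_atTop z, eventually_ge_atTop (Nat.pair x i)]
          with s h4 h5 h6
        exact ⟨z, h5, by simpa using hz, _, h6, rfl, h4⟩
      filter_upwards [cF _ _ h1, eventually_ge_atTop (Nat.pair x y), h3] with s h4 h5 h6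
      exact ⟨⟨_, h5, rfl, h4⟩, fun i hi => h6 i (Finset.mem_range.2 hi)⟩

end Lifting

/-! ### The standard system of a nonstandard model is a Scott set -/

section SSy

variable {M : Type} [PAM M]

theorem mem_ssy {A : Set ℕ} :
    A ∈ (ofInst M).SSy ↔ ∃ c, ∀ n : ℕ, n ∈ A ↔ (ofInst M).MemRel (n : M) c := by
  simp only [AStr.SSy, Set.mem_ofPred_eq, num_eq]

/-- The trace on `ℕ` of a definable set is coded. -/
theorem mem_ssy_of_def {w : M} (hw : ∀ n : ℕ, (n : M) < w) {D : M → Prop}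
    (hD : Df True fun v => D (v 0)) {A : Set ℕ} (hA : ∀ n : ℕ, n ∈ A ↔ D n) :
    A ∈ (ofInst M).SSy := by
  obtain ⟨c, hc⟩ := exists_code hD w
  exact mem_ssy.2 ⟨c, fun n => (hA n).trans (hc n (hw n)).symm⟩

/-- `n ∈ B` holds if, among the stages of an approximation to the characteristic function, some
stage with value `1` precedes all those with value `0`; the stages may be nonstandard, but at a
standard argument the right value appears at a standard stage. -/
theorem ssy_turing {w : M} (hw : ∀ n : ℕ, (n : M) < w) {A B : Set ℕ}
    (hA : A ∈ (ofInst M).SSy) (h : TuringLe B A) : B ∈ (ofInst M).SSy := by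
  obtain ⟨t, ht⟩ := mem_ssy.1 hA
  have : ∀ k, LDf M (fun v => v k ∈ A) := fun k =>
    ⟨fun v => (ofInst M).MemRel (v k) t, inferInstance, fun v => (ht _).symm⟩
  obtain ⟨R, ⟨Q, hQ, eQ⟩, sR, cR⟩ := approx_of_recursiveIn (M := M) h
  set F : M → M → M → Prop := fun s x y => Q fun | 0 => s | 1 => x | _ => y with hF
  have eF : ∀ s x y : ℕ, F s x y ↔ R s x y := fun s x y => by
    refine Iff.trans (iff_of_eq (congrArg Q (funext ?_))) (eQ fun | 0 => s | 1 => x | _ => y)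
    rintro (_ | _ | i) <;> rfl
  have hF3 : Df True (fun v : ℕ → M => F (v 0) (v 1) (v 2)) := by
    refine hQ.subst (fun | 0 => fun v => v 0 | 1 => fun v => v 1 | _ => fun v => v 2)
      (fun | 0 => .var 0 | 1 => .var 1 | _ + 2 => .var 2) |>.congr fun v => ?_
    refine iff_of_eq (congrArg Q (funext ?_))
    rintro (_ | _ | i) <;> rfl
  have iF : ∀ {f g k : (ℕ → M) → M} [Tm True f] [Tm True g] [Tm True k],
    Df True (fun v => F (f v) (g v) (k v)) := fun {_ _ _} h1 h2 h3 => hF3.sub3 h1 h2 h3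
  refine mem_ssy_of_def hw (D := fun x => ∃ s, F s x 1 ∧ ∀ s', s' < s → ¬ F s' x 0)
    inferInstance fun n => ?_
  have hz : ∀ s : ℕ, F s n 0 → n ∉ B := fun s hs => by
    have := sR _ _ _ ((eF s n 0).1 (by simpa using hs))
    rw [chi_eq] at this
    exact chi01_eq_zero.1 (Part.mem_some_iff.1 this).symm
  have ho : ∀ s : ℕ, F s n 1 → n ∈ B := fun s hs => by
    have := sR _ _ _ ((eF s n 1).1 (by simpa using hs))
    rw [chi_eq] at this
    exact chi01_eq_one.1 (Part.mem_some_iff.1 this).symm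
  constructor
  · intro hn
    obtain ⟨s, hs⟩ := (cR n 1 (by simp [chi_eq, chi01_of_mem hn])).exists
    refine ⟨s, by simpa using (eF s n 1).2 hs, fun s' hs' h => ?_⟩
    obtain ⟨s', -, rfl⟩ := lt_cast hs'
    exact hz s' h hn
  · rintro ⟨s, hs, h⟩
    by_contra hn
    obtain ⟨s₀, hs₀⟩ := (cR n 0 (by simp [chi_eq, chi01_of_not_mem hn])).exists
    have hle : s ≤ s₀ := not_lt.1 fun hlt => h _ hlt (by simpa using (eF s₀ n 0).2 hs₀)
    obtain ⟨s, -, rfl⟩ := le_cast hle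
    exact hn (ho s hs)

/-- An infinite binary tree has strings of every length. -/
theorem exists_long {T : Set ℕ} (hT : IsTreeCode T) (hinf : T.Infinite) (n : ℕ) :
    ∃ l : List Bool, l.length = n ∧ Encodable.encode l ∈ T := by
  by_contra hc
  refine hinf (((List.finite_length_lt Bool n).image Encodable.encode).subset fun x hx => ?_)
  obtain ⟨l, rfl⟩ := hT.1 x hx
  refine ⟨l, ?_, rfl⟩
  by_contra hl
  refine hc ⟨l.take n, ?_, hT.2 _ _ (List.take_prefix n l) hx⟩
  have : n ≤ l.length := not_lt.1 hl
  simp [this]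

/-- The pairing function of `ℕ`, as a definable relation on the model. -/
def PairN (p a b : M) : Prop := (a < b ∧ p = b * b + a) ∨ (b ≤ a ∧ p = a * a + a + b)

instance {C : Prop} {f g k : (ℕ → M) → M} [Tm C f] [Tm C g] [Tm C k] :
    Df C (fun v => PairN (f v) (g v) (k v)) :=
  inferInstanceAs (Df C (fun v => (g v < k v ∧ f v = k v * k v + g v) ∨
    (k v ≤ g v ∧ f v = g v * g v + g v + k v)))

theorem pairN_cast {p : M} {a b : ℕ} : PairN p (a : M) b ↔ p = (Nat.pair a b : ℕ) := by
  unfold PairN Nat.pair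
  split_ifs with h
  · simp [h, not_le.2 h]
  · simp [h, not_lt.1 h]

/-- Overspill applied to the existence of a string of length `n` on the tree. -/
theorem ssy_tree {w : M} (hw : ∀ n : ℕ, (n : M) < w) {T : Set ℕ} (hT : T ∈ (ofInst M).SSy)
    (htree : IsTreeCode T) (hinf : T.Infinite) :
    ∃ B ∈ (ofInst M).SSy, IsBranchThrough B T := by
  have hT2 : {p : ℕ | Encodable.encode (bits p.unpair.1 p.unpair.2) ∈ T} ∈ (ofInst M).SSy :=
    ssy_turing hw hT (turingLe_preimage
      (Primrec.encode.comp (primrec_bits.comp (Primrec.fst.comp Primrec.unpair)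
        (Primrec.snd.comp Primrec.unpair))).to_comp)
  obtain ⟨t, ht⟩ := mem_ssy.1 hT2
  -- `c` codes a string of length `n` all of whose initial segments lie on the tree; the code
  -- of an initial segment is normalized to the least possible one
  set P : M → Prop := fun n => ∃ c, ∀ m, m ≤ n → ∃ x,
    (∀ i, i < m → ((ofInst M).MemRel i x ↔ (ofInst M).MemRel i c)) ∧
    (∀ y, y < x → ¬ ∀ i, i < m → ((ofInst M).MemRel i y ↔ (ofInst M).MemRel i c)) ∧
    ∃ p, PairN p x m ∧ (ofInst M).MemRel p t with hP
  have h0 : ∀ n : ℕ, P n := by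
    intro n
    obtain ⟨l, rfl, hl⟩ := exists_long htree hinf n
    obtain ⟨c, hc⟩ := exists_strCode l
    refine ⟨c, fun m hm => ?_⟩
    obtain ⟨m, hml, rfl⟩ := le_cast hm
    classical
    have hex : ∃ x, ∀ i < m, (natStr.MemRel i x ↔ natStr.MemRel i c) := ⟨c, fun _ _ => Iff.rfl⟩
    have key : ∀ x : ℕ, (∀ i : M, i < m → ((ofInst M).MemRel i (x : M) ↔
        (ofInst M).MemRel i (c : M))) ↔ ∀ i < m, (natStr.MemRel i x ↔ natStr.MemRel i c) := by
      intro x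
      constructor
      · intro h i hi
        have := h i (by exact_mod_cast hi)
        rwa [memRel_cast, memRel_cast] at this
      · intro h i hi
        obtain ⟨i, hi', rfl⟩ := lt_cast hi
        rw [memRel_cast, memRel_cast]
        exact h i hi'
    refine ⟨(Nat.find hex : ℕ), (key _).2 (Nat.find_spec hex), fun y hy => ?_, _,
      pairN_cast.2 rfl, (ht _).1 ?_⟩
    · obtain ⟨y, hy', rfl⟩ := lt_cast hy
      rw [key]
      exact Nat.find_min hex hy'
    · simp only [Set.mem_ofPred_eq, Nat.unpair_pair]
      refine htree.2 _ l ?_ hl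
      have : bits (Nat.find hex) m = l.take m := by
        refine List.ext_getElem (by simp [length_bits, hml]) fun i h1 h2 => ?_
        rw [length_bits] at h1
        have e1 := getD_bits (c := Nat.find hex) h1
        rw [Nat.find_spec hex i h1, hc i (h1.trans_le hml)] at e1
        rw [List.getElem_take]
        rw [List.getD_eq_getElem _ _ (by rw [length_bits]; exact h1),
          List.getD_eq_getElem _ _ (h1.trans_le hml)] at e1
        exact Bool.eq_iff_iff.2 e1
      rw [this]
      exact List.take_prefix _ _
  obtain ⟨a, ha, c, hc⟩ := overspill (P := P) (by rw [hP]; infer_instance) hw h0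
  refine ⟨{i | (ofInst M).MemRel (i : M) c}, mem_ssy.2 ⟨c, fun n => Iff.rfl⟩, fun m => ?_⟩
  obtain ⟨x, hx, hmin, p, hp, hpt⟩ := hc m (ha m).le
  obtain ⟨k, hk⟩ := exists_nat_code (fun i => (ofInst M).MemRel (i : M) c) m
  have hxk : x ≤ k := not_lt.1 fun hlt => hmin k hlt fun i hi => by
    obtain ⟨i, hi', rfl⟩ := lt_cast hi
    exact memRel_cast.trans (hk i hi')
  obtain ⟨x, -, rfl⟩ := le_cast hxk
  obtain rfl := pairN_cast.1 hp
  have hmem := (ht _).2 hpt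
  simp only [Set.mem_ofPred_eq, Nat.unpair_pair] at hmem
  refine ⟨bits x m, length_bits _ _, fun i => ?_, hmem⟩
  have hi : (i : ℕ) < m := by simpa [length_bits] using i.2
  have e1 := getD_bits (c := x) hi
  rw [List.getD_eq_getElem _ _ i.2] at e1
  rw [List.get_eq_getElem, e1]
  exact memRel_cast.symm.trans (hx _ (by exact_mod_cast hi))

theorem isScottSet_ssy {w : M} (hw : ∀ n : ℕ, (n : M) < w) : IsScottSet (ofInst M).SSy := by
  refine ⟨⟨_, mem_ssy.2 ⟨w, fun n => Iff.rfl⟩⟩, ?_, ?_, fun A hA B h => ssy_turing hw hA h,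
    fun T hT h1 h2 => ssy_tree hw hT h1 h2⟩
  · intro A hA B hB
    obtain ⟨a, ha⟩ := mem_ssy.1 hA
    obtain ⟨b, hb⟩ := mem_ssy.1 hB
    exact mem_ssy_of_def hw (D := fun x => (ofInst M).MemRel x a ∨ (ofInst M).MemRel x b)
      inferInstance fun n => by rw [Set.mem_union, ha, hb]
  · intro A hA
    obtain ⟨a, ha⟩ := mem_ssy.1 hA
    exact mem_ssy_of_def hw (D := fun x => ¬ (ofInst M).MemRel x a)
      inferInstance fun n => by rw [Set.mem_compl_iff, ha]

theorem numeral_vars (n : ℕ) : (numeral n).vars = ∅ := by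
  induction n with
  | zero => rfl
  | succ n ih => simp [numeral, PTerm.vars, ih]

theorem numeral_val (n : ℕ) (v : ℕ → M) : (numeral n).val (ofInst M) v = (n : M) := by
  induction n with
  | zero => simp [numeral, PTerm.val, ofInst]
  | succ n ih =>
    simp only [numeral, PTerm.val, ih, Nat.cast_succ]
    rfl

theorem satFO_numeral (n : ℕ) {φ : Fml} (hφ : φ.IsFO) (v : ℕ → M) :
    SatFO (ofInst M) v (φ.substN 0 (numeral n)) ↔ SatFO (ofInst M) (update v 0 (n : M)) φ := by
  rw [SatFO_substN _ _ _ (by simp [numeral_vars]) φ hφ, numeral_val]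

theorem repSet_subset_ssy {w : M} (hw : ∀ n : ℕ, (n : M) < w) {T : Set Fml}
    (hT : ModelsT (ofInst M) T) : repSet T ⊆ (ofInst M).SSy := by
  rintro A ⟨φ, hφ, -, h⟩
  have hD : Df True (fun v : ℕ → M => SatFO (ofInst M) (update (fun _ => 0) 0 (v 0)) φ) := by
    refine (Df.satFO φ hφ).subst (fun i v => if i = 0 then v 0 else 0) (fun i => ?_) |>.congr
      fun v => ?_
    · split_ifs
      · exact .var 0
      · exact .zero
    · refine iff_of_eq (congrArg (fun u => SatFO (ofInst M) u φ) (funext fun i => ?_))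
      simp [update_apply]
  refine mem_ssy_of_def hw (D := fun x => SatFO (ofInst M) (update (fun _ => 0) 0 x) φ) hD
    fun n => ?_
  rw [← satFO_numeral n hφ]
  constructor
  · exact fun hn => (h n).1 hn M _ hT _
  · intro hs
    by_contra hn
    exact (SatFO_not ..).1 ((h n).2 hn M _ hT _) hs

end SSy

/-! ### Sets represented in a complete theory -/

section Rep

theorem PTerm.vars_subst (x : ℕ) {r : PTerm} (hr : r.vars = ∅) (t : PTerm) :
    (PTerm.subst x r t).vars = t.vars.erase x := by
  induction t with
  | var n =>
    by_cases h : n = x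
    · simp [PTerm.subst, PTerm.vars, h, hr]
    · simp [PTerm.subst, PTerm.vars, h, Finset.erase_eq_of_notMem, Ne.symm h]
  | zero => rfl
  | one => rfl
  | add t u iht ihu => simp [PTerm.subst, PTerm.vars, iht, ihu, Finset.erase_union_distrib]
  | mul t u iht ihu => simp [PTerm.subst, PTerm.vars, iht, ihu, Finset.erase_union_distrib]

theorem Fml.freeN_substN (x : ℕ) {r : PTerm} (hr : r.vars = ∅) (φ : Fml) :
    (φ.substN x r).freeN = φ.freeN.erase x := by
  induction φ with
  | eq t u => simp [Fml.substN, Fml.freeN, PTerm.vars_subst x hr, Finset.erase_union_distrib]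
  | lt t u => simp [Fml.substN, Fml.freeN, PTerm.vars_subst x hr, Finset.erase_union_distrib]
  | mem t k => simp [Fml.substN, Fml.freeN, PTerm.vars_subst x hr]
  | not φ ih => exact ih
  | imp φ ψ ihφ ihψ => simp [Fml.substN, Fml.freeN, ihφ, ihψ, Finset.erase_union_distrib]
  | all y φ ih =>
    by_cases h : y = x
    · simp [Fml.substN, Fml.freeN, h]
    · simp only [Fml.substN, h, if_false, Fml.freeN, ih]
      exact Finset.erase_right_comm
  | allS k φ ih => exact ih

theorem Fml.isFO_substN (x : ℕ) (r : PTerm) {φ : Fml} (hφ : φ.IsFO) : (φ.substN x r).IsFO := by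
  induction φ with
  | eq t u => trivial
  | lt t u => trivial
  | mem t k => exact hφ.elim
  | not φ ih => exact ih hφ
  | imp φ ψ ihφ ihψ => exact ⟨ihφ hφ.1, ihψ hφ.2⟩
  | all y φ ih =>
    by_cases h : y = x
    · simpa only [Fml.substN, h, if_true] using hφ
    · simp only [Fml.substN, h, if_false]
      exact ih hφ
  | allS k φ ih => exact hφ.elim

theorem exClosure_isFO (L : List ℕ) {φ : Fml} (hφ : φ.IsFO) : (L.foldr Fml.ex φ).IsFO := by
  induction L with
  | nil => exact hφ
  | cons x L ih => exact ih

theorem exClosure_freeN (L : List ℕ) (φ : Fml) {i : ℕ} (h : i ∈ (L.foldr Fml.ex φ).freeN) :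
    i ∈ φ.freeN ∧ i ∉ L := by
  induction L with
  | nil => simpa using h
  | cons x L ih =>
    have h' : i ∈ (L.foldr Fml.ex φ).freeN.erase x := h
    rw [Finset.mem_erase] at h'
    obtain ⟨h1, h2⟩ := ih h'.2
    exact ⟨h1, by simp [h2, h'.1]⟩

theorem satFO_exClosure {M : Type} (S : AStr M) (φ : Fml) (L : List ℕ) : ∀ v : ℕ → M,
    SatFO S v (L.foldr Fml.ex φ) ↔ ∃ u, (∀ i ∉ L, u i = v i) ∧ SatFO S u φ := by
  induction L with
  | nil =>
    intro v
    refine ⟨fun h => ⟨v, fun _ _ => rfl, h⟩, ?_⟩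
    rintro ⟨u, hu, h⟩
    obtain rfl : u = v := funext fun i => hu i (by simp)
    exact h
  | cons x L ih =>
    intro v
    simp only [List.foldr_cons, SatFO_ex, ih]
    constructor
    · rintro ⟨a, u, hu, h⟩
      refine ⟨u, fun i hi => ?_, h⟩
      simp only [List.mem_cons, not_or] at hi
      rw [hu i hi.2, update_of_ne hi.1]
    · rintro ⟨u, hu, h⟩
      refine ⟨u x, u, fun i hi => ?_, h⟩
      by_cases hx : i = x
      · simp [hx]
      · rw [update_of_ne hx, hu i (by simp [hx, hi])]

variable {M : Type} [PAM M]

/-- If `M` is a model of the complete theory `T`, the traces on `ℕ` of the projections of the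
parameter-free definable relations of `M` are represented in `T`. -/
theorem mem_repSet {T : Set Fml} (hComp : CompleteT T) (hT : ModelsT (ofInst M) T)
    {P : (ℕ → M) → Prop} (hP : Df False P) : {n : ℕ | ∃ v, v 0 = (n : M) ∧ P v} ∈ repSet T := by
  obtain ⟨φ, hφ, h⟩ := hP.exists_fml
  set L := (φ.freeN.erase 0).toList with hL
  have hψ : (L.foldr Fml.ex φ).IsFO := exClosure_isFO L hφ
  have hfree : (L.foldr Fml.ex φ).freeN ⊆ {0} := by
    intro i hi
    obtain ⟨h1, h2⟩ := exClosure_freeN L φ hi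
    by_contra h0
    exact h2 (by simpa [hL, h1] using h0)
  have key : ∀ (n : ℕ) (v : ℕ → M), SatFO (ofInst M) v ((L.foldr Fml.ex φ).substN 0 (numeral n)) ↔
      ∃ v, v 0 = (n : M) ∧ P v := by
    intro n v
    rw [satFO_numeral n hψ, satFO_exClosure]
    constructor
    · rintro ⟨u, hu, hs⟩
      exact ⟨u, by rw [hu 0 (by simp [hL])]; simp, (h u).2 hs⟩
    · rintro ⟨u, hu, hs⟩
      refine ⟨fun i => if i ∈ L then u i else update v 0 (n : M) i, fun i hi => by simp [hi], ?_⟩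
      refine (SatFO_congr _ φ fun i hi => ?_).1 ((h u).1 hs)
      by_cases h0 : i = 0
      · subst h0
        simp [hu]
      · have : i ∈ L := by simp [hL, hi, h0]
        simp [this]
  refine ⟨_, hψ, hfree, fun n => ?_⟩
  have hsent : IsFOSentence ((L.foldr Fml.ex φ).substN 0 (numeral n)) := by
    refine ⟨Fml.isFO_substN _ _ hψ, ?_⟩
    rw [Fml.freeN_substN _ (numeral_vars n)]
    ext i
    simp only [Finset.mem_erase, Finset.notMem_empty, iff_false, not_and]
    exact fun h0 hi => h0 (Finset.mem_singleton.1 (hfree hi))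
  have v0 : ℕ → M := fun _ => 0
  rcases hComp _ hsent with hp | hp
  · exact ⟨fun _ => hp, fun hn => (hn ((key n v0).1 (hp M _ hT v0))).elim⟩
  · exact ⟨fun hn => ((SatFO_not ..).1 (hp M _ hT v0) ((key n v0).2 hn)).elim, fun _ => hp⟩

end Rep

/-! ### The construction in stages -/

section Stages

theorem IsScottSet.union {𝔛 : Set (Set ℕ)} (h : IsScottSet 𝔛) {A B : Set ℕ} (hA : A ∈ 𝔛)
    (hB : B ∈ 𝔛) : A ∪ B ∈ 𝔛 := h.2.1 A hA B hB

theorem IsScottSet.compl {𝔛 : Set (Set ℕ)} (h : IsScottSet 𝔛) {A : Set ℕ} (hA : A ∈ 𝔛) :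
    Aᶜ ∈ 𝔛 := h.2.2.1 A hA

theorem IsScottSet.turing {𝔛 : Set (Set ℕ)} (h : IsScottSet 𝔛) {A B : Set ℕ} (hA : A ∈ 𝔛)
    (hB : TuringLe B A) : B ∈ 𝔛 := h.2.2.2.1 A hA B hB

theorem IsScottSet.inter {𝔛 : Set (Set ℕ)} (h : IsScottSet 𝔛) {A B : Set ℕ} (hA : A ∈ 𝔛)
    (hB : B ∈ 𝔛) : A ∩ B ∈ 𝔛 := by
  rw [← compl_compl (A ∩ B), Set.compl_inter]
  exact h.compl (h.union (h.compl hA) (h.compl hB))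

theorem IsScottSet.primrec {𝔛 : Set (Set ℕ)} (h : IsScottSet 𝔛) {P : Set ℕ}
    (hP : PrimrecPred fun n => n ∈ P) : P ∈ 𝔛 := by
  obtain ⟨A, hA⟩ := h.1
  exact h.turing hA (turingLe_of_primrec hP)

theorem IsScottSet.preimage {𝔛 : Set (Set ℕ)} (h : IsScottSet 𝔛) {A : Set ℕ} (hA : A ∈ 𝔛)
    {g : ℕ → ℕ} (hg : Computable g) : {n | g n ∈ A} ∈ 𝔛 :=
  h.turing hA (turingLe_preimage hg)

variable {M : Type} [PAM M]

theorem Df.forall_lt {C : Prop} {P : ℕ → (ℕ → M) → Prop} (s : ℕ) (h : ∀ i < s, Df C (P i)) :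
    Df C (fun v => ∀ i < s, P i v) := by
  induction s with
  | zero => exact (inferInstance : Df C fun _ : ℕ → M => True).congr fun v => by simp
  | succ s ih =>
    have h1 := ih fun i hi => h i (hi.trans s.lt_succ_self)
    have h2 := h s s.lt_succ_self
    refine (inferInstance : Df C fun v => (∀ i < s, P i v) ∧ P s v).congr fun v => ?_
    exact Nat.forall_lt_succ_right

theorem pairN_bound {p a b : M} (h : PairN p a b) : a ≤ p ∧ b ≤ p := by
  have hsq : ∀ x : M, x ≤ x * x := by
    intro x
    rcases eq_or_ne x 0 with rfl | hx
    · simp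
    · exact le_mul_of_one_le_right zero_le (one_le_of_pos (pos_iff_ne_zero.2 hx))
  rcases h with ⟨h, rfl⟩ | ⟨h, rfl⟩
  · exact ⟨le_add_self, (hsq b).trans le_self_add⟩
  · exact ⟨le_self_add.trans' le_add_self, le_add_self⟩

/-- The data fixed before stage `s`: the tasks `W i`, `i < s`, together with the traces on `ℕ`,
read off from `Z`, of the entries with index below `s`, are finitely satisfiable in `M`. -/
def Ok (W : ℕ → (ℕ → M) → Prop) (s : ℕ) (Z : Set ℕ) : Prop :=
  ∀ n, ∃ v, (∀ i < s, W i v) ∧ ∀ k < n, k.unpair.1 < s →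
    ((ofInst M).MemRel (k.unpair.2 : M) (v k.unpair.1) ↔ k ∈ Z)

variable {𝔛 : Set (Set ℕ)} {W : ℕ → (ℕ → M) → Prop}

/-- Stage `s` may put any prescribed set of `𝔛` as the trace of entry `s`. -/
theorem step_even (h𝔛 : IsScottSet 𝔛)
    (hdep : ∀ s v v', (∀ i ≤ s, v i = v' i) → W s v → W s v')
    {s : ℕ} (hs : ∀ v, W s v) {Z A : Set ℕ} (hZ : Z ∈ 𝔛) (hA : A ∈ 𝔛) (hok : Ok W s Z) :
    ∃ Z' ∈ 𝔛, Ok W (s + 1) Z' ∧ (∀ k : ℕ, k.unpair.1 < s → (k ∈ Z' ↔ k ∈ Z)) ∧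
      ∀ j, Nat.pair s j ∈ Z' ↔ j ∈ A := by
  have hR : {k : ℕ | k.unpair.1 = s} ∈ 𝔛 := h𝔛.primrec
    (Primrec.eq.comp (Primrec.fst.comp Primrec.unpair) (Primrec.const s))
  have hA' : {k : ℕ | k.unpair.2 ∈ A} ∈ 𝔛 :=
    h𝔛.preimage hA (Primrec.snd.comp Primrec.unpair).to_comp
  refine ⟨_, h𝔛.union (h𝔛.inter (h𝔛.compl hR) hZ) (h𝔛.inter hR hA'), fun n => ?_, fun k hk => ?_,
    fun j => by simp⟩
  · obtain ⟨v, hv1, hv2⟩ := hok n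
    obtain ⟨c, hc⟩ := exists_nat_code (· ∈ A) n
    refine ⟨update v s (c : M), fun i hi => ?_, fun k hk hks => ?_⟩
    · rcases Nat.lt_succ_iff_lt_or_eq.1 hi with hi | rfl
      · exact hdep i v _ (fun j hj => (update_of_ne (by omega) _ _).symm) (hv1 i hi)
      · exact hs _
    · rcases Nat.lt_succ_iff_lt_or_eq.1 hks with hks | hks
      · have hne : k.unpair.1 ≠ s := hks.ne
        rw [update_of_ne hne, hv2 k hk hks]
        simp [hne]
      · rw [hks, update_self, memRel_cast]
        refine (hc _ ((Nat.unpair_right_le k).trans_lt hk)).trans ?_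
        simp [hks]
  · simp [hk.ne]

/-- Stage `s` can fulfil the task `W s`; the trace of entry `s` is found, together with the
traces fixed before, as a branch of a tree which is computable from these and from a set
represented in the theory. -/
theorem step_odd (h𝔛 : IsScottSet 𝔛)
    (hrep : ∀ P : (ℕ → M) → Prop, Df False P → {n : ℕ | ∃ v, v 0 = (n : M) ∧ P v} ∈ 𝔛)
    (hdep : ∀ s v v', (∀ i ≤ s, v i = v' i) → W s v → W s v')
    (hext : ∀ s v, ∃ a, W s (update v s a)) (hdf : ∀ s, Df False (W s))
    {s : ℕ} {Z : Set ℕ} (hZ : Z ∈ 𝔛) (hok : Ok W s Z) :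
    ∃ Z' ∈ 𝔛, Ok W (s + 1) Z' ∧ ∀ k : ℕ, k.unpair.1 < s → (k ∈ Z' ↔ k ∈ Z) := by
  classical
  set G : (ℕ → Prop) → ℕ → Prop := fun D n => ∃ v : ℕ → M, (∀ i < s + 1, W i v) ∧ ∀ k < n,
    k.unpair.1 < s + 1 → ((ofInst M).MemRel (k.unpair.2 : M) (v k.unpair.1) ↔ D k) with hG
  have Gcongr : ∀ {D D' : ℕ → Prop} {n m : ℕ}, m ≤ n → (∀ k < m, (D k ↔ D' k)) → G D n → G D' m := by
    rintro D D' n m hmn h ⟨v, h1, h2⟩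
    exact ⟨v, h1, fun k hk hks => (h2 k (hk.trans_le hmn) hks).trans (h k hk)⟩
  -- which finite approximations are satisfiable is represented in the theory
  have hE : {p : ℕ | G (fun k => natStr.MemRel k p.unpair.1) p.unpair.2} ∈ 𝔛 := by
    have hdf' : Df False (fun u : ℕ → M => ∀ i < s + 1, W i (fun j => u (j + 1))) :=
      Df.forall_lt _ fun i _ => (hdf i).subst (fun j v => v (j + 1)) fun j => .var _
    have hdf1 : Df False (fun u : ℕ → M => ∃ c n, PairN (u 0) c n ∧
        (∀ i < s + 1, W i (fun j => u (j + 1))) ∧ ∀ k, k < n → ∀ i < s + 1, ∀ j, PairN k (i : M) j →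
          ((ofInst M).MemRel j (u (i + 1)) ↔ (ofInst M).MemRel k c)) := by
      have d1 : Df False (fun u : ℕ → M => ∀ i < s + 1, W i (fun j => u (j + 1 + 1 + 1))) :=
        hdf'.subst (fun j v => match j with | 0 => v 0 | j + 1 => v (j + 1 + 1 + 1))
          fun | 0 => .var 0 | j + 1 => .var _
      have d2 : Df False (fun u : ℕ → M => ∀ i < s + 1, ∀ j, PairN (u 0) (i : M) j →
          ((ofInst M).MemRel j (u (i + 1 + 1 + 1 + 1)) ↔ (ofInst M).MemRel (u 0) (u 2))) :=
        Df.forall_lt _ fun i _ => inferInstance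
      infer_instance
    refine Set.mem_of_eq_of_mem ?_ (hrep _ hdf1)
    ext p
    simp only [Set.mem_ofPred_eq]
    constructor
    · rintro ⟨v, h1, h2⟩
      refine ⟨fun i => Nat.casesOn i (p : M) v, rfl, (p.unpair.1 : ℕ), (p.unpair.2 : ℕ), ?_, h1, ?_⟩
      · exact pairN_cast.2 (congrArg Nat.cast (Nat.pair_unpair p).symm)
      · intro k hk i hi j hj
        obtain ⟨k, hk', rfl⟩ := lt_cast hk
        obtain ⟨j, -, rfl⟩ := le_cast (pairN_bound hj).2
        obtain rfl : k = Nat.pair i j := by exact_mod_cast pairN_cast.1 hj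
        have := h2 _ hk' (by simpa using hi)
        simp only [Nat.unpair_pair] at this
        exact this.trans memRel_cast.symm
    · rintro ⟨u, hu, c, n, hp, h1, h2⟩
      rw [hu] at hp
      obtain ⟨c, -, rfl⟩ := le_cast (pairN_bound hp).1
      obtain ⟨n, -, rfl⟩ := le_cast (pairN_bound hp).2
      obtain rfl : p = Nat.pair c n := by exact_mod_cast pairN_cast.1 hp
      simp only [Nat.unpair_pair]
      refine ⟨fun j => u (j + 1), h1, fun k hk hks => ?_⟩
      exact (h2 k (by exact_mod_cast hk) _ hks _ (pairN_cast.2 (by rw [Nat.pair_unpair]))).trans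
        memRel_cast
  obtain ⟨c, hc, hcode⟩ := exists_computable_code
  -- the tree consists of the satisfiable strings (`hY3`) that agree with `Z` (`hY2`)
  have hY1 : {a : ℕ | a = Encodable.encode (dec a)} ∈ 𝔛 := h𝔛.primrec
    (Primrec.eq.comp Primrec.id (Primrec.encode.comp primrec_dec))
  have hlen : Primrec fun a => (dec a).length := Primrec.list_length.comp primrec_dec
  have hu1 : Primrec fun p : ℕ => p.unpair.1 := Primrec.fst.comp Primrec.unpair
  have hu2 : Primrec fun p : ℕ => p.unpair.2 := Primrec.snd.comp Primrec.unpair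
  have hY2 : {a : ℕ | ∀ k < (dec a).length, k.unpair.1 < s →
      ((dec a).getD k false = true ↔ k ∈ Z)} ∈ 𝔛 := by
    have r1 : {p : ℕ | p.unpair.2.unpair.1 < s} ∈ 𝔛 := h𝔛.primrec
      (Primrec.nat_lt.comp (hu1.comp hu2) (Primrec.const s))
    have r2 : {p : ℕ | (dec p.unpair.1).getD p.unpair.2 false = true} ∈ 𝔛 := h𝔛.primrec
      (Primrec.eq.comp ((Primrec.list_getD false).comp (primrec_dec.comp hu1) hu2)
        (Primrec.const true))
    have r3 : {p : ℕ | p.unpair.2 ∈ Z} ∈ 𝔛 := h𝔛.preimage hZ hu2.to_comp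
    have r4 := h𝔛.union (h𝔛.compl r1) (h𝔛.union (h𝔛.inter r2 r3)
      (h𝔛.inter (h𝔛.compl r2) (h𝔛.compl r3)))
    refine Set.mem_of_eq_of_mem ?_ (h𝔛.turing r4 (turingLe_forall_lt hlen))
    ext a
    simp only [Set.mem_ofPred_eq, Set.mem_union, Set.mem_inter_iff, Set.mem_compl_iff,
      Nat.unpair_pair]
    refine forall₂_congr fun k _ => ?_
    tauto
  have hY3 : {a : ℕ | G (fun k => (dec a).getD k false = true) (dec a).length} ∈ 𝔛 := by
    have hg : Computable fun a => Nat.pair (c (dec a)) (dec a).length :=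
      Primrec₂.natPair.to_comp.comp (hc.comp primrec_dec.to_comp) hlen.to_comp
    refine Set.mem_of_eq_of_mem ?_ (h𝔛.preimage hE hg)
    ext a
    simp only [Set.mem_ofPred_eq, Nat.unpair_pair]
    exact ⟨Gcongr le_rfl fun k hk => (hcode _ k hk).symm, Gcongr le_rfl fun k hk => hcode _ k hk⟩
  have hY := h𝔛.inter hY1 (h𝔛.inter hY2 hY3)
  have hmemY : ∀ l : List Bool, Encodable.encode l ∈ {a : ℕ | a = Encodable.encode (dec a)} ∩
      ({a : ℕ | ∀ k < (dec a).length, k.unpair.1 < s → ((dec a).getD k false = true ↔ k ∈ Z)} ∩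
      {a : ℕ | G (fun k => (dec a).getD k false = true) (dec a).length}) ↔
      (∀ k < l.length, k.unpair.1 < s → (l.getD k false = true ↔ k ∈ Z)) ∧
        G (fun k => l.getD k false = true) l.length := by
    intro l
    simp only [Set.mem_inter_iff, Set.mem_ofPred_eq, dec_encode, true_and]
  obtain ⟨B, hB, hbr⟩ := h𝔛.2.2.2.2 _ hY ⟨fun a ha => ⟨_, ha.1.symm⟩, fun l₁ l₂ hpre h2 => by
    rw [hmemY] at h2 ⊢
    have hget : ∀ k < l₁.length, (l₂.getD k false = true ↔ l₁.getD k false = true) := by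
      obtain ⟨l₃, rfl⟩ := hpre
      intro k hk
      rw [List.getD_append _ _ _ _ hk]
    exact ⟨fun k hk hks => (hget k hk).symm.trans (h2.1 k (hk.trans_le hpre.length_le) hks),
      Gcongr hpre.length_le hget h2.2⟩⟩ (by
    have hex : ∀ n, ∃ l : List Bool, l.length = n ∧
        (∀ k < l.length, k.unpair.1 < s → (l.getD k false = true ↔ k ∈ Z)) ∧
          G (fun k => l.getD k false = true) l.length := by
      intro n
      obtain ⟨v, h1, h2⟩ := hok n
      obtain ⟨a, ha⟩ := hext s v
      let l := (List.range n).map fun k =>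
        decide ((ofInst M).MemRel (k.unpair.2 : M) (update v s a k.unpair.1))
      have hl : l.length = n := by simp [l]
      have hg : ∀ k < n, (l.getD k false = true ↔
          (ofInst M).MemRel (k.unpair.2 : M) (update v s a k.unpair.1)) := by
        intro k hk
        rw [List.getD_eq_getElem _ _ (by rwa [hl])]
        simp [l]
      refine ⟨l, hl, fun k hk hks => ?_, update v s a, fun i hi => ?_, fun k hk hks => ?_⟩
      · rw [hl] at hk
        rw [hg k hk, update_of_ne hks.ne]
        exact h2 k hk hks
      · rcases Nat.lt_succ_iff_lt_or_eq.1 hi with hi | rfl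
        · exact hdep i v _ (fun j hj => (update_of_ne (by omega) _ _).symm) (h1 i hi)
        · exact ha
      · rw [hl] at hk
        exact (hg k hk).symm
    choose f hf1 hf2 using hex
    refine Set.infinite_of_injective_forall_mem (f := fun n => Encodable.encode (f n))
      (fun m n hmn => ?_) fun n => (hmemY _).2 (hf2 n)
    rw [← hf1 m, ← hf1 n, Encodable.encode_injective hmn])
  have hbr' : ∀ n, ∃ l : List Bool, l.length = n ∧ (∀ k < n, (l.getD k false = true ↔ k ∈ B)) ∧
      (∀ k < l.length, k.unpair.1 < s → (l.getD k false = true ↔ k ∈ Z)) ∧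
        G (fun k => l.getD k false = true) l.length := by
    intro n
    obtain ⟨l, rfl, h1, h2⟩ := hbr n
    refine ⟨l, rfl, fun k hk => ?_, (hmemY l).1 h2⟩
    rw [List.getD_eq_getElem _ _ hk]
    exact h1 ⟨k, hk⟩
  refine ⟨B, hB, fun n => ?_, fun k hk => ?_⟩
  · obtain ⟨l, rfl, h1, -, h3⟩ := hbr' n
    exact Gcongr le_rfl h1 h3
  · obtain ⟨l, hl, h1, h2, -⟩ := hbr' (k + 1)
    rw [← h1 k k.lt_succ_self, h2 k (by omega) hk]

/-- A sequence of valuations in `M` fulfilling more and more of the tasks `W s`, such that the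
traces on `ℕ` of the entries converge, to exactly prescribed sets at even places and to sets
of the Scott set `𝔛` at odd places. -/
theorem exists_stages (h𝔛 : IsScottSet 𝔛)
    (hrep : ∀ P : (ℕ → M) → Prop, Df False P → {n : ℕ | ∃ v, v 0 = (n : M) ∧ P v} ∈ 𝔛)
    (hdep : ∀ s v v', (∀ i ≤ s, v i = v' i) → W s v → W s v')
    (hext : ∀ s v, ∃ a, W s (update v s a)) (hdf : ∀ s, Df False (W s))
    (heven : ∀ t v, W (2 * t) v) {A : ℕ → Set ℕ} (hA : ∀ t, A t ∈ 𝔛) :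
    ∃ (v : ℕ → ℕ → M) (Z : ℕ → Set ℕ), (∀ n, ∀ i < n, W i (v n)) ∧
      (∀ s j, ∀ n > Nat.pair s j, ((ofInst M).MemRel (j : M) (v n s) ↔ j ∈ Z s)) ∧
      (∀ s, Z s ∈ 𝔛) ∧ ∀ t, Z (2 * t) = A t := by
  have step : ∀ s (Z : {Z : Set ℕ // Z ∈ 𝔛 ∧ Ok W s Z}), ∃ Z' : {Z : Set ℕ // Z ∈ 𝔛 ∧ Ok W (s + 1) Z},
      (∀ k : ℕ, k.unpair.1 < s → (k ∈ Z'.1 ↔ k ∈ Z.1)) ∧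
        ∀ t, s = 2 * t → ∀ j, Nat.pair s j ∈ Z'.1 ↔ j ∈ A t := by
    rintro s ⟨Z, hZ, hok⟩
    rcases Nat.even_or_odd' s with ⟨t, ht | ht⟩
    · obtain ⟨Z', h1, h2, h3, h4⟩ :=
        step_even h𝔛 hdep (s := s) (ht ▸ heven t) hZ (hA t) hok
      refine ⟨⟨Z', h1, h2⟩, h3, fun t' ht' => ?_⟩
      obtain rfl : t = t' := by omega
      exact h4
    · obtain ⟨Z', h1, h2, h3⟩ := step_odd h𝔛 hrep hdep hext hdf hZ hok
      exact ⟨⟨Z', h1, h2⟩, h3, fun t' ht' => by omega⟩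
  choose F hF1 hF2 using step
  let Y : ∀ s, {Z : Set ℕ // Z ∈ 𝔛 ∧ Ok W s Z} := fun s =>
    Nat.rec ⟨A 0, hA 0, fun n => ⟨fun _ => 0, by simp, by simp⟩⟩ F s
  have hY : ∀ s, Y (s + 1) = F s (Y s) := fun s => rfl
  have stable : ∀ s d (k : ℕ), k.unpair.1 < s → (k ∈ (Y (s + d)).1 ↔ k ∈ (Y s).1) := by
    intro s d k hk
    induction d with
    | zero => rfl
    | succ d ih =>
      rw [← add_assoc, hY, hF1 _ _ _ (by omega), ih]
  have hv : ∀ n, ∃ v : ℕ → M, (∀ i < n, W i v) ∧ ∀ k < n, k.unpair.1 < n →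
    ((ofInst M).MemRel (k.unpair.2 : M) (v k.unpair.1) ↔ k ∈ (Y n).1) := fun n => (Y n).2.2 n
  choose v hv1 hv2 using hv
  refine ⟨v, fun s => {j | Nat.pair s j ∈ (Y (s + 1)).1}, hv1, fun s j n hn => ?_, fun s => ?_,
    fun t => ?_⟩
  · have hs : s < n := (Nat.left_le_pair s j).trans_lt hn
    have := hv2 n _ hn (by simpa using hs)
    simp only [Nat.unpair_pair] at this
    rw [this, Set.mem_ofPred_eq]
    obtain ⟨d, rfl⟩ := Nat.exists_eq_add_of_le (Nat.succ_le_of_lt hs)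
    exact stable _ d _ (by simp)
  · exact h𝔛.preimage (Y (s + 1)).2.1
      (Primrec₂.natPair.comp (Primrec.const s) Primrec.id).to_comp
  · ext j
    exact hF2 _ (Y (2 * t)) t rfl j

end Stages

/-! ### Countability of the set of formulas -/

section Countability

/-- An injective numbering of the terms. -/
def PTerm.num : PTerm → ℕ
  | .var n => Nat.pair 0 n
  | .zero => Nat.pair 1 0
  | .one => Nat.pair 2 0
  | .add t u => Nat.pair 3 (Nat.pair t.num u.num)
  | .mul t u => Nat.pair 4 (Nat.pair t.num u.num)

/-- An injective numbering of the formulas. -/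
def Fml.num : Fml → ℕ
  | .eq t u => Nat.pair 0 (Nat.pair t.num u.num)
  | .lt t u => Nat.pair 1 (Nat.pair t.num u.num)
  | .mem t k => Nat.pair 2 (Nat.pair t.num k)
  | .not φ => Nat.pair 3 φ.num
  | .imp φ ψ => Nat.pair 4 (Nat.pair φ.num ψ.num)
  | .all x φ => Nat.pair 5 (Nat.pair x φ.num)
  | .allS k φ => Nat.pair 6 (Nat.pair k φ.num)

theorem PTerm.num_injective : Injective PTerm.num := by
  intro t
  induction t with
  | var n => intro u; cases u <;> simp [PTerm.num, Nat.pair_eq_pair]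
  | zero => intro u; cases u <;> simp [PTerm.num, Nat.pair_eq_pair]
  | one => intro u; cases u <;> simp [PTerm.num, Nat.pair_eq_pair]
  | add t₁ t₂ ih₁ ih₂ =>
    intro u
    cases u <;> simp [PTerm.num, Nat.pair_eq_pair]
    exact fun h₁ h₂ => ⟨ih₁ h₁, ih₂ h₂⟩
  | mul t₁ t₂ ih₁ ih₂ =>
    intro u
    cases u <;> simp [PTerm.num, Nat.pair_eq_pair]
    exact fun h₁ h₂ => ⟨ih₁ h₁, ih₂ h₂⟩

theorem Fml.num_injective : Injective Fml.num := by
  intro φ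
  induction φ with
  | eq t u =>
    intro ψ
    cases ψ <;> simp [Fml.num, Nat.pair_eq_pair, PTerm.num_injective.eq_iff]
  | lt t u =>
    intro ψ
    cases ψ <;> simp [Fml.num, Nat.pair_eq_pair, PTerm.num_injective.eq_iff]
  | mem t k =>
    intro ψ
    cases ψ <;> simp [Fml.num, Nat.pair_eq_pair, PTerm.num_injective.eq_iff]
  | not φ ih =>
    intro ψ
    cases ψ <;> simp [Fml.num, Nat.pair_eq_pair]
    exact fun h => ih h
  | imp φ₁ φ₂ ih₁ ih₂ =>
    intro ψ
    cases ψ <;> simp [Fml.num, Nat.pair_eq_pair]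
    exact fun h₁ h₂ => ⟨ih₁ h₁, ih₂ h₂⟩
  | all x φ ih =>
    intro ψ
    cases ψ <;> simp [Fml.num, Nat.pair_eq_pair]
    exact fun h₁ h₂ => ⟨h₁, ih h₂⟩
  | allS k φ ih =>
    intro ψ
    cases ψ <;> simp [Fml.num, Nat.pair_eq_pair]
    exact fun h₁ h₂ => ⟨h₁, ih h₂⟩

/-- An enumeration of all formulas in which each formula occurs at arbitrarily large places. -/
theorem exists_enum : ∃ e : ℕ → Fml, ∀ φ b, ∃ t ≥ b, e t = φ := by
  have : Countable Fml := Fml.num_injective.countable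
  have : Nonempty Fml := ⟨.eq .zero .zero⟩
  obtain ⟨e, he⟩ := exists_surjective_nat Fml
  refine ⟨fun t => e t.unpair.1, fun φ b => ?_⟩
  obtain ⟨m, rfl⟩ := he φ
  exact ⟨Nat.pair m b, Nat.right_le_pair m b, by simp⟩

end Countability

/-! ### Henkin tasks -/

section Henkin

variable {M : Type} [PAM M]

/-- The valuation `a, v 0, v 1, …`. -/
def cons (a : M) (v : ℕ → M) : ℕ → M := fun i => Nat.casesOn i a v

/-- The Henkin task number `s`: if `s` is odd, the entry `v s` is a witness, if there is one at
all, for the formula number `s / 2` with the parameters `v i`, `i < s`. -/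
def Task (e : ℕ → Fml) (s : ℕ) (v : ℕ → M) : Prop :=
  (s % 2 = 1 ∧ (e (s / 2)).IsFO ∧ ∀ i, i + 1 ∈ (e (s / 2)).freeN → i < s) →
    ∀ a, SatFO (ofInst M) (cons a v) (e (s / 2)) → SatFO (ofInst M) (cons (v s) v) (e (s / 2))

variable (e : ℕ → Fml)

theorem satFO_cons_congr {φ : Fml} {s : ℕ} (hφ : ∀ i, i + 1 ∈ φ.freeN → i < s) {v v' : ℕ → M}
    (h : ∀ i < s, v i = v' i) (a : M) :
    SatFO (ofInst M) (cons a v) φ ↔ SatFO (ofInst M) (cons a v') φ := by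
  refine SatFO_congr _ φ ?_
  rintro (_ | i) hi
  · rfl
  · exact h i (hφ i hi)

theorem task_dep (s : ℕ) (v v' : ℕ → M) (h : ∀ i ≤ s, v i = v' i) (ht : Task e s v) :
    Task e s v' := by
  intro hs a
  have hc := satFO_cons_congr (M := M) hs.2.2 fun i hi => h i hi.le
  rw [← hc, ← hc, ← h s le_rfl]
  exact ht hs a

theorem task_ext (s : ℕ) (v : ℕ → M) : ∃ a, Task e s (update v s a) := by
  by_cases hs : s % 2 = 1 ∧ (e (s / 2)).IsFO ∧ ∀ i, i + 1 ∈ (e (s / 2)).freeN → i < s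
  · have hc : ∀ a b : M, SatFO (ofInst M) (cons b (update v s a)) (e (s / 2)) ↔
        SatFO (ofInst M) (cons b v) (e (s / 2)) := fun a b =>
      satFO_cons_congr hs.2.2 (fun i hi => update_of_ne hi.ne _ _) b
    by_cases hex : ∃ a, SatFO (ofInst M) (cons a v) (e (s / 2))
    · obtain ⟨a, ha⟩ := hex
      refine ⟨a, fun _ b _ => ?_⟩
      rw [update_self, hc]
      exact ha
    · exact ⟨0, fun _ b hb => (hex ⟨b, (hc _ _).1 hb⟩).elim⟩
  · exact ⟨0, fun h => (hs h).elim⟩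

theorem task_df (s : ℕ) : Df False (Task (M := M) e s) := by
  by_cases hs : s % 2 = 1 ∧ (e (s / 2)).IsFO ∧ ∀ i, i + 1 ∈ (e (s / 2)).freeN → i < s
  · have h1 : Df False (fun v : ℕ → M =>
        SatFO (ofInst M) (cons (v 0) fun i => v (i + 1)) (e (s / 2))) := by
      refine (Df.satFO _ hs.2.1).congr fun v => iff_of_eq ?_
      congr 1
      funext i
      cases i <;> rfl
    have h2 : Df False (fun v : ℕ → M =>
        SatFO (ofInst M) (cons (v (s + 1)) fun i => v (i + 1)) (e (s / 2))) := by
      refine ((Df.satFO _ hs.2.1).subst (fun i v => Nat.casesOn i (v (s + 1)) fun i => v (i + 1))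
        ?_).congr fun v => Iff.rfl
      rintro (_ | i)
      · exact .var _
      · exact .var _
    exact (Df.all (P := fun a v => SatFO (ofInst M) (cons a v) (e (s / 2)) →
      SatFO (ofInst M) (cons (v s) v) (e (s / 2))) (.imp h1 h2)).congr fun v => ⟨fun h => h hs, fun h _ => h⟩
  · exact (inferInstance : Df False fun _ : ℕ → M => True).congr fun v => by
      simp only [Task, hs, false_imp_iff]

/-- A sequence `v` of valuations is Henkin if every existential statement about `v n` that is
definable without parameters is, for almost all `n`, witnessed by an entry of `v n` whose index
does not depend on `n`. -/
def Henkin (v : ℕ → ℕ → M) : Prop := ∀ P : M → (ℕ → M) → Prop,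
  Df False (fun u => P (u 0) (fun i => u (i + 1))) →
    ∃ s, ∃ N, ∀ n > N, ∀ a, P a (v n) → P (v n s) (v n)

theorem henkin_of_task {e : ℕ → Fml} (he : ∀ φ b, ∃ t ≥ b, e t = φ) {v : ℕ → ℕ → M}
    (hv : ∀ n, ∀ i < n, Task e i (v n)) : Henkin v := by
  intro P hP
  obtain ⟨φ, hφ, h⟩ := hP.exists_fml
  obtain ⟨t, ht, rfl⟩ := he φ (φ.freeN.sup id)
  have hd : (2 * t + 1) / 2 = t := by omega
  refine ⟨2 * t + 1, 2 * t + 1, fun n hn a ha => ?_⟩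
  have := hv n _ hn
  rw [Task, hd] at this
  refine (h (cons _ (v n))).2 (this ⟨by omega, hφ, fun i hi => ?_⟩ a ((h (cons a (v n))).1 ha))
  have := Finset.le_sup (f := id) hi
  simp only [id] at this
  omega

end Henkin

/-! ### The limit model -/

section Limit

open Filter

variable {M : Type} [PAM M]

/-- Two indices are identified if the corresponding entries of `v n` agree for almost all `n`
in the sense of a fixed nonprincipal ultrafilter. -/
def limSetoid (v : ℕ → ℕ → M) : Setoid ℕ where
  r i j := ∀ᶠ n in (hyperfilter ℕ : Filter ℕ), v n i = v n j
  iseqv := ⟨fun _ => .of_forall fun _ => rfl, fun h => h.mono fun _ => Eq.symm,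
    fun h k => h.mp (k.mono fun _ k h => h.trans k)⟩

/-- Łoś's theorem for the countable elementary submodel of the ultrapower of `M` consisting of
the classes of the sequences `n ↦ v n i`. -/
theorem exists_limit {v : ℕ → ℕ → M} (hv : Henkin v) :
    ∃ (N : Type) (SN : AStr N) (π : ℕ → N), Surjective π ∧ ∀ φ : Fml, φ.IsFO → ∀ ρ : ℕ → ℕ,
      (SatFO SN (fun i => π (ρ i)) φ ↔
        ∀ᶠ n in (hyperfilter ℕ : Filter ℕ), SatFO (ofInst M) (fun i => v n (ρ i)) φ) := by
  have ev : ∀ {p : ℕ → Prop}, (∃ b, ∀ n > b, p n) → ∀ᶠ n in (hyperfilter ℕ : Filter ℕ), p n :=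
    fun ⟨b, hb⟩ => Nat.hyperfilter_le_atTop ((eventually_gt_atTop b).mono hb)
  have choose_eq : ∀ f : (ℕ → M) → M, Tm False f →
      ∃ s, ∀ᶠ n in (hyperfilter ℕ : Filter ℕ), v n s = f (v n) := by
    intro f hf
    have hf' : Tm False (fun u : ℕ → M => f fun i => u (i + 1)) :=
      hf.subst (fun i u => u (i + 1)) fun i => .var _
    obtain ⟨s, b, hs⟩ := hv (fun a u => a = f u) (inferInstanceAs
      (Df False (fun u : ℕ → M => u 0 = f fun i => u (i + 1))))
    exact ⟨s, ev ⟨b, fun n hn => hs n hn _ rfl⟩⟩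
  obtain ⟨z, hz⟩ := choose_eq (fun _ => 0) .zero
  obtain ⟨o, ho⟩ := choose_eq (fun _ => 1) .one
  have hadd : ∀ i j, ∃ s, ∀ᶠ n in (hyperfilter ℕ : Filter ℕ), v n s = v n i + v n j := fun i j =>
    choose_eq (fun u => u i + u j) inferInstance
  have hmul : ∀ i j, ∃ s, ∀ᶠ n in (hyperfilter ℕ : Filter ℕ), v n s = v n i * v n j := fun i j =>
    choose_eq (fun u => u i * u j) inferInstance
  choose p hp using hadd
  choose q hq using hmul
  let N := Quotient (limSetoid v)
  let π : ℕ → N := Quotient.mk _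
  have hπ : ∀ i j, π i = π j ↔ ∀ᶠ n in (hyperfilter ℕ : Filter ℕ), v n i = v n j := fun i j =>
    Quotient.eq
  have hout : ∀ i, ∀ᶠ n in (hyperfilter ℕ : Filter ℕ), v n (π i).out = v n i := fun i =>
    (hπ _ _).1 (Quotient.out_eq _)
  let SN : AStr N := ⟨π z, π o, fun a b => π (p a.out b.out), fun a b => π (q a.out b.out),
    fun a b => ∀ᶠ n in (hyperfilter ℕ : Filter ℕ), v n a.out < v n b.out⟩
  have hterm : ∀ (t : PTerm) (ρ : ℕ → ℕ), ∃ k, t.val SN (fun i => π (ρ i)) = π k ∧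
      ∀ᶠ n in (hyperfilter ℕ : Filter ℕ), v n k = t.val (ofInst M) (fun i => v n (ρ i)) := by
    intro t ρ
    induction t with
    | var i => exact ⟨ρ i, rfl, .of_forall fun _ => rfl⟩
    | zero => exact ⟨z, rfl, hz⟩
    | one => exact ⟨o, rfl, ho⟩
    | add t u iht ihu =>
      obtain ⟨k, hk, hk'⟩ := iht
      obtain ⟨l, hl, hl'⟩ := ihu
      refine ⟨p (π k).out (π l).out, ?_, ?_⟩
      · simp only [PTerm.val, hk, hl]
        rfl
      · filter_upwards [hp (π k).out (π l).out, hout k, hout l, hk', hl'] with n h1 h2 h3 h4 h5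
        rw [h1, h2, h3, h4, h5]
        rfl
    | mul t u iht ihu =>
      obtain ⟨k, hk, hk'⟩ := iht
      obtain ⟨l, hl, hl'⟩ := ihu
      refine ⟨q (π k).out (π l).out, ?_, ?_⟩
      · simp only [PTerm.val, hk, hl]
        rfl
      · filter_upwards [hq (π k).out (π l).out, hout k, hout l, hk', hl'] with n h1 h2 h3 h4 h5
        rw [h1, h2, h3, h4, h5]
        rfl
  refine ⟨N, SN, π, Quotient.mk_surjective, fun φ hφ => ?_⟩
  induction φ with
  | eq t u =>
    intro ρ
    obtain ⟨k, hk, hk'⟩ := hterm t ρ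
    obtain ⟨l, hl, hl'⟩ := hterm u ρ
    rw [SatFO_eq, hk, hl, hπ]
    refine eventually_congr ?_
    filter_upwards [hk', hl'] with n h1 h2
    rw [h1, h2, SatFO_eq]
  | lt t u =>
    intro ρ
    obtain ⟨k, hk, hk'⟩ := hterm t ρ
    obtain ⟨l, hl, hl'⟩ := hterm u ρ
    rw [SatFO_lt, hk, hl]
    refine eventually_congr ?_
    filter_upwards [hk', hl', hout k, hout l] with n h1 h2 h3 h4
    rw [h3, h4, h1, h2, SatFO_lt]
    rfl
  | mem t k => exact hφ.elim
  | not φ ih =>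
    intro ρ
    simp only [SatFO_not, ih hφ, Ultrafilter.eventually_not]
  | imp φ ψ ihφ ihψ =>
    intro ρ
    simp only [SatFO_imp, ihφ hφ.1, ihψ hφ.2, Ultrafilter.eventually_imp]
  | all x φ ih =>
    intro ρ
    have hup : ∀ {K : Type} (f : ℕ → K) (j : ℕ),
        update (fun i => f (ρ i)) x (f j) = fun i => f (update ρ x j i) := by
      intro K f j
      funext i
      by_cases h : i = x <;> simp [h]
    simp only [SatFO_all]
    constructor
    · intro h
      obtain ⟨s, b, hs⟩ := hv
        (fun a u => ¬ SatFO (ofInst M) (update (fun i => u (ρ i)) x a) φ) (by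
          refine .not (((Df.satFO φ hφ).subst
            (fun i u => if i = x then u 0 else u (ρ i + 1)) fun i => ?_).congr fun u => ?_)
          · by_cases h : i = x
            · simpa only [h, if_true] using Tm.var 0
            · simpa only [h, if_false] using Tm.var _
          · refine iff_of_eq (congrArg (fun w => SatFO (ofInst M) w φ) (funext fun i => ?_))
            by_cases h : i = x <;> simp [h])
      have h1 := h (π s)
      rw [hup π, ih hφ] at h1
      filter_upwards [h1, ev ⟨b, hs⟩] with n h2 h3 a
      by_contra hc
      refine h3 a hc ?_
      rw [hup (v n)]
      exact h2
    · intro h a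
      obtain ⟨j, rfl⟩ := Quotient.mk_surjective a
      change SatFO SN (update (fun i => π (ρ i)) x (π j)) φ
      rw [hup π, ih hφ]
      filter_upwards [h] with n hn
      rw [← hup (v n)]
      exact hn _
  | allS k φ ih => exact hφ.elim

/-- A formula defining the coding relation `x₀ ∈ x₁` in every structure. -/
def memFml : Fml :=
  let m : PTerm := .add .one (.mul (.add (.var 0) .one) (.var 3))
  .and (.lt (.var 0) (.var 1)) (.ex 2 (.ex 3 (.and
    (.eq (.mul (.add .one .one) (.var 1))
      (.add (.mul (.add (.var 2) (.var 3)) (.add (.add (.var 2) (.var 3)) .one))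
        (.mul (.add .one .one) (.var 2))))
    (.and (.lt .one m) (.and (.lt .one m) (.ex 4 (.eq (.var 2) (.add (.mul (.var 4) m) .one))))))))

theorem memFml_isFO : memFml.IsFO := by simp [memFml, Fml.IsFO, Fml.and, Fml.ex]

theorem satFO_memFml {K : Type} (S : AStr K) (u : ℕ → K) :
    SatFO S u memFml ↔ S.MemRel (u 0) (u 1) := by
  simp [memFml, PTerm.val, AStr.MemRel, AStr.PairRel, AStr.ModRel, AStr.two]

theorem satFO_memFml_numeral {K : Type} [PAM K] (j : ℕ) (a : K) :
    SatFO (ofInst K) (fun _ => a) (memFml.substN 0 (numeral j)) ↔ (ofInst K).MemRel (j : K) a := by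
  rw [satFO_numeral j memFml_isFO, satFO_memFml]
  simp

/-- The hard direction: a countable Scott set containing `rep(T)` is the standard system of a
countable nonstandard model of `T`. -/
theorem exists_model {𝔛 : Set (Set ℕ)} {T : Set Fml} (hcnt : 𝔛.Countable)
    (hSent : ∀ φ ∈ T, IsFOSentence φ) (hPA : PAax ⊆ T) (hComp : CompleteT T)
    (hT : ModelsT (ofInst M) T) (h𝔛 : IsScottSet 𝔛) (hrep : repSet T ⊆ 𝔛) :
    ∃ (N : Type) (SN : AStr N), Countable N ∧ ModelsT SN T ∧ SN.Nonstd ∧ SN.SSy = 𝔛 := by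
  obtain ⟨A, rfl⟩ := hcnt.exists_eq_range h𝔛.1
  obtain ⟨e, he⟩ := exists_enum
  obtain ⟨v, Z, hv, hZ, hZ𝔛, hZA⟩ := exists_stages (M := M) h𝔛
    (fun P hP => hrep (mem_repSet hComp hT hP)) (task_dep e) (task_ext e) (task_df e)
    (fun t v h => by omega) (A := A) fun t => ⟨t, rfl⟩
  obtain ⟨N, SN, π, hπ, hL⟩ := exists_limit (henkin_of_task he hv)
  have hTN : ModelsT SN T := by
    intro φ hφ w
    choose ρ hρ using fun i => hπ (w i)
    obtain rfl : (fun i => π (ρ i)) = w := funext hρ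
    exact (hL φ (hSent φ hφ).1 ρ).2 (.of_forall fun n => hT φ hφ _)
  obtain ⟨_, rfl⟩ := exists_PAM SN fun φ hφ => hTN φ (hPA hφ)
  have hmem : ∀ s j : ℕ, (ofInst N).MemRel (j : N) (π s) ↔ j ∈ Z s := by
    intro s j
    rw [← satFO_memFml_numeral, hL _ (Fml.isFO_substN _ _ memFml_isFO) fun _ => s]
    simp only [satFO_memFml_numeral]
    have : ∀ᶠ n in (hyperfilter ℕ : Filter ℕ),
        ((ofInst M).MemRel (j : M) (v n s) ↔ j ∈ Z s) :=
      Nat.hyperfilter_le_atTop ((eventually_gt_atTop _).mono (hZ s j))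
    rw [eventually_congr this, eventually_const]
  have hssy : (ofInst N).SSy = Set.range A := by
    ext B
    rw [mem_ssy]
    constructor
    · rintro ⟨c, hc⟩
      obtain ⟨s, rfl⟩ := hπ c
      obtain rfl : B = Z s := Set.ext fun j => (hc j).trans (hmem s j)
      exact hZ𝔛 s
    · rintro ⟨t, rfl⟩
      exact ⟨π (2 * t), fun j => by rw [hmem, hZA]⟩
  refine ⟨N, _, hπ.countable, hTN, ?_, hssy⟩
  -- an element coding all of `ℕ` is nonstandard
  have huniv : Set.univ ∈ (ofInst N).SSy := by
    rw [hssy, ← Set.union_compl_self (A 0)]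
    exact h𝔛.union ⟨0, rfl⟩ (h𝔛.compl ⟨0, rfl⟩)
  obtain ⟨c, hc⟩ := mem_ssy.1 huniv
  refine ⟨c, fun n => ?_⟩
  rw [num_eq]
  exact nonstd_of_cast_lt (fun n => memRel_lt ((hc n).1 trivial)) n

end Limit

/-- Scott's theorem. For countable `𝔛` and a complete consistent
`T ⊇ PA`: `𝔛` is a Scott set with `rep(T) ⊆ 𝔛` iff `𝔛` is the standard system of a
countable nonstandard model of `T`. -/
theorem scott_theorem_countable (𝔛 : Set (Set ℕ)) (T : Set Fml)
    (hcnt : 𝔛.Countable)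
    (hSent : ∀ φ ∈ T, IsFOSentence φ)
    (hPA : PAax ⊆ T) (hCons : ConsistentT T) (hComp : CompleteT T) :
    (IsScottSet 𝔛 ∧ repSet T ⊆ 𝔛) ↔
      (∃ (N : Type) (SN : AStr N), Countable N ∧ ModelsT SN T ∧ SN.Nonstd ∧
        SN.SSy = 𝔛) := by
  constructor
  · rintro ⟨h𝔛, hrep⟩
    obtain ⟨M, S, hS⟩ := hCons
    obtain ⟨_, rfl⟩ := exists_PAM S fun φ hφ => hS φ (hPA hφ)
    exact exists_model hcnt hSent hPA hComp hS h𝔛 hrep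
  · rintro ⟨N, SN, -, hTN, ⟨a, ha⟩, rfl⟩
    obtain ⟨_, rfl⟩ := exists_PAM SN fun φ hφ => hTN φ (hPA hφ)
    have hw : ∀ n : ℕ, (n : N) < a := cast_lt_of_nonstd fun n => by
      rw [← num_eq]
      exact ha n
    exact ⟨isScottSet_ssy hw, repSet_subset_ssy hw hTN⟩

end Paper
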